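/- arXiv:2002.07142 — 8 statements merged into one kernel-verified Lean document; each statement's English description precedes it below -/
import Mathlib

section
/- For every x ∈ ℝ with x ≠ 0, the principal value integral pv∫_ℝ (log|y| − log|x|)/(y−x)² dy exists and equals 0. (In other words, the half-Laplacian of the function (1/π)log|x|, computed by the principal value formula, vanishes pointwise away from the origin.) -/
open MeasureTheory Filter

namespace HalfLapLog

open Real Set Topology

/-- the integrand -/
noncomputable def f (x y : ℝ) : ℝ := (Real.log y - Real.log x) / (y - x) ^ 2

/-- its primitive -/
noncomputable def F (x y : ℝ) : ℝ :=
  (Real.log (y - x) - Real.log y) / x - (Real.log y - Real.log x) / (y - x)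

lemma hasDerivAt_F {x y : ℝ} (hx : 0 < x) (hy : y ≠ 0) (hyx : y ≠ x) :
    HasDerivAt (F x) (f x y) y := by
  have h0 : y - x ≠ 0 := sub_ne_zero.2 hyx
  have h1 : HasDerivAt (fun y : ℝ => y - x) 1 y := (hasDerivAt_id y).sub_const x
  have h2 := h1.log h0
  have h3 := Real.hasDerivAt_log hy
  have h4 := ((h2.sub h3).div_const x).sub ((h3.sub_const (Real.log x)).div h1 h0)
  refine h4.congr_deriv ?_
  unfold f
  have := hx.ne'
  field_simp
  ring

lemma F_eq {x y : ℝ} (hx : 0 < x) (hyx : y ≠ x) :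
    F x y = -(y * Real.log y) / (x * (y - x)) + Real.log x / (y - x) + Real.log (y - x) / x := by
  have h0 : y - x ≠ 0 := sub_ne_zero.2 hyx
  have := hx.ne'
  unfold F
  field_simp
  ring

lemma continuousAt_F {x y : ℝ} (hx : 0 < x) (hyx : y ≠ x) : ContinuousAt (F x) y := by
  have h0 : y - x ≠ 0 := sub_ne_zero.2 hyx
  have h1 : ContinuousAt (fun y => -(y * Real.log y) / (x * (y - x)) + Real.log x / (y - x)
      + Real.log (y - x) / x) y := by
    have hm : ContinuousAt (fun y => y * Real.log y) y := Real.continuous_mul_log.continuousAt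
    have hs : ContinuousAt (fun y => y - x) y := by fun_prop
    refine ((hm.neg.div (continuousAt_const.mul hs) (mul_ne_zero hx.ne' h0)).add
      (continuousAt_const.div hs h0)).add ((hs.log h0).div_const x)
  refine h1.congr ?_
  filter_upwards [isOpen_ne.mem_nhds hyx] with z hz
  exact (F_eq hx hz).symm

lemma aux (b c : ℝ) : Tendsto (fun z => (Real.log z - b) / (z + c)) atTop (𝓝 0) := by
  have h1 := Real.tendsto_pow_log_div_mul_add_atTop 1 c 1 one_ne_zero
  have h0 := (Real.tendsto_pow_log_div_mul_add_atTop 1 c 0 one_ne_zero).const_mul b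
  have := h1.sub h0
  simp only [mul_zero, sub_zero, one_mul, pow_one, pow_zero] at this
  refine this.congr fun z => ?_
  ring

lemma tendsto_F_atTop (x : ℝ) : Tendsto (F x) atTop (𝓝 0) := by
  have h1 := (Real.tendsto_log_comp_add_sub_log (-x)).div_const x
  have h2 := h1.sub (aux (Real.log x) (-x))
  simp only [zero_div, sub_zero, ← sub_eq_add_neg] at h2
  exact h2

lemma F_neg (x z : ℝ) : F x (-z) =
    (Real.log (z + x) - Real.log z) / x + (Real.log z - Real.log x) / (z + x) := by
  have h1 : -z - x = -(z + x) := by ring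
  unfold F
  rw [h1, Real.log_neg_eq_log, Real.log_neg_eq_log, div_neg, sub_neg_eq_add]

lemma tendsto_F_neg (x : ℝ) : Tendsto (fun z => F x (-z)) atTop (𝓝 0) := by
  have h1 := (Real.tendsto_log_comp_add_sub_log x).div_const x
  have h2 := h1.add (aux (Real.log x) x)
  simpa [F_neg] using h2

lemma tendsto_F_atBot (x : ℝ) : Tendsto (F x) atBot (𝓝 0) := by
  have := (tendsto_F_neg x).comp tendsto_neg_atBot_atTop
  simpa [Function.comp_def] using this

lemma right {x ε : ℝ} (hx : 0 < x) (hε : 0 < ε) :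
    IntegrableOn (f x) (Ioi (x + ε)) ∧ ∫ y in Ioi (x + ε), f x y = - F x (x + ε) := by
  have hd : ∀ y ∈ Ici (x + ε), HasDerivAt (F x) (f x y) y := fun y hy =>
    hasDerivAt_F hx (by have := mem_Ici.1 hy; linarith) (by have := mem_Ici.1 hy; linarith)
  have hp : ∀ y ∈ Ioi (x + ε), 0 ≤ f x y := fun y hy => by
    have := mem_Ioi.1 hy
    exact div_nonneg (sub_nonneg.2 (Real.log_le_log hx (by linarith))) (sq_nonneg _)
  refine ⟨integrableOn_Ioi_deriv_of_nonneg' hd hp (tendsto_F_atTop x), ?_⟩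
  rw [integral_Ioi_of_hasDerivAt_of_nonneg' hd hp (tendsto_F_atTop x), zero_sub]

lemma farleft {x : ℝ} (hx : 0 < x) :
    IntegrableOn (f x) (Iic (-x)) ∧ ∫ y in Iic (-x), f x y = F x (-x) := by
  have hi : IntegrableOn (f x) (Iic (-x)) := by
    have hd : ∀ z ∈ Ici x, HasDerivAt (fun z => - F x (-z)) (f x (-z)) z := fun z hz => by
      have := mem_Ici.1 hz
      have h := (hasDerivAt_F hx (y := -z) (by linarith) (by linarith)).scomp z
        (hasDerivAt_neg z)
      refine h.neg.congr_deriv ?_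
      simp
    have hp : ∀ z ∈ Ioi x, 0 ≤ f x (-z) := fun z hz => by
      have := mem_Ioi.1 hz
      unfold f
      rw [Real.log_neg_eq_log]
      exact div_nonneg (sub_nonneg.2 (Real.log_le_log hx (by linarith))) (sq_nonneg _)
    have := integrableOn_Ioi_deriv_of_nonneg' hd hp (tendsto_F_neg x).neg
    rw [integrableOn_Iic_iff_integrableOn_Iio,
      ← (Measure.measurePreserving_neg (volume : Measure ℝ)).integrableOn_comp_preimage
        (MeasurableEquiv.neg ℝ).measurableEmbedding]
    simpa [Function.comp_def] using this
  refine ⟨hi, ?_⟩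
  rw [integral_Iic_of_hasDerivAt_of_tendsto' (f := F x) ?_ hi (tendsto_F_atBot x), sub_zero]
  intro y hy
  have := mem_Iic.1 hy
  exact hasDerivAt_F hx (by linarith) (by linarith)

lemma left {x ε : ℝ} (hx : 0 < x) (hε : 0 < ε) (hεx : ε < x) :
    IntegrableOn (f x) (Iic (x - ε)) ∧ ∫ y in Iic (x - ε), f x y = F x (x - ε) := by
  have hle : -x ≤ x - ε := by linarith
  have hII : IntervalIntegrable (f x) volume (-x) (x - ε) := by
    have h1 : IntervalIntegrable (fun y => Real.log y - Real.log x) volume (-x) (x - ε) :=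
      intervalIntegral.intervalIntegrable_log'.sub intervalIntegrable_const
    have h2 : ContinuousOn (fun y => ((y - x) ^ 2)⁻¹) (uIcc (-x) (x - ε)) := by
      refine ContinuousOn.inv₀ (by fun_prop) ?_
      intro y hy
      rw [uIcc_of_le hle] at hy
      have : y - x ≠ 0 := by have := hy.2; linarith
      positivity
    exact h1.mul_continuousOn h2
  have hint : IntegrableOn (f x) (Iic (x - ε)) := by
    rw [← Iic_union_Ioc_eq_Iic hle]
    exact (farleft hx).1.union ((intervalIntegrable_iff_integrableOn_Ioc_of_le hle).1 hII)
  refine ⟨hint, ?_⟩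
  have h1 := intervalIntegral.integral_Iic_sub_Iic (farleft hx).1 hint
  have h2 := integral_eq_of_hasDerivAt_off_countable_of_le (F x) (f x) hle
    (countable_singleton (0 : ℝ))
    (fun y hy => (continuousAt_F hx (by have := hy.2; linarith)).continuousWithinAt)
    (fun y hy => hasDerivAt_F hx hy.2 (by have := hy.1.2; linarith)) hII
  rw [(farleft hx).2, h2] at h1
  linarith

lemma set_eq (x ε : ℝ) : {y : ℝ | ε < |y - x|} = Iio (x - ε) ∪ Ioi (x + ε) := by
  ext y
  simp only [mem_ofPred_eq, mem_union, mem_Iio, mem_Ioi, lt_abs]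
  constructor
  · rintro (h | h)
    · right; linarith
    · left; linarith
  · rintro (h | h)
    · right; linarith
    · left; linarith

lemma small {x ε : ℝ} (hx : 0 < x) (hε : 0 < ε) (hεx : ε < x) :
    IntegrableOn (f x) {y : ℝ | ε < |y - x|} ∧
    ∫ y in {y : ℝ | ε < |y - x|}, f x y = F x (x - ε) - F x (x + ε) := by
  rw [set_eq]
  have hl := left hx hε hεx
  have hr := right hx hε
  have hl1 := hl.1.mono_set Iio_subset_Iic_self
  refine ⟨hl1.union hr.1, ?_⟩
  rw [setIntegral_union ?_ measurableSet_Ioi hl1 hr.1, ← integral_Iic_eq_integral_Iio, hl.2, hr.2]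
  · ring
  · rw [Set.disjoint_left]
    intro y h1 h2
    have := mem_Iio.1 h1
    have := mem_Ioi.1 h2
    linarith

lemma lim {x : ℝ} (hx : 0 < x) :
    Tendsto (fun ε => F x (x - ε) - F x (x + ε)) (𝓝[>] 0) (𝓝 0) := by
  have hs := (hasDerivAt_iff_tendsto_slope.1 (Real.hasDerivAt_log hx.ne'))
  have hp : Tendsto (fun ε : ℝ => x + ε) (𝓝[>] 0) (𝓝[≠] x) := by
    refine tendsto_nhdsWithin_iff.2 ⟨?_, ?_⟩
    · have : Tendsto (fun ε : ℝ => x + ε) (𝓝 0) (𝓝 (x + 0)) := by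
        apply Continuous.tendsto; fun_prop
      rw [add_zero] at this
      exact this.mono_left nhdsWithin_le_nhds
    · filter_upwards [self_mem_nhdsWithin] with ε hε
      have := mem_Ioi.1 hε
      simp [this.ne']
  have hm : Tendsto (fun ε : ℝ => x - ε) (𝓝[>] 0) (𝓝[≠] x) := by
    refine tendsto_nhdsWithin_iff.2 ⟨?_, ?_⟩
    · have : Tendsto (fun ε : ℝ => x - ε) (𝓝 0) (𝓝 (x - 0)) := by
        apply Continuous.tendsto; fun_prop
      rw [sub_zero] at this
      exact this.mono_left nhdsWithin_le_nhds
    · filter_upwards [self_mem_nhdsWithin] with ε hε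
      have := mem_Ioi.1 hε
      simp [this.ne']
  have hlog := (Real.continuousAt_log hx.ne').tendsto
  have l1 := hlog.comp (hp.mono_right nhdsWithin_le_nhds)
  have l2 := hlog.comp (hm.mono_right nhdsWithin_le_nhds)
  have := ((l1.sub l2).div_const x).add ((hs.comp hp).sub (hs.comp hm))
  simp only [sub_self, zero_div, add_zero] at this
  refine this.congr fun ε => ?_
  simp only [Function.comp, slope_def_field, F]
  have e1 : x - ε - x = -ε := by ring
  have e2 : x + ε - x = ε := by ring
  rw [e1, e2, Real.log_neg_eq_log]
  ring

lemma pos {x : ℝ} (hx : 0 < x) :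
    (∀ ε : ℝ, 0 < ε → IntegrableOn (f x) {y : ℝ | ε < |y - x|}) ∧
    Tendsto (fun ε : ℝ => ∫ y in {y : ℝ | ε < |y - x|}, f x y) (𝓝[>] 0) (𝓝 0) := by
  constructor
  · intro ε hε
    have h := (small hx (ε := min ε (x / 2)) (by positivity)
      ((min_le_right _ _).trans_lt (by linarith))).1
    refine h.mono_set fun y hy => ?_
    simp only [mem_ofPred_eq] at hy ⊢
    exact lt_of_le_of_lt (min_le_left _ _) hy
  · refine (lim hx).congr' ?_
    filter_upwards [Ioo_mem_nhdsGT hx] with ε hε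
    exact (small hx hε.1 hε.2).2.symm

end HalfLapLog

/-- The half-Laplacian of `(1/π) log |·|`, computed by the principal value formula,
vanishes pointwise away from the origin: for `x ≠ 0`, the truncated integrals
`∫_{|y-x|>ε} (log|y| - log|x|)/(y-x)² dy` exist for every `ε > 0` and tend to `0`
as `ε → 0⁺`. -/
theorem halfLaplacian_log_eq_zero (x : ℝ) (hx : x ≠ 0) :
    (∀ ε : ℝ, 0 < ε →
      IntegrableOn (fun y => (Real.log |y| - Real.log |x|) / (y - x) ^ 2)
        {y : ℝ | ε < |y - x|}) ∧
    Tendsto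
      (fun ε : ℝ => ∫ y in {y : ℝ | ε < |y - x|},
        (Real.log |y| - Real.log |x|) / (y - x) ^ 2)
      (nhdsWithin 0 (Set.Ioi 0)) (nhds 0) := by
  simp only [Real.log_abs]
  rcases lt_or_gt_of_ne hx with h | h
  · have key := HalfLapLog.pos (x := -x) (by linarith)
    have mp := Measure.measurePreserving_neg (volume : Measure ℝ)
    have me := (MeasurableEquiv.neg ℝ).measurableEmbedding
    have hf : ∀ y, HalfLapLog.f (-x) (-y) = (Real.log y - Real.log x) / (y - x) ^ 2 := by
      intro y
      unfold HalfLapLog.f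
      rw [Real.log_neg_eq_log, Real.log_neg_eq_log]
      congr 1
      ring
    have hs : ∀ ε : ℝ, (Neg.neg : ℝ → ℝ) ⁻¹' {y : ℝ | ε < |y - -x|} = {y : ℝ | ε < |y - x|} := by
      intro ε
      ext y
      have : -y - -x = -(y - x) := by ring
      simp only [Set.mem_preimage, Set.mem_ofPred_eq, this, abs_neg]
    constructor
    · intro ε hε
      have h1 := (mp.integrableOn_comp_preimage me).2 (key.1 ε hε)
      rw [hs] at h1
      simpa only [Function.comp_def, hf] using h1
    · refine key.2.congr fun ε => ?_
      rw [← mp.setIntegral_preimage_emb me, hs]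
      simp only [hf]
  · exact HalfLapLog.pos h
end

section
/- There exist a function G: ℝ∖{0} → ℝ, a function F: ℝ → ℝ, and a constant C < ∞ with the following properties: G is even, infinitely differentiable on ℝ∖{0}, vanishes outside [−1,1], and G(x) = (1/π)log|x| for all x with 0 < |x| ≤ 1/2; F is infinitely differentiable on all of ℝ; for every x ≠ 0 the principal value (1/π) pv∫_ℝ (G(y) − G(x))/(y−x)² dy exists and equals F(x); and |F(x)| ≤ C(1+|x|)^{−2} and |F′(x)| ≤ C(1+|x|)^{−2} for all x ∈ ℝ. -/
open MeasureTheory Filter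

noncomputable section ApproxGreen

/-- symmetric second difference quotient -/
def sdq (f : ℝ → ℝ) (x t : ℝ) : ℝ := (f (x + t) + f (x - t) - 2 * f x) / t ^ 2

/-- the (unnormalized) symmetrized half-Laplacian -/
def symT (f : ℝ → ℝ) (x : ℝ) : ℝ := ∫ t in Set.Ioi (0 : ℝ), sdq f x t

/-- the dominating weight -/
def wgt (y : ℝ) : ℝ := Real.sqrt (1 + |y|) / (1 + y ^ 2)

/-- smooth functions all of whose derivatives grow at most like a square root -/
def SqrtGrowth (f : ℝ → ℝ) : Prop :=
  ContDiff ℝ (⊤ : ℕ∞) f ∧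
    ∀ k : ℕ, ∃ M : ℝ, 0 ≤ M ∧ ∀ x, |iteratedDeriv k f x| ≤ M * Real.sqrt (1 + |x|)

lemma SqrtGrowth.deriv {f : ℝ → ℝ} (h : SqrtGrowth f) : SqrtGrowth (deriv f) := by
  refine ⟨(contDiff_infty_iff_deriv.1 h.1).2, fun k => ?_⟩
  obtain ⟨M, hM0, hM⟩ := h.2 (k + 1)
  refine ⟨M, hM0, fun x => ?_⟩
  rw [← iteratedDeriv_succ']
  exact hM x

lemma wgt_cont : Continuous wgt := by
  unfold wgt
  refine Continuous.div (by fun_prop) (by fun_prop) (fun x => by positivity)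

lemma wgt_nonneg (y : ℝ) : 0 ≤ wgt y := by unfold wgt; positivity

lemma wgt_integrable : Integrable wgt := by
  have h := integrable_one_add_norm (E := ℝ) (μ := volume) (r := 3 / 2) (by simp; norm_num)
  refine (h.const_mul 2).mono' wgt_cont.aestronglyMeasurable (Eventually.of_forall fun y => ?_)
  rw [Real.norm_of_nonneg (wgt_nonneg y), Real.norm_eq_abs]
  unfold wgt
  have h1 : 0 < 1 + |y| := by positivity
  have h2 : (1 + |y|) ^ (-(3 / 2 : ℝ)) = Real.sqrt (1 + |y|) / (1 + |y|) ^ 2 := by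
    rw [Real.sqrt_eq_rpow, ← Real.rpow_natCast, ← Real.rpow_sub h1]
    norm_num
  rw [h2, ← mul_div_assoc, div_le_div_iff₀ (by positivity) (by positivity)]
  have h3 : (1 + |y|) ^ 2 ≤ 2 * (1 + y ^ 2) := by
    rw [← sq_abs y]; nlinarith [sq_nonneg (1 - |y|)]
  have := mul_le_mul_of_nonneg_left h3 (Real.sqrt_nonneg (1 + |y|))
  linarith

lemma sdq_near {f : ℝ → ℝ} (hf : ContDiff ℝ (⊤ : ℕ∞) f) {x t K : ℝ} (ht : 0 < t)
    (hK : ∀ y, |y - x| ≤ t → |deriv (deriv f) y| ≤ K) : |sdq f x t| ≤ 2 * K := by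
  have hd : Differentiable ℝ f := (contDiff_infty_iff_deriv.1 hf).1
  have hf' := (contDiff_infty_iff_deriv.1 hf).2
  have hd' : Differentiable ℝ (deriv f) := (contDiff_infty_iff_deriv.1 hf').1
  have hK0 : 0 ≤ K := (abs_nonneg _).trans (hK x (by simp [ht.le]))
  have hder : ∀ s, HasDerivAt (fun s => f (x + s) + f (x - s))
      (deriv f (x + s) - deriv f (x - s)) s := by
    intro s
    have h1 := (hd (x + s)).hasDerivAt.comp_const_add x s
    have h2 := (hd (x - s)).hasDerivAt.comp_const_sub x s
    rw [sub_eq_add_neg]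
    exact h1.add h2
  have hb : ∀ s ∈ Set.Icc 0 t, ‖_root_.deriv (fun s => f (x + s) + f (x - s)) s‖ ≤ 2 * K * t := by
    intro s hs
    rw [(hder s).deriv]
    have := (convex_Icc (x - t) (x + t)).norm_image_sub_le_of_norm_deriv_le (f := deriv f)
      (x := x - s) (y := x + s) (C := K) (fun y _ => hd' y)
      (fun y hy => hK y (by rw [abs_le]; constructor <;> linarith [hy.1, hy.2]))
      ⟨by linarith [hs.2], by linarith [hs.1]⟩ ⟨by linarith [hs.1], by linarith [hs.2]⟩
    refine this.trans ?_
    rw [Real.norm_eq_abs, abs_of_nonneg (by linarith [hs.1])]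
    nlinarith [hs.1, hs.2]
  have := (convex_Icc 0 t).norm_image_sub_le_of_norm_deriv_le
    (f := fun s => f (x + s) + f (x - s)) (x := 0) (y := t)
    (fun y _ => (hder y).differentiableAt) hb ⟨le_rfl, ht.le⟩ ⟨ht.le, le_rfl⟩
  simp only [add_zero, sub_zero, Real.norm_eq_abs, abs_of_pos ht] at this
  unfold sdq
  rw [abs_div, abs_of_pos (by positivity : 0 < t ^ 2), div_le_iff₀ (by positivity)]
  calc _ = |f (x + t) + f (x - t) - (f x + f x)| := by ring_nf
    _ ≤ _ := this
    _ = _ := by ring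

lemma sdq_bound {f : ℝ → ℝ} (hf : SqrtGrowth f) (R : ℝ) (hR : 0 ≤ R) :
    ∃ K, ∀ x, |x| ≤ R → ∀ t, 0 < t → |sdq f x t| ≤ K * wgt t := by
  obtain ⟨M, hM0, hM⟩ := hf.2 0
  obtain ⟨N, hN0, hN⟩ := hf.2 2
  simp only [iteratedDeriv_zero] at hM
  have hN' : ∀ x, |deriv (deriv f) x| ≤ N * Real.sqrt (1 + |x|) := by
    intro x
    have := hN x
    rwa [iteratedDeriv_succ, iteratedDeriv_one] at this
  refine ⟨4 * (N * Real.sqrt (2 + R)) + 2 * (4 * M * Real.sqrt (1 + R)), fun x hx t ht => ?_⟩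
  have hw := wgt_nonneg t
  have hp1 : 0 ≤ N * Real.sqrt (2 + R) := by positivity
  have hp2 : 0 ≤ M * Real.sqrt (1 + R) := by positivity
  rcases le_or_gt t 1 with h1 | h1
  · have := sdq_near hf.1 (x := x) ht (K := N * Real.sqrt (2 + R)) (fun y hy => by
      refine (hN' y).trans ?_
      gcongr N * Real.sqrt ?_
      have : |y| ≤ |y - x| + |x| := by simpa using abs_add_le (y - x) x
      linarith)
    have hw2 : 1 / 2 ≤ wgt t := by
      unfold wgt
      rw [div_le_div_iff₀ (by norm_num) (by positivity)]
      have : 1 ≤ Real.sqrt (1 + |t|) := by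
        rw [Real.one_le_sqrt]; linarith [abs_nonneg t]
      nlinarith
    nlinarith
  · have hy : ∀ y, |y| ≤ R + t → |f y| ≤ M * Real.sqrt (1 + R) * Real.sqrt (1 + t) := by
      intro y hy
      refine (hM y).trans ?_
      rw [mul_assoc, ← Real.sqrt_mul (by positivity)]
      gcongr M * Real.sqrt ?_
      nlinarith
    have b1 := hy (x + t) ((abs_add_le _ _).trans (by rw [abs_of_pos ht]; linarith))
    have b2 := hy (x - t) ((abs_sub _ _).trans (by rw [abs_of_pos ht]; linarith))
    have b3 := hy x (by linarith)
    have hnum : |f (x + t) + f (x - t) - 2 * f x| ≤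
        4 * M * Real.sqrt (1 + R) * Real.sqrt (1 + t) := by
      rw [abs_le] at *
      constructor <;> linarith [b1.1, b1.2, b2.1, b2.2, b3.1, b3.2]
    have : |sdq f x t| ≤ 2 * (4 * M * Real.sqrt (1 + R)) * wgt t := by
      unfold sdq wgt
      rw [abs_div, abs_of_pos (by positivity : 0 < t ^ 2), abs_of_pos ht, ← mul_div_assoc,
        div_le_div_iff₀ (by positivity) (by positivity)]
      have h5 : 1 + t ^ 2 ≤ 2 * t ^ 2 := by nlinarith
      calc _ ≤ (4 * M * Real.sqrt (1 + R) * Real.sqrt (1 + t)) * (2 * t ^ 2) := by gcongr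
        _ = _ := by ring
    nlinarith

lemma sdq_cont {f : ℝ → ℝ} (hf : Continuous f) (x : ℝ) :
    AEStronglyMeasurable (sdq f x) (volume.restrict (Set.Ioi 0)) := by
  have := hf.measurable
  unfold sdq
  apply Measurable.aestronglyMeasurable
  fun_prop

lemma sdq_integrableOn {f : ℝ → ℝ} (hf : SqrtGrowth f) (x : ℝ) :
    IntegrableOn (sdq f x) (Set.Ioi 0) := by
  obtain ⟨K, hK⟩ := sdq_bound hf |x| (abs_nonneg _)
  refine (wgt_integrable.const_mul K).integrableOn.mono' (sdq_cont hf.1.continuous x) ?_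
  filter_upwards [ae_restrict_mem measurableSet_Ioi] with t ht
  exact hK x le_rfl t ht

lemma symT_hasDerivAt {f : ℝ → ℝ} (hf : SqrtGrowth f) (x : ℝ) :
    HasDerivAt (symT f) (symT (deriv f) x) x := by
  obtain ⟨K, hK⟩ := sdq_bound hf.deriv (|x| + 1) (by positivity)
  have hd : Differentiable ℝ f := (contDiff_infty_iff_deriv.1 hf.1).1
  refine (hasDerivAt_integral_of_dominated_loc_of_deriv_le (F := fun x t => sdq f x t)
    (F' := fun x t => sdq (deriv f) x t) (bound := fun t => K * wgt t)
    (Metric.ball_mem_nhds x one_pos)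
    (Eventually.of_forall fun y => sdq_cont hf.1.continuous y) (sdq_integrableOn hf x)
    (sdq_cont hf.deriv.1.continuous x) ?_ (wgt_integrable.const_mul K).integrableOn ?_).2
  · filter_upwards [ae_restrict_mem measurableSet_Ioi] with t ht y hy
    refine hK y ?_ t ht
    rw [Metric.mem_ball, Real.dist_eq] at hy
    have : |y| ≤ |y - x| + |x| := by simpa using abs_add_le (y - x) x
    linarith
  · refine Eventually.of_forall fun t y _ => ?_
    unfold sdq
    have h1 := (hd (y + t)).hasDerivAt.comp_add_const y t
    have h2 := (hd (y - t)).hasDerivAt.comp_sub_const y t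
    exact ((h1.add h2).sub ((hd y).hasDerivAt.const_mul 2)).div_const _

lemma symT_contDiff {f : ℝ → ℝ} (hf : SqrtGrowth f) : ContDiff ℝ (⊤ : ℕ∞) (symT f) := by
  rw [contDiff_infty]
  intro n
  induction n generalizing f with
  | zero =>
    exact contDiff_zero.2 (Differentiable.continuous fun x =>
      (symT_hasDerivAt hf x).differentiableAt)
  | succ n ih =>
    have : ((n + 1 : ℕ) : WithTop ℕ∞) = (n : WithTop ℕ∞) + 1 := by push_cast; rfl
    rw [this, contDiff_succ_iff_deriv]
    refine ⟨fun x => (symT_hasDerivAt hf x).differentiableAt, fun h => by simp at h, ?_⟩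
    rw [show deriv (symT f) = symT (deriv f) from funext fun x => (symT_hasDerivAt hf x).deriv]
    exact ih hf.deriv

lemma pv_set_eq (x ε : ℝ) (hε : 0 < ε) :
    {y : ℝ | ε < |y - x|} = Set.Ioi (x + ε) ∪ Set.Iio (x - ε) := by
  ext y
  simp only [Set.mem_ofPred_eq, Set.mem_union, Set.mem_Ioi, Set.mem_Iio, lt_abs]
  constructor
  · rintro (h | h)
    · left; linarith
    · right; linarith
  · rintro (h | h)
    · left; linarith
    · right; linarith

lemma pv_integrableOn {f : ℝ → ℝ} (hf : Integrable (fun y => f y / (1 + y ^ 2))) (x ε : ℝ)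
    (hε : 0 < ε) :
    IntegrableOn (fun y => (f y - f x) / (y - x) ^ 2) {y : ℝ | ε < |y - x|} := by
  have h0 : Integrable (fun y => (f y - f x) / (1 + y ^ 2)) := by
    have := hf.sub (integrable_inv_one_add_sq.const_mul (f x))
    refine this.congr (Eventually.of_forall fun y => ?_)
    simp only [Pi.sub_apply]
    ring
  have hms : MeasurableSet {y : ℝ | ε < |y - x|} := by
    rw [pv_set_eq x ε hε]; exact measurableSet_Ioi.union measurableSet_Iio
  have h1 := h0.integrableOn (s := {y : ℝ | ε < |y - x|})
  have h2 := Integrable.bdd_mul (f := fun y : ℝ => (1 + y ^ 2) / (y - x) ^ 2)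
    (c := 2 + (1 + 2 * x ^ 2) / ε ^ 2) h1
    (by apply Measurable.aestronglyMeasurable; fun_prop) (by
      filter_upwards [ae_restrict_mem hms] with y hy
      have hy' : ε < |y - x| := hy
      have hpos : ε ^ 2 ≤ (y - x) ^ 2 := by
        rw [← sq_abs (y - x)]; gcongr
      have he2 : 0 < ε ^ 2 := by positivity
      have hq : 0 < (y - x) ^ 2 := by linarith
      rw [Real.norm_of_nonneg (by positivity), div_le_iff₀ hq]
      have h3 : (1 + 2 * x ^ 2) ≤ (1 + 2 * x ^ 2) / ε ^ 2 * (y - x) ^ 2 := by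
        rw [div_mul_eq_mul_div, le_div_iff₀ he2]
        gcongr
      nlinarith [sq_nonneg (y - 2 * x)])
  refine Integrable.congr h2 ?_
  filter_upwards [ae_restrict_mem hms] with y hy
  have : (1 + y ^ 2) ≠ 0 := by positivity
  field_simp

lemma pv_symm {f : ℝ → ℝ} (hf : Integrable (fun y => f y / (1 + y ^ 2))) (x ε : ℝ)
    (hε : 0 < ε) :
    IntegrableOn (sdq f x) (Set.Ioi ε) ∧
    ∫ y in {y : ℝ | ε < |y - x|}, (f y - f x) / (y - x) ^ 2 = ∫ t in Set.Ioi ε, sdq f x t := by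
  have h := pv_integrableOn hf x ε hε
  rw [pv_set_eq x ε hε] at h ⊢
  have hA := h.left_of_union
  have hB := h.right_of_union
  have mA := measurePreserving_add_left (volume : Measure ℝ) x
  have mB := Measure.measurePreserving_sub_left (volume : Measure ℝ) x
  have eA : MeasurableEmbedding (fun t : ℝ => x + t) := measurableEmbedding_addLeft x
  have eB : MeasurableEmbedding (fun t : ℝ => x - t) := measurableEmbedding_subLeft x
  have pA : (fun t : ℝ => x + t) ⁻¹' (Set.Ioi (x + ε)) = Set.Ioi ε := by ext; simp
  have pB : (fun t : ℝ => x - t) ⁻¹' (Set.Iio (x - ε)) = Set.Ioi ε := by ext; simp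
  have iA := (mA.integrableOn_comp_preimage eA).2 hA
  have iB := (mB.integrableOn_comp_preimage eB).2 hB
  rw [pA] at iA
  rw [pB] at iB
  have hs : sdq f x = ((fun y => (f y - f x) / (y - x) ^ 2) ∘ (fun t : ℝ => x + t)) +
      ((fun y => (f y - f x) / (y - x) ^ 2) ∘ (fun t : ℝ => x - t)) := by
    ext t
    simp only [sdq, Pi.add_apply, Function.comp]
    ring
  refine ⟨by rw [hs]; exact iA.add iB, ?_⟩
  rw [setIntegral_union _ measurableSet_Iio hA hB, hs]
  · simp only [Pi.add_apply]
    rw [integral_add iA iB, ← mA.setIntegral_preimage_emb eA _ (Set.Ioi (x + ε)),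
      ← mB.setIntegral_preimage_emb eB _ (Set.Iio (x - ε)), pA, pB]
    rfl
  · rw [Set.disjoint_left]
    intro y h1 h2
    simp only [Set.mem_Ioi, Set.mem_Iio] at h1 h2
    linarith

lemma SqrtGrowth.weight {f : ℝ → ℝ} (hf : SqrtGrowth f) :
    Integrable (fun y => f y / (1 + y ^ 2)) := by
  obtain ⟨M, hM0, hM⟩ := hf.2 0
  simp only [iteratedDeriv_zero] at hM
  refine (wgt_integrable.const_mul M).mono' ?_ (Eventually.of_forall fun y => ?_)
  · have := hf.1.continuous.measurable
    apply Measurable.aestronglyMeasurable; fun_prop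
  · rw [norm_div, Real.norm_eq_abs, Real.norm_of_nonneg (by positivity : 0 ≤ 1 + y ^ 2)]
    unfold wgt
    rw [← mul_div_assoc]
    gcongr
    exact hM y

lemma pv_smooth {f : ℝ → ℝ} (hf : SqrtGrowth f) (x : ℝ) :
    Tendsto (fun ε : ℝ => ∫ y in {y : ℝ | ε < |y - x|}, (f y - f x) / (y - x) ^ 2)
      (nhdsWithin 0 (Set.Ioi 0)) (nhds (symT f x)) := by
  have hc : AECover (volume.restrict (Set.Ioi (0 : ℝ))) (nhdsWithin 0 (Set.Ioi 0))
      (fun ε : ℝ => Set.Ioi ε) := aecover_Ioi_of_Ioi (tendsto_id.mono_right nhdsWithin_le_nhds)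
  have := hc.integral_tendsto_of_countably_generated (sdq_integrableOn hf x)
  refine this.congr' ?_
  filter_upwards [self_mem_nhdsWithin] with ε hε
  rw [(pv_symm hf.weight x ε hε).2, Measure.restrict_restrict measurableSet_Ioi,
    Set.inter_eq_left.2 (Set.Ioi_subset_Ioi (le_of_lt hε))]

lemma abs_log_le_sqrt {y : ℝ} (hy : 1 ≤ |y|) : |Real.log y| ≤ 2 * Real.sqrt (1 + |y|) := by
  rw [← Real.log_abs, abs_of_nonneg (Real.log_nonneg hy)]
  have h := Real.log_le_sub_one_of_pos (Real.sqrt_pos.2 (by linarith : 0 < |y|))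
  rw [Real.log_sqrt (abs_nonneg y)] at h
  have : Real.sqrt |y| ≤ Real.sqrt (1 + |y|) := Real.sqrt_le_sqrt (by linarith)
  linarith

lemma log_weight : Integrable (fun y => Real.log y / (1 + y ^ 2)) := by
  have hm : AEStronglyMeasurable (fun y => Real.log y / (1 + y ^ 2)) volume := by
    apply Measurable.aestronglyMeasurable; fun_prop
  rw [← integrableOn_univ, ← Set.union_compl_self (Set.Icc (-1 : ℝ) 1), integrableOn_union]
  constructor
  · have h : IntegrableOn Real.log (Set.Icc (-1 : ℝ) 1) := by
      rw [integrableOn_Icc_iff_integrableOn_Ioc,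
        ← intervalIntegrable_iff_integrableOn_Ioc_of_le (by norm_num)]
      exact intervalIntegral.intervalIntegrable_log'
    refine Integrable.mono h hm.restrict (Eventually.of_forall fun y => ?_)
    rw [norm_div, Real.norm_of_nonneg (by positivity : 0 ≤ 1 + y ^ 2)]
    exact div_le_self (norm_nonneg _) (by nlinarith)
  · refine (wgt_integrable.const_mul 2).integrableOn.mono' hm.restrict ?_
    filter_upwards [ae_restrict_mem measurableSet_Icc.compl] with y hy
    have hy1 : 1 ≤ |y| := by
      by_contra hlt
      push Not at hlt
      rw [abs_lt] at hlt
      exact hy ⟨hlt.1.le, hlt.2.le⟩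
    rw [norm_div, Real.norm_eq_abs, Real.norm_of_nonneg (by positivity : 0 ≤ 1 + y ^ 2)]
    unfold wgt
    rw [← mul_div_assoc]
    gcongr
    exact abs_log_le_sqrt hy1

/-- antiderivative of `sdq log x` -/
def logPrim (x t : ℝ) : ℝ :=
  (2 * (x * Real.log x) - (x + t) * Real.log (x + t) - (x - t) * Real.log (x - t)) / (x * t)

lemma logPrim_deriv {x t : ℝ} (hx : x ≠ 0) (ht : t ≠ 0) (h1 : x + t ≠ 0) (h2 : x - t ≠ 0) :
    HasDerivAt (logPrim x) (sdq Real.log x t) t := by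
  have a1 := (Real.hasDerivAt_mul_log h1).comp_const_add x t
  have a2 := (Real.hasDerivAt_mul_log h2).comp_const_sub x t
  have a3 := ((a1.const_sub (2 * (x * Real.log x))).sub a2).div
    ((hasDerivAt_id t).const_mul x) (mul_ne_zero hx ht)
  refine HasDerivAt.congr_deriv a3 ?_
  simp only [sdq, id, Pi.sub_apply]
  field_simp
  ring

lemma logPrim_cont {x : ℝ} (hx : x ≠ 0) : ContinuousOn (logPrim x) (Set.Ioi 0) := by
  unfold logPrim
  have c := Real.continuous_mul_log
  have c1 : Continuous fun t : ℝ => (x + t) * Real.log (x + t) := c.comp (by fun_prop : Continuous fun t : ℝ => x + t)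
  have c2 : Continuous fun t : ℝ => (x - t) * Real.log (x - t) := c.comp (by fun_prop : Continuous fun t : ℝ => x - t)
  refine ContinuousOn.div (by fun_prop) (by fun_prop) ?_
  intro t ht
  exact mul_ne_zero hx (ne_of_gt ht)

lemma logPrim_zero {x : ℝ} (hx : x ≠ 0) :
    Tendsto (logPrim x) (nhdsWithin 0 (Set.Ioi 0)) (nhds 0) := by
  have a1 := (Real.hasDerivAt_mul_log hx)
  have b1 : HasDerivAt (fun t => (x + t) * Real.log (x + t)) (Real.log x + 1) 0 :=
    HasDerivAt.comp_const_add (f := fun x => x * Real.log x) x 0 (by simpa using a1)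
  have b2 : HasDerivAt (fun t => (x - t) * Real.log (x - t)) (-(Real.log x + 1)) 0 :=
    HasDerivAt.comp_const_sub (f := fun x => x * Real.log x) x 0 (by simpa using a1)
  have b3 := ((b1.add b2).const_sub (2 * (x * Real.log x)))
  rw [hasDerivAt_iff_tendsto_slope_zero] at b3
  have b4 := (b3.mono_left (nhdsWithin_mono (0 : ℝ)
    (fun t ht => ne_of_gt ht : Set.Ioi (0 : ℝ) ⊆ {0}ᶜ))).const_mul x⁻¹
  simp only [add_neg_cancel, neg_zero, mul_zero] at b4
  refine b4.congr fun t => ?_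
  simp only [logPrim, Pi.add_apply, smul_eq_mul, zero_add, add_zero, sub_zero]
  rw [div_eq_mul_inv, mul_inv]
  ring

lemma logPrim_atTop {x : ℝ} (hx : x ≠ 0) : Tendsto (logPrim x) atTop (nhds 0) := by
  have hx' : 0 < |x| := abs_pos.2 hx
  have key : ∀ᶠ t in atTop, ‖logPrim x t‖ ≤
      |2 * (x * Real.log x)| / |x| * t⁻¹ + 2 * (Real.log t / t) + 2 * (Real.log 2 + 1) * t⁻¹ := by
    filter_upwards [eventually_ge_atTop (|x| + 1)] with t ht
    have ht0 : 0 < t := by linarith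
    have hodd : (x - t) * Real.log (x - t) = -((t - x) * Real.log (t - x)) := by
      rw [← Real.log_neg_eq_log (x - t)]; ring_nf
    have hx1 := neg_abs_le x
    have hx2 := le_abs_self x
    have mv := (convex_Icc (t - |x|) (t + |x|)).norm_image_sub_le_of_norm_deriv_le
      (f := fun y => y * Real.log y) (x := t - x) (y := t + x) (C := Real.log (2 * t) + 1)
      (fun y hy => (Real.hasDerivAt_mul_log (by linarith [hy.1])).differentiableAt)
      (fun y hy => by
        have hy1 : 1 ≤ y := by linarith [hy.1]
        rw [Real.deriv_mul_log (by linarith), Real.norm_of_nonneg (by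
          linarith [Real.log_nonneg hy1])]
        have := Real.log_le_log (by linarith : 0 < y) (by linarith [hy.2] : y ≤ 2 * t)
        linarith)
      ⟨by linarith, by linarith⟩ ⟨by linarith, by linarith⟩
    have e : ‖t + x - (t - x)‖ = 2 * |x| := by
      rw [show t + x - (t - x) = 2 * x by ring, norm_mul]; simp
    rw [e, Real.norm_eq_abs, Real.log_mul (by norm_num) ht0.ne'] at mv
    unfold logPrim
    rw [hodd, Real.norm_eq_abs, abs_div, abs_mul x t, abs_of_pos ht0, div_le_iff₀ (by positivity)]
    have : |2 * (x * Real.log x) - (x + t) * Real.log (x + t) - -((t - x) * Real.log (t - x))|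
        ≤ |2 * (x * Real.log x)| +
          |(t + x) * Real.log (t + x) - (t - x) * Real.log (t - x)| := by
      rw [show 2 * (x * Real.log x) - (x + t) * Real.log (x + t) - -((t - x) * Real.log (t - x))
        = 2 * (x * Real.log x) - ((t + x) * Real.log (t + x) - (t - x) * Real.log (t - x)) by
          rw [add_comm x t]; ring]
      exact abs_sub _ _
    refine this.trans ((add_le_add_right mv _).trans (le_of_eq ?_))
    field_simp
    ring
  refine squeeze_zero_norm' key ?_
  have l1 : Tendsto (fun t : ℝ => t⁻¹) atTop (nhds 0) := tendsto_inv_atTop_zero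
  have l2 : Tendsto (fun t : ℝ => Real.log t / t) atTop (nhds 0) := by
    simpa using Real.tendsto_pow_log_div_mul_add_atTop 1 0 1 one_ne_zero
  simpa using ((l1.const_mul (|2 * (x * Real.log x)| / |x|)).add (l2.const_mul 2)).add
    (l1.const_mul (2 * (Real.log 2 + 1)))

lemma log_sdq_integral {x ε : ℝ} (hx : x ≠ 0) (hε : 0 < ε) :
    ∫ t in Set.Ioi ε, sdq Real.log x t = - logPrim x ε := by
  have hi := (pv_symm log_weight x ε hε).1
  have h1 := intervalIntegral_tendsto_integral_Ioi ε hi tendsto_id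
  have h2 : Tendsto (fun b => ∫ t in ε..b, sdq Real.log x t) atTop (nhds (0 - logPrim x ε)) := by
    refine ((logPrim_atTop hx).sub_const (logPrim x ε)).congr' ?_
    filter_upwards [eventually_ge_atTop ε] with b hb
    symm
    refine integral_eq_of_hasDerivAt_off_countable _ _ (s := {x, -x})
      (Set.to_countable _) ?_ ?_ ?_
    · refine (logPrim_cont hx).mono ?_
      rw [Set.uIcc_of_le hb]
      exact fun t ht => lt_of_lt_of_le hε ht.1
    · rintro t ⟨ht, hn⟩
      rw [min_eq_left hb] at ht
      simp only [Set.mem_insert_iff, Set.mem_singleton_iff, not_or] at hn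
      refine logPrim_deriv hx (by linarith [ht.1]) (fun h => hn.2 (by linarith))
        (fun h => hn.1 (by linarith))
    · rw [intervalIntegrable_iff_integrableOn_Ioc_of_le hb]
      exact hi.mono_set fun t ht => ht.1
  rw [zero_sub] at h2
  exact tendsto_nhds_unique h1 h2

lemma pv_log {x : ℝ} (hx : x ≠ 0) :
    Tendsto (fun ε : ℝ => ∫ y in {y : ℝ | ε < |y - x|},
        (Real.log y - Real.log x) / (y - x) ^ 2)
      (nhdsWithin 0 (Set.Ioi 0)) (nhds 0) := by
  have := (logPrim_zero hx).neg
  rw [neg_zero] at this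
  refine this.congr' ?_
  filter_upwards [self_mem_nhdsWithin] with ε hε
  rw [(pv_symm log_weight x ε hε).2, log_sdq_integral hx hε]

/-- the cutoff -/
def chi : ContDiffBump (0 : ℝ) := ⟨1 / 2, 1, by norm_num, by norm_num⟩

lemma chi_one {x : ℝ} (hx : |x| ≤ 1 / 2) : chi x = 1 :=
  chi.one_of_mem_closedBall (by simpa [chi, Metric.mem_closedBall, Real.dist_eq] using hx)

lemma chi_zero {x : ℝ} (hx : 1 ≤ |x|) : chi x = 0 :=
  chi.zero_of_le_dist (by simpa [chi, Real.dist_eq] using hx)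

/-- the smooth part of the logarithm -/
def Hfun (x : ℝ) : ℝ := (1 - chi x) * Real.log x

/-- the approximate Green function -/
def Gfun (x : ℝ) : ℝ := (1 / Real.pi) * (chi x * Real.log x)

/-- its half-Laplacian -/
def Ffun (x : ℝ) : ℝ := -(1 / Real.pi ^ 2) * symT Hfun x

lemma Hfun_contDiff : ContDiff ℝ (⊤ : ℕ∞) Hfun := by
  rw [contDiff_iff_contDiffAt]
  intro x
  by_cases hx : x = 0
  · subst hx
    have : Hfun =ᶠ[nhds 0] fun _ => 0 := by
      filter_upwards [Metric.ball_mem_nhds (0 : ℝ) (by norm_num : (0 : ℝ) < 1 / 2)] with y hy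
      rw [Metric.mem_ball, Real.dist_eq, sub_zero] at hy
      simp [Hfun, chi_one hy.le]
    exact contDiffAt_const.congr_of_eventuallyEq this
  · exact (contDiffAt_const.sub chi.contDiffAt).mul (Real.contDiffAt_log.2 hx)

lemma Hfun_growth : SqrtGrowth Hfun := by
  refine ⟨Hfun_contDiff, fun k => ?_⟩
  have hc : Continuous (iteratedDeriv k Hfun) :=
    Hfun_contDiff.continuous_iteratedDeriv k (by exact_mod_cast le_top)
  obtain ⟨A, hA⟩ := (isCompact_Icc (a := (-1 : ℝ)) (b := 1)).exists_bound_of_continuousOn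
    hc.continuousOn
  obtain ⟨B, hB0, hB⟩ : ∃ B : ℝ, 0 ≤ B ∧ ∀ x, 1 < |x| →
      |iteratedDeriv k Hfun x| ≤ B * Real.sqrt (1 + |x|) := by
    have hev : ∀ x : ℝ, 1 < |x| → Hfun =ᶠ[nhds x] Real.log := by
      intro x hx
      filter_upwards [(isOpen_lt continuous_const continuous_abs).mem_nhds hx] with y hy
      have hy' : 1 < |y| := hy
      simp [Hfun, chi_zero hy'.le]
    cases k with
    | zero =>
      refine ⟨2, by norm_num, fun x hx => ?_⟩
      rw [(hev x hx).iteratedDeriv_eq, iteratedDeriv_zero]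
      exact abs_log_le_sqrt hx.le
    | succ k =>
      refine ⟨k.factorial, by positivity, fun x hx => ?_⟩
      rw [(hev x hx).iteratedDeriv_eq, iteratedDeriv_succ', Real.deriv_log',
        iteratedDeriv_eq_iterate]
      have := iter_deriv_inv k x
      change |deriv^[k] Inv.inv x| ≤ _
      rw [this, abs_mul, abs_mul, abs_pow, abs_neg, abs_one, one_pow, one_mul, Nat.abs_cast,
        abs_zpow]
      gcongr
      have h1 : |x| ^ (-1 - (k : ℤ)) ≤ 1 := zpow_le_one_of_nonpos₀ hx.le (by omega)
      have h2 : 1 ≤ Real.sqrt (1 + |x|) := by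
        rw [Real.one_le_sqrt]; linarith [abs_nonneg x]
      linarith
  refine ⟨|A| + B, by positivity, fun x => ?_⟩
  have h2 : 1 ≤ Real.sqrt (1 + |x|) := by
    rw [Real.one_le_sqrt]; linarith [abs_nonneg x]
  rcases le_or_gt |x| 1 with h | h
  · have := hA x (abs_le.1 h)
    rw [Real.norm_eq_abs] at this
    have h3 := le_abs_self A
    have h4 := abs_nonneg A
    nlinarith
  · have := hB x h
    have h4 := abs_nonneg A
    nlinarith

lemma Gfun_eq (x : ℝ) : Gfun x = (1 / Real.pi) * (Real.log x - Hfun x) := by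
  unfold Gfun Hfun; ring

lemma Gfun_zero {x : ℝ} (hx : 1 ≤ |x|) : Gfun x = 0 := by simp [Gfun, chi_zero hx]

lemma Gfun_weight : Integrable (fun y => Gfun y / (1 + y ^ 2)) := by
  refine ((log_weight.sub Hfun_growth.weight).const_mul (1 / Real.pi)).congr
    (Eventually.of_forall fun y => ?_)
  simp only [Pi.sub_apply, Gfun_eq]
  ring

lemma Gfun_meas : Measurable Gfun := by
  have := chi.continuous.measurable
  unfold Gfun
  fun_prop

lemma Gfun_integrable : Integrable Gfun := by
  refine (Gfun_weight.const_mul 2).mono Gfun_meas.aestronglyMeasurable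
    (Eventually.of_forall fun y => ?_)
  rcases le_or_gt 1 |y| with h | h
  · simp [Gfun_zero h]
  · rw [norm_mul, norm_div, Real.norm_of_nonneg (by positivity : 0 ≤ 1 + y ^ 2), Real.norm_two,
      ← mul_div_assoc, le_div_iff₀ (by positivity)]
    have : y ^ 2 ≤ 1 := by rw [← sq_abs]; nlinarith [abs_nonneg y]
    nlinarith [norm_nonneg (Gfun y)]

lemma Gfun_pv {x : ℝ} (hx : x ≠ 0) :
    Tendsto (fun ε : ℝ => (1 / Real.pi) * ∫ y in {y : ℝ | ε < |y - x|},
        (Gfun y - Gfun x) / (y - x) ^ 2)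
      (nhdsWithin 0 (Set.Ioi 0)) (nhds (Ffun x)) := by
  have h := (((pv_log hx).sub (pv_smooth Hfun_growth x)).const_mul (1 / Real.pi)).const_mul
    (1 / Real.pi)
  rw [show Ffun x = 1 / Real.pi * (1 / Real.pi * (0 - symT Hfun x)) by
    unfold Ffun; ring]
  refine h.congr' ?_
  filter_upwards [self_mem_nhdsWithin] with ε hε
  rw [← integral_sub (pv_integrableOn log_weight x ε hε)
    (pv_integrableOn Hfun_growth.weight x ε hε), ← integral_const_mul]
  congr 2
  ext y
  rw [Gfun_eq, Gfun_eq]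
  ring

lemma Ffun_far {x : ℝ} (hx : 2 ≤ |x|) :
    Ffun x = (1 / Real.pi) * ∫ y, Gfun y / (y - x) ^ 2 := by
  have hx0 : x ≠ 0 := by
    rintro rfl
    norm_num at hx
  refine tendsto_nhds_unique (Gfun_pv hx0) (tendsto_const_nhds.congr' ?_)
  filter_upwards [Ioo_mem_nhdsGT (by norm_num : (0 : ℝ) < 1)] with ε hε
  congr 1
  symm
  rw [setIntegral_eq_integral_of_forall_compl_eq_zero]
  · simp [Gfun_zero (by linarith : 1 ≤ |x|)]
  · intro y hy
    have hy' : |y - x| ≤ ε := not_lt.1 hy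
    have h1 : |x| ≤ |y| + |y - x| := by
      have := abs_sub y (y - x)
      simpa using this
    rw [Gfun_zero (by linarith [hε.2] : 1 ≤ |y|), Gfun_zero (by linarith : 1 ≤ |x|)]
    simp

lemma Gker_integrable {x : ℝ} (hx : 2 ≤ |x|) : Integrable (fun y => Gfun y / (y - x) ^ 2) := by
  refine Gfun_integrable.mono ?_ (Eventually.of_forall fun y => ?_)
  · have := Gfun_meas
    apply Measurable.aestronglyMeasurable; fun_prop
  · rcases le_or_gt 1 |y| with h | h
    · simp [Gfun_zero h]
    · rw [norm_div]
      refine div_le_self (norm_nonneg _) ?_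
      have h1 : |x| ≤ |y| + |y - x| := by
        have := abs_sub y (y - x)
        simpa using this
      rw [Real.norm_of_nonneg (by positivity), ← sq_abs]
      nlinarith

lemma ker_diff {x y z : ℝ} (hx : 3 ≤ |x|) (hy : |y| ≤ 1) (hz : |z - x| ≤ 1) :
    |1 / (y - x) ^ 2| ≤ 9 / x ^ 2 ∧
    |1 / (y - z) ^ 2 - 1 / (y - x) ^ 2| ≤ 18 / x ^ 2 * |z - x| := by
  have h1 : |x| ≤ |y| + |y - x| := by simpa using abs_sub y (y - x)
  have h2 : |x| ≤ |z| + |z - x| := by simpa using abs_sub z (z - x)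
  have h3 : |z| ≤ |y| + |y - z| := by simpa using abs_sub y (y - z)
  have ha : |x| / 3 ≤ |y - x| := by linarith
  have hb : |x| / 3 ≤ |y - z| := by linarith
  have hx0 : 0 < |x| := by linarith
  have ea : |(1 / (y - x))| ≤ 3 / |x| := by
    rw [abs_div, abs_one, div_le_div_iff₀ (by linarith) hx0]; linarith
  have eb : |(1 / (y - z))| ≤ 3 / |x| := by
    rw [abs_div, abs_one, div_le_div_iff₀ (by linarith) hx0]; linarith
  have ea1 : |(1 / (y - x))| ≤ 1 := by
    rw [abs_div, abs_one, div_le_one (by linarith)]; linarith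
  have eb1 : |(1 / (y - z))| ≤ 1 := by
    rw [abs_div, abs_one, div_le_one (by linarith)]; linarith
  have hna : y - x ≠ 0 := abs_pos.1 (by linarith)
  have hnb : y - z ≠ 0 := abs_pos.1 (by linarith)
  set p := 1 / (y - x) with hp
  set q := 1 / (y - z) with hq
  have hpp : 1 / (y - x) ^ 2 = p ^ 2 := by rw [hp, one_div_pow]
  have hqq : 1 / (y - z) ^ 2 = q ^ 2 := by rw [hq, one_div_pow]
  have hx2 : (9 : ℝ) / x ^ 2 = (3 / |x|) * (3 / |x|) := by
    rw [← sq_abs x]; ring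
  constructor
  · rw [hpp, abs_pow, hx2, sq]
    exact mul_le_mul ea ea (abs_nonneg _) (by positivity)
  · have e : q ^ 2 - p ^ 2 = (z - x) * ((p * q) * (p + q)) := by
      rw [hp, hq]; field_simp; ring
    rw [hpp, hqq, e, abs_mul, abs_mul, abs_mul, mul_comm]
    gcongr
    have e1 : |p| * |q| ≤ 9 / x ^ 2 := by
      rw [hx2]; exact mul_le_mul ea eb (abs_nonneg _) (by positivity)
    have e2 : |p + q| ≤ 2 := (abs_add_le _ _).trans (by linarith)
    calc |p| * |q| * |p + q| ≤ 9 / x ^ 2 * 2 := by gcongr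
      _ = _ := by ring

lemma invpi_le : 1 / Real.pi ≤ 1 := by
  rw [div_le_one Real.pi_pos]; linarith [Real.pi_gt_three]

lemma Ffun_decay {x : ℝ} (hx : 3 ≤ |x|) : |Ffun x| ≤ 9 / x ^ 2 * ∫ y, |Gfun y| := by
  have hI : 0 ≤ ∫ y, |Gfun y| := integral_nonneg fun y => abs_nonneg _
  rw [Ffun_far (by linarith), abs_mul, abs_of_pos (by positivity)]
  have : |∫ y, Gfun y / (y - x) ^ 2| ≤ ∫ y, 9 / x ^ 2 * |Gfun y| := by
    rw [← Real.norm_eq_abs]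
    refine norm_integral_le_of_norm_le (Gfun_integrable.abs.const_mul _)
      (Eventually.of_forall fun y => ?_)
    rcases le_or_gt 1 |y| with h | h
    · simp [Gfun_zero h]
    · rw [div_eq_mul_one_div, norm_mul, mul_comm]
      simp only [Real.norm_eq_abs]
      gcongr
      exact (ker_diff (z := x) hx h.le (by simp)).1
  rw [integral_const_mul] at this
  calc _ ≤ 1 * |∫ y, Gfun y / (y - x) ^ 2| := by gcongr; exact invpi_le
    _ ≤ _ := by linarith

lemma Ffun_lip {x z : ℝ} (hx : 3 ≤ |x|) (hz : |z - x| ≤ 1) :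
    |Ffun z - Ffun x| ≤ (18 / x ^ 2 * ∫ y, |Gfun y|) * |z - x| := by
  have h2 : |x| ≤ |z| + |z - x| := by simpa using abs_sub z (z - x)
  rw [Ffun_far (by linarith), Ffun_far (by linarith), ← mul_sub,
    ← integral_sub (Gker_integrable (by linarith)) (Gker_integrable (by linarith)),
    abs_mul, abs_of_pos (by positivity)]
  have : |∫ y, (Gfun y / (y - z) ^ 2 - Gfun y / (y - x) ^ 2)| ≤
      ∫ y, (18 / x ^ 2 * |z - x|) * |Gfun y| := by
    rw [← Real.norm_eq_abs]
    refine norm_integral_le_of_norm_le (Gfun_integrable.abs.const_mul _)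
      (Eventually.of_forall fun y => ?_)
    rcases le_or_gt 1 |y| with h | h
    · simp [Gfun_zero h]
    · rw [div_eq_mul_one_div, div_eq_mul_one_div (Gfun y) ((y - x) ^ 2), ← mul_sub, norm_mul,
        mul_comm]
      simp only [Real.norm_eq_abs]
      gcongr
      exact (ker_diff hx h.le hz).2
  rw [integral_const_mul] at this
  calc _ ≤ 1 * |∫ y, (Gfun y / (y - z) ^ 2 - Gfun y / (y - x) ^ 2)| := by
        gcongr; exact invpi_le
    _ ≤ _ := by linarith

lemma Ffun_contDiff : ContDiff ℝ (⊤ : ℕ∞) Ffun := by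
  unfold Ffun
  exact contDiff_const.mul (symT_contDiff Hfun_growth)

lemma Ffun_bounds : ∃ C : ℝ, ∀ x : ℝ,
    |Ffun x| ≤ C / (1 + |x|) ^ 2 ∧ |deriv Ffun x| ≤ C / (1 + |x|) ^ 2 := by
  obtain ⟨A, hA⟩ := (isCompact_Icc (a := (-3 : ℝ)) (b := 3)).exists_bound_of_continuousOn
    Ffun_contDiff.continuous.continuousOn
  obtain ⟨B, hB⟩ := (isCompact_Icc (a := (-3 : ℝ)) (b := 3)).exists_bound_of_continuousOn
    (contDiff_infty_iff_deriv.1 Ffun_contDiff).2.continuous.continuousOn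
  have hI : 0 ≤ ∫ y, |Gfun y| := integral_nonneg fun y => abs_nonneg _
  set I := ∫ y, |Gfun y| with hIdef
  refine ⟨32 * I + 16 * (|A| + |B|), fun x => ?_⟩
  have hA0 := abs_nonneg A
  have hB0 := abs_nonneg B
  rcases le_or_gt |x| 3 with h | h
  · have h1 := hA x (abs_le.1 h)
    have h2 := hB x (abs_le.1 h)
    rw [Real.norm_eq_abs] at h1 h2
    have h3 : (1 + |x|) ^ 2 ≤ 16 := by nlinarith [abs_nonneg x]
    have key : ∀ u : ℝ, 0 ≤ u → u ≤ |A| + |B| →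
        u ≤ (32 * I + 16 * (|A| + |B|)) / (1 + |x|) ^ 2 := by
      intro u hu0 hu
      rw [le_div_iff₀ (by positivity)]
      nlinarith
    exact ⟨key _ (abs_nonneg _) (by linarith [le_abs_self A]),
      key _ (abs_nonneg _) (by linarith [le_abs_self B])⟩
  · have key : 18 / x ^ 2 * I ≤ (32 * I + 16 * (|A| + |B|)) / (1 + |x|) ^ 2 := by
      rw [← sq_abs x, div_mul_eq_mul_div, div_le_div_iff₀ (by positivity) (by positivity)]
      have h5 : (1 + |x|) ^ 2 * 9 ≤ 16 * |x| ^ 2 := by nlinarith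
      have h6 : 0 ≤ 16 * (|A| + |B|) * |x| ^ 2 := by positivity
      nlinarith
    have hx0 : 0 < x ^ 2 := by rw [← sq_abs]; positivity
    refine ⟨(Ffun_decay h.le).trans (le_trans ?_ key), le_trans ?_ key⟩
    · gcongr; norm_num
    · rw [← Real.norm_eq_abs]
      refine norm_deriv_le_of_lip' (by positivity) ?_
      filter_upwards [Metric.ball_mem_nhds x one_pos] with z hz
      rw [Metric.mem_ball, Real.dist_eq] at hz
      exact Ffun_lip h.le hz.le

end ApproxGreen

/-- Existence of an approximate Green's function `G` of the half-Laplacian: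
`G` is even, smooth away from `0`, supported in `[-1,1]`, equal to `(1/π) log|x|`
near the origin, and `ΛG - δ` extends to a smooth function `F` with quadratic decay,
where `ΛG(x)` is computed as the principal value `(1/π) pv ∫ (G(y)-G(x))/(y-x)² dy`
for `x ≠ 0`. -/
theorem exists_approximate_greens_function :
    ∃ (G F : ℝ → ℝ) (C : ℝ),
      (∀ x : ℝ, G (-x) = G x) ∧
      ContDiffOn ℝ (⊤ : ℕ∞) G {(0 : ℝ)}ᶜ ∧
      (∀ x : ℝ, x ∉ Set.Icc (-1 : ℝ) 1 → G x = 0) ∧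
      (∀ x : ℝ, 0 < |x| → |x| ≤ 1 / 2 → G x = (1 / Real.pi) * Real.log |x|) ∧
      ContDiff ℝ (⊤ : ℕ∞) F ∧
      (∀ x : ℝ, x ≠ 0 →
        (∀ ε : ℝ, 0 < ε →
          IntegrableOn (fun y => (G y - G x) / (y - x) ^ 2) {y : ℝ | ε < |y - x|}) ∧
        Tendsto
          (fun ε : ℝ =>
            (1 / Real.pi) * ∫ y in {y : ℝ | ε < |y - x|}, (G y - G x) / (y - x) ^ 2)
          (nhdsWithin 0 (Set.Ioi 0)) (nhds (F x))) ∧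
      (∀ x : ℝ,
        |F x| ≤ C / (1 + |x|) ^ 2 ∧ |deriv F x| ≤ C / (1 + |x|) ^ 2) := by
  obtain ⟨C, hC⟩ := Ffun_bounds
  refine ⟨Gfun, Ffun, C, ?_, ?_, ?_, ?_, Ffun_contDiff, ?_, hC⟩
  · intro x
    simp [Gfun, chi.neg]
  · intro x hx
    refine (ContDiffAt.contDiffWithinAt ?_)
    exact contDiffAt_const.mul (chi.contDiffAt.mul (Real.contDiffAt_log.2 hx))
  · intro x hx
    refine Gfun_zero ?_
    by_contra h
    exact hx (abs_le.1 (not_le.1 h).le)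
  · intro x _ h
    simp [Gfun, chi_one h]
  · intro x hx
    exact ⟨fun ε hε => pv_integrableOn Gfun_weight x ε hε, Gfun_pv hx⟩
end

section
/- For each θ ∈ (0,1) there is a constant C < ∞ such that for every function K: ℝ → ℝ that is continuous on ℝ, continuously differentiable on ℝ∖{0}, and has ‖K‖_{1−θ;1} < ∞, and all α, y, z ∈ ℝ, one has |□K(α;y,z)| ≤ C ‖K‖_{1−θ;1} (min(|y|,|z|))^{1−θ}. -/
/-- The set whose supremum is the singular kernel norm `‖K‖_{ζ;m}`. -/
noncomputable def singSet (ζ : ℝ) (m : ℕ) (K : ℝ → ℝ) : Set ℝ :=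
  {r | ∃ (k : ℕ) (x : ℝ), k ≤ m ∧ x ≠ 0 ∧
    r = |x| ^ ((k : ℝ) - ζ) * |iteratedDeriv k K x|}

/-- The singular kernel norm `‖K‖_{ζ;m} = sup_{0≤k≤m} sup_{x≠0} |x|^(k-ζ) |K^(k)(x)|`. -/
noncomputable def singNorm (ζ : ℝ) (m : ℕ) (K : ℝ → ℝ) : ℝ := sSup (singSet ζ m K)

/-- The second-difference operator `□K(α;y,z) = K(α) - K(α-y) - K(α-z) + K(α-y-z)`. -/
def boxOp (K : ℝ → ℝ) (α y z : ℝ) : ℝ :=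
  K α - K (α - y) - K (α - z) + K (α - y - z)

theorem holder_aux (θ : ℝ) (h0 : 0 < θ) (h1 : θ < 1) (K : ℝ → ℝ) (hc : Continuous K)
    (hd : ContDiffOn ℝ 1 K {(0 : ℝ)}ᶜ) (hb : BddAbove (singSet (1 - θ) 1 K)) (x w : ℝ) :
    |K x - K w| ≤ 5 * singNorm (1 - θ) 1 K * |x - w| ^ (1 - θ) := by
  set N := singNorm (1 - θ) 1 K with hN
  have hs : 0 < 1 - θ := by linarith
  have b0 : ∀ x : ℝ, x ≠ 0 → |K x| ≤ N * |x| ^ (1 - θ) := by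
    intro x hx
    have h : |x| ^ (((0 : ℕ) : ℝ) - (1 - θ)) * |iteratedDeriv 0 K x| ≤ N :=
      le_csSup hb ⟨0, x, by norm_num, hx, rfl⟩
    have hp : 0 < |x| := abs_pos.mpr hx
    have hq : 0 < |x| ^ (1 - θ) := Real.rpow_pos_of_pos hp _
    rw [iteratedDeriv_zero, Nat.cast_zero, zero_sub, Real.rpow_neg hp.le,
      inv_mul_le_iff₀ hq] at h
    linarith
  have b1 : ∀ x : ℝ, x ≠ 0 → |deriv K x| ≤ N * |x| ^ (-θ) := by
    intro x hx
    have h : |x| ^ (((1 : ℕ) : ℝ) - (1 - θ)) * |iteratedDeriv 1 K x| ≤ N :=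
      le_csSup hb ⟨1, x, by norm_num, hx, rfl⟩
    have hp : 0 < |x| := abs_pos.mpr hx
    have hq : 0 < |x| ^ θ := Real.rpow_pos_of_pos hp _
    rw [iteratedDeriv_one, Nat.cast_one, sub_sub_cancel] at h
    rw [Real.rpow_neg hp.le, ← div_eq_mul_inv, le_div_iff₀ hq]
    linarith
  have hN0 : 0 ≤ N := by
    have := b0 1 one_ne_zero
    simp at this
    exact (abs_nonneg _).trans this
  have b0' : ∀ x : ℝ, |K x| ≤ N * |x| ^ (1 - θ) := by
    have hcl : IsClosed {x : ℝ | |K x| ≤ N * |x| ^ (1 - θ)} := by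
      refine isClosed_le hc.abs (continuous_const.mul ?_)
      exact continuous_abs.rpow_const (fun _ => Or.inr hs.le)
    have hden : Dense ({(0 : ℝ)}ᶜ : Set ℝ) := dense_compl_singleton 0
    intro x
    exact hcl.closure_subset_iff.mpr (fun y hy => b0 y hy) (hden x)
  set d := |x - w| with hdd
  have hd0 : 0 ≤ d := abs_nonneg _
  rcases le_or_gt |x| (2 * d) with hx | hx
  · have hw : |w| ≤ 3 * d := by
      have := abs_sub_abs_le_abs_sub w x
      rw [abs_sub_comm] at this
      linarith
    have key : ∀ c : ℝ, 1 ≤ c → ∀ u : ℝ, |u| ≤ c * d → |K u| ≤ N * (c * d ^ (1 - θ)) := by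
      intro c hc1 u hu
      refine (b0' u).trans (mul_le_mul_of_nonneg_left ?_ hN0)
      calc |u| ^ (1 - θ) ≤ (c * d) ^ (1 - θ) :=
            Real.rpow_le_rpow (abs_nonneg _) hu hs.le
        _ = c ^ (1 - θ) * d ^ (1 - θ) := Real.mul_rpow (by linarith) hd0
        _ ≤ c * d ^ (1 - θ) := by
            refine mul_le_mul_of_nonneg_right ?_ (Real.rpow_nonneg hd0 _)
            exact Real.rpow_le_self_of_one_le hc1 (by linarith)
    have k1 := key 2 (by norm_num) x hx
    have k2 := key 3 (by norm_num) w hw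
    have := abs_sub (K x) (K w)
    linarith
  · rcases hd0.eq_or_lt with hz | hpos
    · have : x = w := by
        have : |x - w| = 0 := hz.symm
        linarith [abs_eq_zero.mp this]
      subst this
      simp only [sub_self, abs_zero]
      positivity
    have far : ∀ u ∈ Metric.closedBall x d, d ≤ |u| := by
      intro u hu
      rw [Metric.mem_closedBall, Real.dist_eq, abs_sub_comm] at hu
      have := abs_sub_abs_le_abs_sub x u
      linarith
    have nz : ∀ u ∈ Metric.closedBall x d, u ≠ 0 := fun u hu =>
      abs_pos.mp (hpos.trans_le (far u hu))
    have m := Convex.norm_image_sub_le_of_norm_deriv_le (f := K) (C := N * d ^ (-θ))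
      (s := Metric.closedBall x d) (x := w) (y := x)
      (fun u hu => (hd.differentiableOn one_ne_zero).differentiableAt
        (isOpen_compl_singleton.mem_nhds (nz u hu)))
      (fun u hu => (b1 u (nz u hu)).trans (mul_le_mul_of_nonneg_left
        (Real.rpow_le_rpow_of_nonpos hpos (far u hu) (by linarith)) hN0))
      (convex_closedBall x d)
      (by rw [Metric.mem_closedBall, Real.dist_eq, abs_sub_comm])
      (Metric.mem_closedBall_self hd0)
    rw [Real.norm_eq_abs, Real.norm_eq_abs, ← hdd] at m
    have e : d ^ (-θ) * d = d ^ (1 - θ) := by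
      rw [← Real.rpow_add_one hpos.ne']
      congr 1; ring
    rw [mul_assoc, e] at m
    have : 0 ≤ N * d ^ (1 - θ) := mul_nonneg hN0 (Real.rpow_nonneg hd0 _)
    linarith

/-- For `θ ∈ (0,1)` there is `C < ∞` such that any continuous `K`, continuously
differentiable away from `0` with `‖K‖_{1-θ;1} < ∞`, satisfies
`|□K(α;y,z)| ≤ C ‖K‖_{1-θ;1} (min(|y|,|z|))^(1-θ)` for all `α, y, z`. -/
theorem boxOp_bound_min (θ : ℝ) (hθ : θ ∈ Set.Ioo (0 : ℝ) 1) :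
    ∃ C : ℝ, ∀ K : ℝ → ℝ, Continuous K → ContDiffOn ℝ 1 K {(0 : ℝ)}ᶜ →
      BddAbove (singSet (1 - θ) 1 K) →
      ∀ α y z : ℝ,
        |boxOp K α y z| ≤ C * singNorm (1 - θ) 1 K * (min |y| |z|) ^ (1 - θ) := by
  obtain ⟨h0, h1⟩ := hθ
  refine ⟨10, fun K hc hd hb α y z => ?_⟩
  have H := holder_aux θ h0 h1 K hc hd hb
  have e1 := H α (α - y)
  have e2 := H (α - z) (α - y - z)
  have e3 := H α (α - z)
  have e4 := H (α - y) (α - y - z)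
  rw [show α - (α - y) = y by ring] at e1
  rw [show α - z - (α - y - z) = y by ring] at e2
  rw [show α - (α - z) = z by ring] at e3
  rw [show α - y - (α - y - z) = z by ring] at e4
  unfold boxOp
  rw [abs_le] at *
  rcases min_choice |y| |z| with h | h <;> rw [h] <;> constructor <;> linarith [e1.1, e1.2, e2.1, e2.2, e3.1, e3.2, e4.1, e4.2]
end

section
/- For each θ ∈ (0,1) there is a constant C < ∞ such that for all functions H₁, H₂: ℝ → ℝ that are continuous on ℝ, twice continuously differentiable on ℝ∖{0}, with ‖H₁‖_{1−θ;2} < ∞ and ‖H₂‖_{1−θ;2} < ∞, and every α ∈ ℝ with α ≠ 0, one has ∬_{ℝ²} |□H₁(α;y,z) · □H₂(α;y,z)| / (y² z²) dy dz ≤ C ‖H₁‖_{1−θ;2} ‖H₂‖_{1−θ;2} |α|^{−2θ}. -/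
open MeasureTheory

/-- One-sided cut-off power. -/
noncomputable def qq (θ t : ℝ) : ℝ := (Set.Ioo (0 : ℝ) 1).indicator (fun t => t ^ (-θ)) t

/-- One-dimensional majorant. -/
noncomputable def phi (θ t : ℝ) : ℝ :=
  qq θ t + qq θ (-t) + (qq θ (1 - t) + qq θ (t - 1)) + (1 + ‖t‖) ^ (-(1 + θ))

/-- Explicit control of a kernel and its first two derivatives. -/
def Ctrl (θ M : ℝ) (K Kd Kdd : ℝ → ℝ) : Prop :=
  (∀ x, |K x| ≤ M * |x| ^ (1 - θ)) ∧
  (∀ x, x ≠ 0 → HasDerivAt K (Kd x) x) ∧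
  (∀ x, x ≠ 0 → HasDerivAt Kd (Kdd x) x) ∧
  (∀ x, x ≠ 0 → |Kd x| ≤ M * |x| ^ (-θ)) ∧
  (∀ x, x ≠ 0 → |Kdd x| ≤ M * |x| ^ (-1 - θ))

lemma qq_nonneg (θ t : ℝ) : 0 ≤ qq θ t := by
  unfold qq
  apply Set.indicator_nonneg
  intro x hx
  exact Real.rpow_nonneg hx.1.le _

lemma qq_integrable {θ : ℝ} (h1 : θ < 1) : Integrable (qq θ) := by
  unfold qq
  change Integrable ((Set.Ioo (0 : ℝ) 1).indicator (fun t => t ^ (-θ)))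
  rw [integrable_indicator_iff measurableSet_Ioo]
  exact (intervalIntegral.integrableOn_Ioo_rpow_iff zero_lt_one).2 (by linarith)

lemma phi_integrable {θ : ℝ} (h0 : 0 < θ) (h1 : θ < 1) : Integrable (phi θ) := by
  have hq := qq_integrable h1
  have hp : Integrable (fun t : ℝ => (1 + ‖t‖) ^ (-(1 + θ))) :=
    integrable_one_add_norm (by simp [h0])
  exact ((hq.add hq.comp_neg).add ((hq.comp_sub_left 1).add (hq.comp_sub_right 1))).add hp

lemma phi_nonneg (θ t : ℝ) : 0 ≤ phi θ t := by
  unfold phi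
  have := qq_nonneg θ t
  have := qq_nonneg θ (-t)
  have := qq_nonneg θ (1 - t)
  have := qq_nonneg θ (t - 1)
  have : 0 ≤ (1 + ‖t‖) ^ (-(1 + θ)) := by positivity
  linarith

lemma qq_abs (θ : ℝ) {t : ℝ} (h0 : t ≠ 0) (h1 : |t| < 1) : |t| ^ (-θ) ≤ qq θ t + qq θ (-t) := by
  have a := qq_nonneg θ t
  have b := qq_nonneg θ (-t)
  rcases lt_or_gt_of_ne h0 with h | h
  · rw [abs_of_neg h] at *
    have : qq θ (-t) = (-t) ^ (-θ) := Set.indicator_of_mem (by constructor <;> linarith) _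
    linarith
  · rw [abs_of_pos h] at *
    have : qq θ t = t ^ (-θ) := Set.indicator_of_mem (by constructor <;> linarith) _
    linarith

lemma phi_small (θ : ℝ) {t : ℝ} (h0 : t ≠ 0) (h1 : |t| < 1) : |t| ^ (-θ) ≤ phi θ t := by
  have := qq_abs θ h0 h1
  unfold phi
  have := qq_nonneg θ (1 - t)
  have := qq_nonneg θ (t - 1)
  have : 0 ≤ (1 + ‖t‖) ^ (-(1 + θ)) := by positivity
  linarith

lemma brk_large {θ : ℝ} (h0 : 0 < θ) (h1 : θ < 1) {t : ℝ} (ht : 1 / 4 < |t|) :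
    |t| ^ (-1 - θ) ≤ 25 * (1 + ‖t‖) ^ (-(1 + θ)) := by
  have hp : 0 < |t| := by linarith
  have : (5 * |t|) ^ (-(1 + θ)) ≤ (1 + ‖t‖) ^ (-(1 + θ)) := by
    apply Real.rpow_le_rpow_of_nonpos (by positivity)
    · rw [Real.norm_eq_abs]; linarith
    · linarith
  rw [Real.mul_rpow (by norm_num) hp.le] at this
  have h5 : (1 / 25 : ℝ) ≤ 5 ^ (-(1 + θ)) := by
    have : (5 : ℝ) ^ (-(2 : ℝ)) ≤ 5 ^ (-(1 + θ)) :=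
      Real.rpow_le_rpow_of_exponent_le (by norm_num) (by linarith)
    refine le_trans ?_ this
    rw [Real.rpow_neg (by norm_num)]
    norm_num
  have e : -1 - θ = -(1 + θ) := by ring
  rw [e]
  have hX : 0 ≤ |t| ^ (-(1 + θ)) := by positivity
  nlinarith

lemma brk_le_phi (θ t : ℝ) : (1 + ‖t‖) ^ (-(1 + θ)) ≤ phi θ t := by
  unfold phi
  have := qq_nonneg θ t
  have := qq_nonneg θ (-t)
  have := qq_nonneg θ (1 - t)
  have := qq_nonneg θ (t - 1)
  linarith

lemma phi_large {θ : ℝ} (h0 : 0 < θ) (h1 : θ < 1) {t : ℝ} (ht : 1 / 4 < |t|) :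
    |t| ^ (-1 - θ) ≤ 25 * phi θ t := by
  have := brk_large h0 h1 ht
  have := brk_le_phi θ t
  linarith

lemma one_le_phi {θ : ℝ} (h0 : 0 < θ) (h1 : θ < 1) {t : ℝ} (ht : 1 / 4 < |t|) :
    1 ≤ 100 * (t ^ 2 * phi θ t) := by
  have hp : 0 < |t| := by linarith
  have h := phi_large h0 h1 ht
  have e : |t| ^ (-1 - θ) * t ^ 2 = |t| ^ (1 - θ) := by
    rw [← sq_abs t, ← Real.rpow_natCast, ← Real.rpow_add hp]
    congr 1; push_cast; ring
  have g : (1 / 4 : ℝ) ≤ |t| ^ (1 - θ) := by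
    calc (1 / 4 : ℝ) = (1 / 4 : ℝ) ^ (1 : ℝ) := by rw [Real.rpow_one]
      _ ≤ (1 / 4 : ℝ) ^ (1 - θ) :=
        Real.rpow_le_rpow_of_exponent_ge (by norm_num) (by norm_num) (by linarith)
      _ ≤ |t| ^ (1 - θ) := Real.rpow_le_rpow (by norm_num) ht.le (by linarith)
  have := mul_le_mul_of_nonneg_right h (sq_nonneg t)
  nlinarith

lemma phi_mid {θ : ℝ} (h0 : 0 < θ) (h1 : θ < 1) {t : ℝ} (ht : 1 / 4 < |t|) (hne : t ≠ 1) :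
    1 + |1 - t| ^ (-θ) ≤ 216 * (t ^ 2 * phi θ t) := by
  have h := one_le_phi h0 h1 ht
  have hpn := phi_nonneg θ t
  by_cases hc : |1 - t| < 1
  · have a := qq_abs θ (sub_ne_zero.2 hne.symm) hc
    rw [neg_sub] at a
    have b : |1 - t| ^ (-θ) ≤ phi θ t := by
      unfold phi
      have := qq_nonneg θ t
      have := qq_nonneg θ (-t)
      have : 0 ≤ (1 + ‖t‖) ^ (-(1 + θ)) := by positivity
      linarith
    have c : 1 / 16 ≤ t ^ 2 := by rw [← sq_abs]; nlinarith
    nlinarith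
  · have : |1 - t| ^ (-θ) ≤ 1 :=
      Real.rpow_le_one_of_one_le_of_nonpos (not_lt.1 hc) (by linarith)
    linarith

section kernel
variable {θ M : ℝ} {K Kd Kdd : ℝ → ℝ}

lemma Ctrl.M_nonneg (h : Ctrl θ M K Kd Kdd) : 0 ≤ M := by
  have := h.1 1
  simp at this
  exact (abs_nonneg _).trans this

lemma Ctrl.diffB1 (h0 : 0 < θ) (h1 : θ < 1) (h : Ctrl θ M K Kd Kdd) {w z : ℝ} (hw : w ≠ 0)
    (hz : |z| ≤ |w| / 2) : |K w - K (w - z)| ≤ 10 * M * (|z| * |w| ^ (-θ)) := by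
  have hM := h.M_nonneg
  obtain ⟨-, hK, -, hKd, -⟩ := h
  have hwp : 0 < |w| := abs_pos.2 hw
  have key : ∀ x ∈ Set.uIcc (w - z) w, |w| / 2 ≤ |x| := by
    intro x hx
    have := Set.abs_sub_right_of_mem_uIcc hx
    have e : |w - (w - z)| = |z| := by congr 1; ring
    have t : |w| ≤ |w - x| + |x| := by
      calc |w| = |(w - x) + x| := by congr 1; ring
        _ ≤ _ := abs_add_le _ _
    linarith
  have b := (convex_uIcc (w - z) w).norm_image_sub_le_of_norm_hasDerivWithin_le (f := K) (f' := Kd)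
    (C := M * (2 * |w| ^ (-θ))) (x := w - z) (y := w) ?_ ?_ Set.left_mem_uIcc Set.right_mem_uIcc
  · simp only [Real.norm_eq_abs, sub_sub_cancel] at b
    have : 0 ≤ M * (|z| * |w| ^ (-θ)) := by positivity
    nlinarith
  · intro x hx
    have := key x hx
    exact (hK x (abs_pos.1 (by linarith))).hasDerivWithinAt
  · intro x hx
    have hx := key x hx
    refine (hKd x (abs_pos.1 (by linarith))).trans ?_
    apply mul_le_mul_of_nonneg_left _ hM
    calc |x| ^ (-θ) ≤ (|w| / 2) ^ (-θ) :=
          Real.rpow_le_rpow_of_nonpos (by positivity) hx (by linarith)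
      _ = 2 ^ θ * |w| ^ (-θ) := by
        rw [Real.div_rpow hwp.le (by norm_num), Real.rpow_neg (by norm_num : (0:ℝ) ≤ 2)]
        field_simp
      _ ≤ 2 * |w| ^ (-θ) := by
        gcongr
        calc (2:ℝ) ^ θ ≤ 2 ^ (1:ℝ) := Real.rpow_le_rpow_of_exponent_le (by norm_num) h1.le
          _ = 2 := Real.rpow_one 2

lemma Ctrl.diffA1 (h0 : 0 < θ) (h1 : θ < 1) (h : Ctrl θ M K Kd Kdd) {w z : ℝ}
    (hz : |w| / 2 ≤ |z|) : |K w - K (w - z)| ≤ 5 * M * |z| ^ (1 - θ) := by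
  have hM := h.M_nonneg
  have a1 := h.1 w
  have a2 := h.1 (w - z)
  have aux : ∀ c : ℝ, 1 ≤ c → ∀ x, |x| ≤ c * |z| → |x| ^ (1 - θ) ≤ c * |z| ^ (1 - θ) := by
    intro c hc x hx
    calc |x| ^ (1 - θ) ≤ (c * |z|) ^ (1 - θ) :=
          Real.rpow_le_rpow (abs_nonneg _) hx (by linarith)
      _ = c ^ (1 - θ) * |z| ^ (1 - θ) := Real.mul_rpow (by linarith) (abs_nonneg _)
      _ ≤ c * |z| ^ (1 - θ) := by
        gcongr
        calc c ^ (1 - θ) ≤ c ^ (1:ℝ) := Real.rpow_le_rpow_of_exponent_le hc (by linarith)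
          _ = c := Real.rpow_one c
  have b1 := aux 2 (by norm_num) w (by linarith)
  have b2 := aux 3 (by norm_num) (w - z) (by linarith [abs_sub w z])
  have c1 := mul_le_mul_of_nonneg_left b1 hM
  have c2 := mul_le_mul_of_nonneg_left b2 hM
  have := abs_sub (K w) (K (w - z))
  linarith

lemma zpow_split {z : ℝ} (hz : z ≠ 0) : |z| ^ (1 - θ) = |z| * |z| ^ (-θ) := by
  have : 0 < |z| := abs_pos.2 hz
  rw [sub_eq_add_neg, Real.rpow_add this, Real.rpow_one]

lemma Ctrl.diffA (h0 : 0 < θ) (h1 : θ < 1) (h : Ctrl θ M K Kd Kdd) {w z : ℝ} (hz : z ≠ 0) :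
    |K w - K (w - z)| ≤ 10 * M * |z| ^ (1 - θ) := by
  have hM := h.M_nonneg
  have hzp : 0 < |z| := abs_pos.2 hz
  rcases le_total (|w| / 2) |z| with hc | hc
  · have := h.diffA1 h0 h1 hc
    have : 0 ≤ M * |z| ^ (1 - θ) := by positivity
    linarith
  · have hwp : 0 < |w| := by linarith
    refine (h.diffB1 h0 h1 (abs_pos.1 hwp) hc).trans ?_
    rw [zpow_split hz]
    gcongr ?_ * (?_ * ?_)
    exact Real.rpow_le_rpow_of_nonpos hzp (by linarith) (by linarith)

lemma Ctrl.diffB (h0 : 0 < θ) (h1 : θ < 1) (h : Ctrl θ M K Kd Kdd) {w z : ℝ} (hw : w ≠ 0)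
    (hz : z ≠ 0) : |K w - K (w - z)| ≤ 10 * M * (|z| * |w| ^ (-θ)) := by
  have hM := h.M_nonneg
  have hzp : 0 < |z| := abs_pos.2 hz
  have hwp : 0 < |w| := abs_pos.2 hw
  rcases le_total (|w| / 2) |z| with hc | hc
  · refine (h.diffA1 h0 h1 hc).trans ?_
    rw [zpow_split hz]
    have : |z| ^ (-θ) ≤ 2 * |w| ^ (-θ) := by
      calc |z| ^ (-θ) ≤ (|w| / 2) ^ (-θ) :=
            Real.rpow_le_rpow_of_nonpos (by positivity) hc (by linarith)
        _ = 2 ^ θ * |w| ^ (-θ) := by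
          rw [Real.div_rpow hwp.le (by norm_num), Real.rpow_neg (by norm_num : (0:ℝ) ≤ 2)]
          field_simp
        _ ≤ 2 * |w| ^ (-θ) := by
          gcongr
          calc (2:ℝ) ^ θ ≤ 2 ^ (1:ℝ) := Real.rpow_le_rpow_of_exponent_le (by norm_num) h1.le
            _ = 2 := Real.rpow_one 2
    calc 5 * M * (|z| * |z| ^ (-θ)) ≤ 5 * M * (|z| * (2 * |w| ^ (-θ))) := by gcongr
      _ = _ := by ring
  · exact h.diffB1 h0 h1 hw hc

lemma Ctrl.diffD (h0 : 0 < θ) (h1 : θ < 1) (h : Ctrl θ M K Kd Kdd) {w z : ℝ} (hw : w ≠ 0)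
    (hz : z ≠ 0) : (K w - K (w - z)) ^ 2 ≤ 100 * M ^ 2 * (z ^ 2 * |z| ^ (-θ) * |w| ^ (-θ)) := by
  have hM := h.M_nonneg
  have a := h.diffA h0 h1 (w := w) hz
  have b := h.diffB h0 h1 hw hz
  rw [zpow_split hz] at a
  rw [← sq_abs, ← sq_abs z, sq]
  calc _ ≤ (10 * M * (|z| * |z| ^ (-θ))) * (10 * M * (|z| * |w| ^ (-θ))) :=
        mul_le_mul a b (abs_nonneg _) (by positivity)
    _ = _ := by ring

lemma Ctrl.box_small (h0 : 0 < θ) (h1 : θ < 1) (h : Ctrl θ M K Kd Kdd) {u v : ℝ}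
    (hu : |u| ≤ 1 / 4) (hv : |v| ≤ 1 / 4) : |boxOp K 1 u v| ≤ 4 * M * (|u| * |v|) := by
  have hM := h.M_nonneg
  obtain ⟨-, hK, hK1, -, hK2⟩ := h
  rw [abs_le] at hu hv
  have hd : ∀ x ∈ Set.Icc (3 / 4 : ℝ) (5 / 4), |Kd x - Kd (x - v)| ≤ 4 * M * |v| := by
    intro x hx
    have b := (convex_Icc (1 / 2 : ℝ) (3 / 2)).norm_image_sub_le_of_norm_hasDerivWithin_le
      (f := Kd) (f' := Kdd) (C := 4 * M) (x := x - v) (y := x) ?_ ?_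
      (by constructor <;> linarith [hx.1, hx.2]) (by constructor <;> linarith [hx.1, hx.2])
    · simpa only [Real.norm_eq_abs, sub_sub_cancel] using b
    · intro y hy
      exact (hK1 y (by linarith [hy.1] : (0:ℝ) < y).ne').hasDerivWithinAt
    · intro y hy
      have hy0 : 0 < y := by linarith [hy.1]
      refine (hK2 y hy0.ne').trans ?_
      rw [mul_comm]
      apply mul_le_mul_of_nonneg_right _ hM
      rw [abs_of_pos hy0]
      calc y ^ (-1 - θ) ≤ (1 / 2 : ℝ) ^ (-1 - θ) :=
            Real.rpow_le_rpow_of_nonpos (by norm_num) hy.1 (by linarith)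
        _ ≤ (1 / 2 : ℝ) ^ (-2 : ℝ) :=
            Real.rpow_le_rpow_of_exponent_ge (by norm_num) (by norm_num) (by linarith)
        _ = 4 := by rw [Real.rpow_neg (by norm_num)]; norm_num
  have b := (convex_Icc (3 / 4 : ℝ) (5 / 4)).norm_image_sub_le_of_norm_hasDerivWithin_le
      (f := fun x => K x - K (x - v)) (f' := fun x => Kd x - Kd (x - v)) (C := 4 * M * |v|)
      (x := 1 - u) (y := 1) ?_ hd
      (by constructor <;> linarith) (by constructor <;> linarith)
  · simp only [Real.norm_eq_abs, sub_sub_cancel] at b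
    have e : boxOp K 1 u v = K 1 - K (1 - v) - (K (1 - u) - K (1 - u - v)) := by
      unfold boxOp; ring
    rw [e]
    linarith
  · intro x hx
    have p1 := hK x (by linarith [hx.1] : (0:ℝ) < x).ne'
    have p2 := hK (x - v) (by linarith [hx.1] : (0:ℝ) < x - v).ne'
    exact (p1.sub (p2.comp_sub_const x v)).hasDerivWithinAt

lemma boxOp_comm (K : ℝ → ℝ) (a u v : ℝ) : boxOp K a u v = boxOp K a v u := by
  unfold boxOp
  rw [show a - u - v = a - v - u by ring]
  ring

lemma Ctrl.box_mid (h0 : 0 < θ) (h1 : θ < 1) (h : Ctrl θ M K Kd Kdd) {u v : ℝ}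
    (hu : 1 / 4 < |u|) (hu1 : u ≠ 1) (hv0 : v ≠ 0) (hv : |v| ≤ 1 / 4) :
    (boxOp K 1 u v) ^ 2 ≤ 1000000 * M ^ 2 * (u ^ 2 * v ^ 2 * (phi θ u * phi θ v)) := by
  have d1 := h.diffD h0 h1 (one_ne_zero) hv0
  have d2 := h.diffD h0 h1 (sub_ne_zero.2 hu1.symm) hv0
  rw [abs_one, Real.one_rpow] at d1
  have e : boxOp K 1 u v = K 1 - K (1 - v) - (K (1 - u) - K (1 - u - v)) := by
    unfold boxOp; ring
  rw [e]
  have m := phi_mid h0 h1 hu hu1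
  have s := phi_small θ hv0 (by linarith)
  have pu := phi_nonneg θ u
  have pv := phi_nonneg θ v
  calc _ ≤ 2 * (K 1 - K (1 - v)) ^ 2 + 2 * (K (1 - u) - K (1 - u - v)) ^ 2 := by
        nlinarith [sq_nonneg ((K 1 - K (1 - v)) + (K (1 - u) - K (1 - u - v)))]
    _ ≤ 200 * M ^ 2 * v ^ 2 * (|v| ^ (-θ) * (1 + |1 - u| ^ (-θ))) := by linarith
    _ ≤ 200 * M ^ 2 * v ^ 2 * (phi θ v * (216 * (u ^ 2 * phi θ u))) := by gcongr
    _ ≤ _ := by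
      have : 0 ≤ M ^ 2 * (u ^ 2 * v ^ 2 * (phi θ u * phi θ v)) := by positivity
      nlinarith

lemma Ctrl.box (h0 : 0 < θ) (h1 : θ < 1) (h : Ctrl θ M K Kd Kdd) {u v : ℝ}
    (hu0 : u ≠ 0) (hv0 : v ≠ 0) (hu1 : u ≠ 1) (hv1 : v ≠ 1) :
    (boxOp K 1 u v) ^ 2 ≤ 1000000 * M ^ 2 * (u ^ 2 * v ^ 2 * (phi θ u * phi θ v)) := by
  have hM := h.M_nonneg
  have pu := phi_nonneg θ u
  have pv := phi_nonneg θ v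
  have nn : 0 ≤ M ^ 2 * (u ^ 2 * v ^ 2 * (phi θ u * phi θ v)) := by positivity
  rcases le_or_gt |u| (1 / 4) with hu | hu <;> rcases le_or_gt |v| (1 / 4) with hv | hv
  · have b := h.box_small h0 h1 hu hv
    have su : 1 ≤ phi θ u := le_trans
      (Real.one_le_rpow_of_pos_of_le_one_of_nonpos (abs_pos.2 hu0) (by linarith) (by linarith))
      (phi_small θ hu0 (by linarith))
    have sv : 1 ≤ phi θ v := le_trans
      (Real.one_le_rpow_of_pos_of_le_one_of_nonpos (abs_pos.2 hv0) (by linarith) (by linarith))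
      (phi_small θ hv0 (by linarith))
    rw [← sq_abs]
    calc _ ≤ (4 * M * (|u| * |v|)) ^ 2 := by gcongr
      _ = 16 * M ^ 2 * (u ^ 2 * v ^ 2 * (1 * 1)) := by
        rw [mul_pow, mul_pow, mul_pow, sq_abs, sq_abs]; ring
      _ ≤ 16 * M ^ 2 * (u ^ 2 * v ^ 2 * (phi θ u * phi θ v)) := by gcongr
      _ ≤ _ := by linarith
  · rw [boxOp_comm]
    have := h.box_mid h0 h1 hv hv1 hu0 hu
    linarith
  · exact h.box_mid h0 h1 hu hu1 hv0 hv
  · have e1 : boxOp K 1 u v = (K 1 - K (1 - v)) - (K (1 - u) - K (1 - u - v)) := by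
      unfold boxOp; ring
    have e2 : boxOp K 1 u v = (K 1 - K (1 - u)) - (K (1 - v) - K (1 - v - u)) := by
      rw [boxOp_comm]; unfold boxOp; ring
    have b1 : |boxOp K 1 u v| ≤ 20 * M * |v| ^ (1 - θ) := by
      rw [e1]
      have := abs_sub (K 1 - K (1 - v)) (K (1 - u) - K (1 - u - v))
      have := h.diffA h0 h1 (w := 1) hv0
      have := h.diffA h0 h1 (w := 1 - u) hv0
      linarith
    have b2 : |boxOp K 1 u v| ≤ 20 * M * |u| ^ (1 - θ) := by
      rw [e2]
      have := abs_sub (K 1 - K (1 - u)) (K (1 - v) - K (1 - v - u))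
      have := h.diffA h0 h1 (w := 1) hu0
      have := h.diffA h0 h1 (w := 1 - v) hu0
      linarith
    have pw : ∀ t : ℝ, 1 / 4 < |t| → |t| ^ (1 - θ) ≤ 25 * (t ^ 2 * phi θ t) := by
      intro t ht
      have hp : 0 < |t| := by linarith
      have h := phi_large h0 h1 ht
      have e : |t| ^ (-1 - θ) * t ^ 2 = |t| ^ (1 - θ) := by
        rw [← sq_abs t, ← Real.rpow_natCast, ← Real.rpow_add hp]
        congr 1; push_cast; ring
      have := mul_le_mul_of_nonneg_right h (sq_nonneg t)
      linarith
    rw [← sq_abs, sq]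
    calc _ ≤ (20 * M * |v| ^ (1 - θ)) * (20 * M * |u| ^ (1 - θ)) :=
          mul_le_mul b1 b2 (abs_nonneg _) (by positivity)
      _ ≤ (20 * M * (25 * (v ^ 2 * phi θ v))) * (20 * M * (25 * (u ^ 2 * phi θ u))) := by
          gcongr
          · exact pw v hv
          · exact pw u hu
      _ ≤ _ := by linarith

lemma Ctrl.scale {a : ℝ} (ha : a ≠ 0) (h : Ctrl θ M K Kd Kdd) :
    Ctrl θ (M * |a| ^ (1 - θ)) (fun x => K (a * x)) (fun x => a * Kd (a * x))
      (fun x => a * (a * Kdd (a * x))) := by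
  have hap : 0 < |a| := abs_pos.2 ha
  obtain ⟨h1, h2, h3, h4, h5⟩ := h
  have lin : ∀ x, HasDerivAt (fun x : ℝ => a * x) a x := fun x => by
    simpa using (hasDerivAt_id x).const_mul a
  refine ⟨fun x => ?_, fun x hx => ?_, fun x hx => ?_, fun x hx => ?_, fun x hx => ?_⟩
  · have := h1 (a * x)
    rw [abs_mul, Real.mul_rpow hap.le (abs_nonneg _)] at this
    linarith
  · have := (h2 (a * x) (mul_ne_zero ha hx)).comp x (lin x)
    rw [mul_comm] at this
    exact this
  · have := ((h3 (a * x) (mul_ne_zero ha hx)).comp x (lin x)).const_mul a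
    rw [mul_comm (Kdd _)] at this
    exact this
  · have := h4 (a * x) (mul_ne_zero ha hx)
    rw [abs_mul a x, Real.mul_rpow hap.le (abs_nonneg _)] at this
    rw [abs_mul, zpow_split ha]
    calc _ ≤ |a| * (M * (|a| ^ (-θ) * |x| ^ (-θ))) := by gcongr
      _ = _ := by ring
  · have := h5 (a * x) (mul_ne_zero ha hx)
    rw [abs_mul a x, Real.mul_rpow hap.le (abs_nonneg _)] at this
    have e : |a| ^ (1 - θ) = |a| * (|a| * |a| ^ (-1 - θ)) := by
      rw [show (1 - θ) = 1 + (1 + (-1 - θ)) by ring, Real.rpow_add hap, Real.rpow_add hap,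
        Real.rpow_one]
    rw [abs_mul, abs_mul, e]
    calc _ ≤ |a| * (|a| * (M * (|a| ^ (-1 - θ) * |x| ^ (-1 - θ)))) := by gcongr
      _ = _ := by ring

end kernel

lemma singNorm_nonneg (ζ : ℝ) (m : ℕ) (K : ℝ → ℝ) : 0 ≤ singNorm ζ m K := by
  apply Real.sSup_nonneg
  rintro r ⟨k, x, -, -, rfl⟩
  positivity

lemma ctrl_of {θ : ℝ} (h1 : θ < 1) {H : ℝ → ℝ} (hc : Continuous H)
    (hd : ContDiffOn ℝ 2 H {(0 : ℝ)}ᶜ) (hb : BddAbove (singSet (1 - θ) 2 H)) :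
    Ctrl θ (singNorm (1 - θ) 2 H) H (deriv H) (deriv (deriv H)) := by
  have key : ∀ k : ℕ, k ≤ 2 → ∀ x : ℝ, x ≠ 0 →
      |iteratedDeriv k H x| ≤ singNorm (1 - θ) 2 H * |x| ^ (1 - θ - k) := by
    intro k hk x hx
    have hxp : 0 < |x| := abs_pos.2 hx
    have : |x| ^ ((k : ℝ) - (1 - θ)) * |iteratedDeriv k H x| ≤ singNorm (1 - θ) 2 H :=
      le_csSup hb ⟨k, x, hk, hx, rfl⟩
    rw [show (1 - θ - k : ℝ) = -(k - (1 - θ)) by ring, Real.rpow_neg hxp.le,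
      ← div_eq_mul_inv, le_div_iff₀ (by positivity)]
    linarith
  have ho : IsOpen ({(0 : ℝ)}ᶜ : Set ℝ) := isOpen_compl_singleton
  have hdd := (contDiffOn_succ_iff_deriv_of_isOpen (n := 1) ho).1
    (by simpa [one_add_one_eq_two] using hd)
  refine ⟨?_, fun x hx => ?_, fun x hx => ?_, fun x hx => ?_, fun x hx => ?_⟩
  · have hz : ∀ x : ℝ, x ∈ ({(0 : ℝ)}ᶜ : Set ℝ) → |H x| ≤ singNorm (1 - θ) 2 H * |x| ^ (1 - θ) := by
      intro x hx
      have := key 0 (by norm_num) x hx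
      simpa using this
    have hcl : IsClosed {x : ℝ | |H x| ≤ singNorm (1 - θ) 2 H * |x| ^ (1 - θ)} := by
      apply isClosed_le (by fun_prop)
      apply continuous_const.mul
      exact continuous_abs.rpow_const (fun x => Or.inr (by linarith))
    have hdn : Dense ({(0 : ℝ)}ᶜ : Set ℝ) := dense_compl_singleton 0
    intro x
    exact (hcl.closure_subset_iff.2 hz) (hdn x)
  · exact ((hdd.1 x hx).differentiableAt (ho.mem_nhds hx)).hasDerivAt
  · exact (((hdd.2.2.differentiableOn (by norm_num)) x hx).differentiableAt
      (ho.mem_nhds hx)).hasDerivAt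
  · have := key 1 (by norm_num) x hx
    rw [iteratedDeriv_one] at this
    convert this using 3
    push_cast; ring
  · have := key 2 (by norm_num) x hx
    rw [show (2:ℕ) = 1 + 1 from rfl, iteratedDeriv_succ, iteratedDeriv_one] at this
    convert this using 3
    push_cast; ring

lemma pointwise_bound {θ : ℝ} (h0 : 0 < θ) (h1 : θ < 1) {M₁ M₂ : ℝ}
    {H₁ HA1 HA2 H₂ HB1 HB2 : ℝ → ℝ} (c1 : Ctrl θ M₁ H₁ HA1 HA2) (c2 : Ctrl θ M₂ H₂ HB1 HB2)
    {a y z : ℝ} (ha : a ≠ 0) (hy : y ≠ a) (hz : z ≠ a) :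
    |boxOp H₁ a y z * boxOp H₂ a y z| / (y ^ 2 * z ^ 2) ≤
      (1000000 * M₁ * M₂ * |a| ^ (-(2 * θ)) * (a ^ 2)⁻¹) * (phi θ (y / a) * phi θ (z / a)) := by
  have hM1 := c1.M_nonneg
  have hM2 := c2.M_nonneg
  have pu := phi_nonneg θ (y / a)
  have pv := phi_nonneg θ (z / a)
  have hap : 0 < |a| := abs_pos.2 ha
  by_cases hy0 : y = 0
  · rw [show y ^ 2 * z ^ 2 = 0 by rw [hy0]; ring, div_zero]
    positivity
  by_cases hz0 : z = 0
  · rw [show y ^ 2 * z ^ 2 = 0 by rw [hz0]; ring, div_zero]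
    positivity
  have e : ∀ H : ℝ → ℝ, boxOp (fun x => H (a * x)) 1 (y / a) (z / a) = boxOp H a y z := by
    intro H
    unfold boxOp
    simp only [mul_sub, mul_one, mul_div_cancel₀ _ ha]
  have b1 := (c1.scale ha).box h0 h1 (div_ne_zero hy0 ha) (div_ne_zero hz0 ha)
    (by rwa [ne_eq, div_eq_one_iff_eq ha]) (by rwa [ne_eq, div_eq_one_iff_eq ha])
  have b2 := (c2.scale ha).box h0 h1 (div_ne_zero hy0 ha) (div_ne_zero hz0 ha)
    (by rwa [ne_eq, div_eq_one_iff_eq ha]) (by rwa [ne_eq, div_eq_one_iff_eq ha])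
  rw [e] at b1 b2
  set X := (y / a) ^ 2 * (z / a) ^ 2 * (phi θ (y / a) * phi θ (z / a)) with hX
  have hXn : 0 ≤ X := by positivity
  set A := |a| ^ (1 - θ) with hA
  have hAn : 0 ≤ A := by positivity
  have b3 : |boxOp H₁ a y z * boxOp H₂ a y z| ≤ 1000000 * (M₁ * A) * (M₂ * A) * X := by
    apply abs_le_of_sq_le_sq _ (by positivity)
    rw [mul_pow]
    calc _ ≤ (1000000 * (M₁ * A) ^ 2 * X) * (1000000 * (M₂ * A) ^ 2 * X) :=
          mul_le_mul b1 b2 (sq_nonneg _) (by positivity)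
      _ = _ := by ring
  have hA2 : A * A = |a| ^ (-(2 * θ)) * a ^ 2 := by
    rw [hA, ← sq_abs a, ← Real.rpow_natCast, ← Real.rpow_add hap, ← Real.rpow_add hap]
    congr 1; push_cast; ring
  have hyz : 0 < y ^ 2 * z ^ 2 := by positivity
  rw [div_le_iff₀ hyz]
  refine b3.trans (le_of_eq ?_)
  calc 1000000 * (M₁ * A) * (M₂ * A) * X = 1000000 * M₁ * M₂ * (A * A) * X := by ring
    _ = _ := by
      rw [hA2, hX]
      field_simp

/-- For `θ ∈ (0,1)` there is `C < ∞` such that for all continuous `H₁, H₂`, twice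
continuously differentiable away from `0` with finite `‖·‖_{1-θ;2}` norms, and all
`α ≠ 0`, `∬ |□H₁(α;y,z) □H₂(α;y,z)| / (y² z²) dy dz ≤ C ‖H₁‖ ‖H₂‖ |α|^(-2θ)`. -/
theorem boxOp_double_integral_bound (θ : ℝ) (hθ : θ ∈ Set.Ioo (0 : ℝ) 1) :
    ∃ C : ℝ, ∀ H₁ H₂ : ℝ → ℝ, Continuous H₁ → Continuous H₂ →
      ContDiffOn ℝ 2 H₁ {(0 : ℝ)}ᶜ → ContDiffOn ℝ 2 H₂ {(0 : ℝ)}ᶜ →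
      BddAbove (singSet (1 - θ) 2 H₁) → BddAbove (singSet (1 - θ) 2 H₂) →
      ∀ α : ℝ, α ≠ 0 →
        ∫⁻ p : ℝ × ℝ,
            ENNReal.ofReal
              (|boxOp H₁ α p.1 p.2 * boxOp H₂ α p.1 p.2| / (p.1 ^ 2 * p.2 ^ 2))
          ≤ ENNReal.ofReal
              (C * singNorm (1 - θ) 2 H₁ * singNorm (1 - θ) 2 H₂ * |α| ^ (-(2 * θ))) := by
  obtain ⟨h0, h1⟩ := hθ
  refine ⟨1000000 * (∫ t, phi θ t) ^ 2, ?_⟩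
  intro H₁ H₂ hc1 hc2 hd1 hd2 hb1 hb2 a ha
  have c1 := ctrl_of h1 hc1 hd1 hb1
  have c2 := ctrl_of h1 hc2 hd2 hb2
  have n1 := singNorm_nonneg (1 - θ) 2 H₁
  have n2 := singNorm_nonneg (1 - θ) 2 H₂
  set M₁ := singNorm (1 - θ) 2 H₁
  set M₂ := singNorm (1 - θ) 2 H₂
  set B := 1000000 * M₁ * M₂ * |a| ^ (-(2 * θ)) * (a ^ 2)⁻¹ with hB
  have hBn : 0 ≤ B := by positivity
  have hne : ∀ᵐ x : ℝ, x ≠ a := by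
    simp [ae_iff]
  have hint : Integrable (fun t => phi θ (t / a)) := (phi_integrable h0 h1).comp_div ha
  have hm : AEMeasurable (fun t => ENNReal.ofReal (phi θ (t / a))) :=
    hint.aestronglyMeasurable.aemeasurable.ennreal_ofReal
  have hI : ∫⁻ t, ENNReal.ofReal (phi θ (t / a)) = ENNReal.ofReal (|a| * ∫ t, phi θ t) := by
    rw [← ofReal_integral_eq_lintegral_ofReal hint
      (Filter.Eventually.of_forall fun t => phi_nonneg θ _), Measure.integral_comp_div]
    simp
  have hIn : 0 ≤ ∫ t, phi θ t := integral_nonneg fun t => phi_nonneg θ t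
  calc _ ≤ ∫⁻ p : ℝ × ℝ, ENNReal.ofReal B *
        (ENNReal.ofReal (phi θ (p.1 / a)) * ENNReal.ofReal (phi θ (p.2 / a))) := by
        apply lintegral_mono_ae
        have q1 : ∀ᵐ p : ℝ × ℝ, p.1 ≠ a := Measure.quasiMeasurePreserving_fst.ae hne
        have q2 : ∀ᵐ p : ℝ × ℝ, p.2 ≠ a := Measure.quasiMeasurePreserving_snd.ae hne
        filter_upwards [q1, q2] with p hp1 hp2
        rw [← ENNReal.ofReal_mul (phi_nonneg _ _), ← ENNReal.ofReal_mul hBn]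
        exact ENNReal.ofReal_le_ofReal (pointwise_bound h0 h1 c1 c2 ha hp1 hp2)
    _ = ENNReal.ofReal B *
        (ENNReal.ofReal (|a| * ∫ t, phi θ t) * ENNReal.ofReal (|a| * ∫ t, phi θ t)) := by
        rw [lintegral_const_mul' _ _ ENNReal.ofReal_ne_top, Measure.volume_eq_prod,
          lintegral_prod_mul hm hm, hI]
    _ = _ := by
        rw [← ENNReal.ofReal_mul (by positivity), ← ENNReal.ofReal_mul hBn]
        congr 1
        have : a ^ 2 ≠ 0 := pow_ne_zero 2 ha
        calc _ = B * (|a| ^ 2 * (∫ t, phi θ t) ^ 2) := by ring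
          _ = _ := by
            rw [sq_abs, hB]
            field_simp
end

section
/- Let α ∈ (−1,0) and let G: ℝ∖{0} → ℝ be any even function, infinitely differentiable on ℝ∖{0}, vanishing outside [−1,1], with G(x) = (1/π)log|x| for all 0 < |x| ≤ 1/2. Then there is a constant C < ∞ (depending only on α and G) such that for every bounded continuous f: ℝ → ℝ with N_α(f) < ∞, the convolution G∗f(x) = ∫_ℝ G(x−y) f(y) dy is well-defined for every x and ‖G∗f‖_{C^{α+1}} ≤ C N_α(f). -/
open MeasureTheory

/-- A test function: `C¹`, supported in `[-1,1]`, with `sup |η| ≤ 1`. -/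
def IsTestFn (η : ℝ → ℝ) : Prop :=
  ContDiff ℝ 1 η ∧ (∀ y, y ∉ Set.Icc (-1 : ℝ) 1 → η y = 0) ∧ ∀ y, |η y| ≤ 1

/-- The set whose supremum is the `C^α` distributional norm `N_α(f)`:
values `λ^(-α) |∫ f(y) λ⁻¹ η(λ⁻¹(y-x)) dy|` over centers `x`, scales `λ ∈ (0,1]`,
and test functions `η`. -/
noncomputable def distSet (α : ℝ) (f : ℝ → ℝ) : Set ℝ :=
  {r | ∃ (x l : ℝ) (η : ℝ → ℝ), 0 < l ∧ l ≤ 1 ∧ IsTestFn η ∧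
    r = l ^ (-α) * |∫ y : ℝ, f y * (l⁻¹ * η (l⁻¹ * (y - x)))|}

/-- The `C^α`-Hölder norm of `f` as a distribution. -/
noncomputable def distNorm (α : ℝ) (f : ℝ → ℝ) : ℝ := sSup (distSet α f)


/-- log-difference estimate via the layer-cake formula -/
lemma gfs_layer (β : ℝ) (h0 : 0 < β) (h1 : β < 1) :
    ∃ C : ℝ, 0 ≤ C ∧ ∀ (ν : Measure ℝ) (A : ℝ), 0 ≤ A →
      (∀ z r : ℝ, 0 < r → ν (Metric.closedBall z r) ≤ ENNReal.ofReal (A * r ^ β)) →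
      ∀ a b : ℝ, a ≠ b →
        ∫⁻ y, ENNReal.ofReal (|Real.log |a - y| - (Real.log |b - y|)|) ∂ν
          ≤ ENNReal.ofReal (C * A * |a - b| ^ β) := by
  have hint : IntegrableOn (fun t : ℝ => t ^ (-β) * Real.exp (-(β / 2) * t)) (Set.Ioi 0) := by
    have := integrableOn_rpow_mul_exp_neg_mul_rpow (p := 1) (s := -β) (b := β / 2)
      (by linarith) (by norm_num) (by linarith)
    simpa using this
  refine ⟨2 * ∫ t in Set.Ioi (0 : ℝ), t ^ (-β) * Real.exp (-(β / 2) * t), ?_, ?_⟩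
  · refine mul_nonneg (by norm_num) (setIntegral_nonneg measurableSet_Ioi fun t ht => ?_)
    have ht : 0 < t := ht
    positivity
  intro ν A hA hν a b hab
  have hpos : 0 < |a - b| := abs_pos.mpr (sub_ne_zero.mpr hab)
  rw [lintegral_eq_lintegral_meas_lt ν (Filter.Eventually.of_forall fun y => abs_nonneg _)
    (by fun_prop)]
  -- one-sided inclusion
  have key : ∀ u v t : ℝ, 0 < t → u ≠ 0 → v ≠ 0 → |u - v| = |a - b| →
      t < Real.log |u| - Real.log |v| → |v| ≤ |a - b| * (t⁻¹ * Real.exp (-t / 2)) := by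
    intro u v t ht hu hv huv hlt
    have hu' : 0 < |u| := abs_pos.mpr hu
    have hv' : 0 < |v| := abs_pos.mpr hv
    rw [← Real.log_div hu'.ne' hv'.ne', Real.lt_log_iff_exp_lt (by positivity),
      lt_div_iff₀ hv'] at hlt
    have h3 : |u| ≤ |v| + |a - b| := by
      rw [← huv]; have := abs_add_le v (u - v); simpa using this
    have h4 : t * Real.exp (t / 2) ≤ Real.exp t - 1 := by
      have hs : t / 2 ≤ Real.sinh (t / 2) := Real.self_le_sinh_iff.mpr (by linarith)
      rw [Real.sinh_eq] at hs
      have e1 : Real.exp t = Real.exp (t / 2) * Real.exp (t / 2) := by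
        rw [← Real.exp_add]; ring_nf
      have e2 : Real.exp (t / 2) * Real.exp (-(t / 2)) = 1 := by
        rw [← Real.exp_add]; simp
      have := mul_le_mul_of_nonneg_left hs (Real.exp_pos (t / 2)).le
      nlinarith
    have h5 : |v| * (t * Real.exp (t / 2)) ≤ |a - b| := by nlinarith
    have e3 : t⁻¹ * Real.exp (-t / 2) = (t * Real.exp (t / 2))⁻¹ := by
      rw [mul_inv, ← Real.exp_neg]; ring_nf
    rw [e3, ← div_eq_mul_inv, le_div_iff₀ (by positivity)]
    exact h5
  have hset : ∀ t ∈ Set.Ioi (0 : ℝ),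
      ν {y | t < |Real.log |a - y| - (Real.log |b - y|)|} ≤
        ENNReal.ofReal (2 * A * |a - b| ^ β * (t ^ (-β) * Real.exp (-(β / 2) * t))) := by
    intro t ht
    have ht : 0 < t := ht
    set r := |a - b| * (t⁻¹ * Real.exp (-t / 2)) with hr
    have hrpos : 0 < r := by positivity
    have hsub : {y | t < |Real.log |a - y| - (Real.log |b - y|)|} ⊆
        Metric.closedBall a r ∪ Metric.closedBall b r := by
      intro y hy
      simp only [Set.mem_ofPred_eq] at hy
      simp only [Set.mem_union, Metric.mem_closedBall, Real.dist_eq]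
      by_cases hya : y = a
      · left; subst hya; simpa using hrpos.le
      by_cases hyb : y = b
      · right; subst hyb; simpa using hrpos.le
      have ha : a - y ≠ 0 := sub_ne_zero.mpr (Ne.symm hya)
      have hb : b - y ≠ 0 := sub_ne_zero.mpr (Ne.symm hyb)
      rcases lt_abs.mp hy with h | h
      · right; rw [abs_sub_comm]
        exact key _ _ t ht ha hb (by congr 1; ring) h
      · left; rw [abs_sub_comm]
        exact key _ _ t ht hb ha (by rw [abs_sub_comm]; congr 1; ring) (by linarith)
    have hrβ : r ^ β = |a - b| ^ β * (t ^ (-β) * Real.exp (-(β / 2) * t)) := by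
      rw [hr, Real.mul_rpow (by positivity) (by positivity),
        Real.mul_rpow (by positivity) (by positivity), Real.inv_rpow ht.le, Real.rpow_neg ht.le,
        ← Real.exp_mul]
      ring_nf
    calc _ ≤ ν (Metric.closedBall a r ∪ Metric.closedBall b r) := measure_mono hsub
      _ ≤ _ := measure_union_le _ _
      _ ≤ ENNReal.ofReal (A * r ^ β) + ENNReal.ofReal (A * r ^ β) :=
          add_le_add (hν _ _ hrpos) (hν _ _ hrpos)
      _ = _ := by
          rw [← ENNReal.ofReal_add (by positivity) (by positivity), hrβ]
          congr 1; ring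
  refine (setLIntegral_mono' measurableSet_Ioi hset).trans ?_
  rw [← ofReal_integral_eq_lintegral_ofReal (hint.const_mul _)]
  · rw [integral_const_mul]
    apply ENNReal.ofReal_le_ofReal
    apply le_of_eq; ring
  · refine (ae_restrict_mem measurableSet_Ioi).mono fun t ht => ?_
    have ht : 0 < t := ht
    show 0 ≤ _
    positivity

lemma gfs_nonneg (α : ℝ) (f : ℝ → ℝ) (hb : BddAbove (distSet α f)) : 0 ≤ distNorm α f := by
  apply le_csSup hb
  refine ⟨0, 1, fun _ => 0, one_pos, le_rfl, ⟨contDiff_const, by simp, by simp⟩, by simp⟩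

/-- bound for unnormalised test functions -/
lemma gfs_test (α : ℝ) (f : ℝ → ℝ) (hb : BddAbove (distSet α f)) (x l : ℝ) (hl : 0 < l)
    (hl1 : l ≤ 1) (η : ℝ → ℝ) (hη : IsTestFn η) :
    |∫ y, f y * η (l⁻¹ * (y - x))| ≤ distNorm α f * l ^ (α + 1) := by
  have h : l ^ (-α) * |∫ y : ℝ, f y * (l⁻¹ * η (l⁻¹ * (y - x)))| ≤ distNorm α f :=
    le_csSup hb ⟨x, l, η, hl, hl1, hη, rfl⟩
  have e : ∫ y : ℝ, f y * (l⁻¹ * η (l⁻¹ * (y - x))) = l⁻¹ * ∫ y, f y * η (l⁻¹ * (y - x)) := by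
    rw [← integral_const_mul]; congr 1; ext y; ring
  rw [e, abs_mul, abs_of_pos (inv_pos.mpr hl), ← mul_assoc] at h
  have e2 : l ^ (-α) * l⁻¹ = (l ^ (α + 1))⁻¹ := by
    rw [← Real.rpow_neg_one l, ← Real.rpow_add hl, ← Real.rpow_neg hl.le]; ring_nf
  rw [e2, inv_mul_le_iff₀ (by positivity)] at h
  linarith

lemma gfs_morrey (α : ℝ) (f : ℝ → ℝ) (hf : Continuous f) (M : ℝ) (hM : ∀ x, |f x| ≤ M)
    (hb : BddAbove (distSet α f)) (x r : ℝ) (hr : 0 < r) (hr1 : r ≤ 1 / 2) :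
    ∫ y in Metric.closedBall x r, |f y| ≤ distNorm α f * (2 * r) ^ (α + 1) := by
  have hM0 : 0 ≤ M := (abs_nonneg _).trans (hM 0)
  set N := distNorm α f * (2 * r) ^ (α + 1) with hN
  set l := 2 * r with hl
  have hl0 : 0 < l := by linarith
  let χ : ContDiffBump (0 : ℝ) := ⟨1 / 2, 1, by norm_num, by norm_num⟩
  let w : ℝ → ℝ := fun y => χ (l⁻¹ * (y - x))
  have hw0 : ∀ y, 0 ≤ w y := fun y => χ.nonneg
  have hw1 : ∀ y, w y ≤ 1 := fun y => χ.le_one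
  have hwc : Continuous w := by
    have : Continuous (χ : ℝ → ℝ) := χ.continuous
    exact this.comp (by fun_prop)
  have hwsupp : ∀ y, y ∉ Set.Icc (x - l) (x + l) → w y = 0 := by
    intro y hy
    apply χ.zero_of_le_dist
    show (1 : ℝ) ≤ _
    rw [Real.dist_eq, sub_zero, abs_mul, abs_of_pos (inv_pos.mpr hl0), le_inv_mul_iff₀ hl0]
    by_contra hcon
    push Not at hcon
    rw [mul_one, abs_lt] at hcon
    exact hy ⟨by linarith, by linarith⟩
  have hwcs : HasCompactSupport w := HasCompactSupport.intro isCompact_Icc hwsupp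
  have hw_one : ∀ y ∈ Metric.closedBall x r, w y = 1 := by
    intro y hy
    apply χ.one_of_mem_closedBall
    rw [Metric.mem_closedBall, Real.dist_eq] at *
    rw [sub_zero, abs_mul, abs_of_pos (inv_pos.mpr hl0), inv_mul_le_iff₀ hl0]
    show _ ≤ l * (1 / 2)
    linarith
  have hwf : Integrable (fun y => w y * |f y|) :=
    (hwc.mul hf.abs).integrable_of_hasCompactSupport hwcs.mul_right
  have hwi : Integrable w := hwc.integrable_of_hasCompactSupport hwcs
  have step1 : ∫ y in Metric.closedBall x r, |f y| ≤ ∫ y, w y * |f y| := by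
    rw [setIntegral_congr_fun (g := fun y => w y * |f y|) measurableSet_closedBall
      (fun y hy => by simp only [hw_one y hy, one_mul])]
    exact setIntegral_le_integral hwf
      (Filter.Eventually.of_forall fun y => mul_nonneg (hw0 y) (abs_nonneg _))
  refine step1.trans ?_
  set W := ∫ y, w y
  have main : ∀ ε : ℝ, 0 < ε → ∫ y, w y * |f y| ≤ (1 + ε) * N + ε * ((1 + M) * W) := by
    intro ε hε
    let s : ℝ → ℝ := fun y => f y / (|f y| + ε)
    have hpos : ∀ y, 0 < |f y| + ε := fun y => by positivity
    have hsc : Continuous s := hf.div (by fun_prop) fun y => (hpos y).ne'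
    have hs1 : ∀ y, |s y| ≤ 1 := by
      intro y
      simp only [s]
      rw [abs_div, abs_of_pos (hpos y), div_le_one (hpos y)]; linarith
    have hfs : ∀ y, |f y| - ε ≤ f y * s y := by
      intro y
      simp only [s]
      rw [mul_div_assoc', le_div_iff₀ (hpos y), ← abs_mul_abs_self (f y)]
      nlinarith [abs_nonneg (f y)]
    obtain ⟨p, hp⟩ := exists_polynomial_near_of_continuousOn (x - l) (x + l) s
      hsc.continuousOn ε hε
    let η : ℝ → ℝ := fun u => χ u * (p.eval (x + l * u) / (1 + ε))
    have hηeq : ∀ y, η (l⁻¹ * (y - x)) = w y * (p.eval y / (1 + ε)) := by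
      intro y
      simp only [η, w]
      rw [mul_inv_cancel_left₀ hl0.ne']; congr 3; ring_nf
    have hwη : ∀ y, |w y * (p.eval y / (1 + ε))| ≤ 1 := by
      intro y
      by_cases hy : y ∈ Set.Icc (x - l) (x + l)
      · rw [abs_mul, abs_of_nonneg (hw0 y), abs_div, abs_of_pos (by linarith : 0 < 1 + ε)]
        have h1 : |p.eval y| ≤ 1 + ε := by
          have a1 := hp y hy
          have a2 := abs_add_le (p.eval y - s y) (s y)
          rw [sub_add_cancel] at a2
          linarith [hs1 y]
        have h2 : |p.eval y| / (1 + ε) ≤ 1 := (div_le_one (by linarith)).mpr h1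
        exact mul_le_one₀ (hw1 y) (by positivity) h2
      · rw [hwsupp y hy]; simp
    have hη : IsTestFn η := by
      refine ⟨?_, ?_, ?_⟩
      · have hχ : ContDiff ℝ 1 (χ : ℝ → ℝ) := χ.contDiff
        have hpp : ContDiff ℝ 1 (fun u : ℝ => p.eval (x + l * u)) :=
          by
            simpa [Function.comp_def] using (Polynomial.contDiff_aeval (𝕜 := ℝ) p 1).comp
              (contDiff_const.add (contDiff_const.mul contDiff_id))
        exact hχ.mul (hpp.div_const _)
      · intro u hu
        have := hwsupp (x + l * u) (fun hc => hu ⟨by nlinarith [hc.1], by nlinarith [hc.2]⟩)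
        simp only [w, add_sub_cancel_left, inv_mul_cancel_left₀ hl0.ne'] at this
        simp only [η, this, zero_mul]
      · intro u
        have := hηeq (x + l * u)
        simp only [add_sub_cancel_left, inv_mul_cancel_left₀ hl0.ne'] at this
        rw [this]; exact hwη _
    have hT := gfs_test α f hb x l hl0 (by linarith) η hη
    simp only [hηeq] at hT
    have hT2 : ∫ y, f y * (w y * (p.eval y / (1 + ε))) ≤ N := (le_abs_self _).trans hT
    have hi : Integrable fun y => f y * (w y * (p.eval y / (1 + ε))) :=
      (hf.mul (hwc.mul (by fun_prop))).integrable_of_hasCompactSupport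
        (hwcs.mul_right.mul_left)
    have hle : ∫ y, w y * |f y| ≤
        ∫ y, ((1 + ε) * (f y * (w y * (p.eval y / (1 + ε)))) + ε * (1 + M) * w y) := by
      refine integral_mono hwf ((hi.const_mul _).add (hwi.const_mul _)) fun y => ?_
      simp only
      by_cases hy : y ∈ Set.Icc (x - l) (x + l)
      · have e1 : (1 + ε) * (f y * (w y * (p.eval y / (1 + ε)))) = w y * (f y * p.eval y) := by
          field_simp
        have e2 : f y * s y - M * ε ≤ f y * p.eval y := by
          have : |f y * (s y - p.eval y)| ≤ M * ε := by
            rw [abs_mul]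
            exact mul_le_mul (hM y) (by rw [abs_sub_comm]; exact (hp y hy).le)
              (abs_nonneg _) hM0
          have := le_of_abs_le this
          nlinarith
        have e3 := mul_le_mul_of_nonneg_left
          (show |f y| ≤ f y * p.eval y + ε * (1 + M) by linarith [hfs y]) (hw0 y)
        rw [e1]; linarith
      · rw [hwsupp y hy]; simp
    rw [integral_add (hi.const_mul _) (hwi.const_mul _), integral_const_mul,
      integral_const_mul] at hle
    have := mul_le_mul_of_nonneg_left hT2 (by linarith : 0 ≤ 1 + ε)
    linarith
  have hlim : Filter.Tendsto (fun ε : ℝ => (1 + ε) * N + ε * ((1 + M) * W))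
      (nhdsWithin 0 (Set.Ioi 0)) (nhds ((1 + 0) * N + 0 * ((1 + M) * W))) := by
    apply tendsto_nhdsWithin_of_tendsto_nhds
    apply Continuous.tendsto
    fun_prop
  have := ge_of_tendsto hlim (Filter.eventually_of_mem self_mem_nhdsWithin main)
  simpa using this

lemma gfs_measure (α : ℝ) (h1 : -1 < α) (f : ℝ → ℝ) (hf : Continuous f) (M : ℝ)
    (hM : ∀ x, |f x| ≤ M) (hb : BddAbove (distSet α f)) (x z r : ℝ) (hr : 0 < r) :
    ((volume.restrict (Metric.closedBall x 4)).withDensity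
      (fun y => ENNReal.ofReal |f y|)) (Metric.closedBall z r)
      ≤ ENNReal.ofReal (8 * distNorm α f * 2 ^ (α + 1) * r ^ (α + 1)) := by
  have hN := gfs_nonneg α f hb
  have hball : ∀ z r : ℝ, 0 < r → r ≤ 1 / 2 →
      ∫⁻ y in Metric.closedBall z r, ENNReal.ofReal |f y|
        ≤ ENNReal.ofReal (distNorm α f * (2 * r) ^ (α + 1)) := by
    intro z r hr hr1
    rw [← ofReal_integral_eq_lintegral_ofReal
      (hf.abs.continuousOn.integrableOn_compact (isCompact_closedBall z r))
      (Filter.Eventually.of_forall fun y => abs_nonneg _)]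
    exact ENNReal.ofReal_le_ofReal (gfs_morrey α f hf M hM hb z r hr hr1)
  rw [withDensity_apply _ measurableSet_closedBall, Measure.restrict_restrict
    measurableSet_closedBall]
  have hpow : (8 * distNorm α f * 2 ^ (α + 1) * r ^ (α + 1))
      = 8 * (distNorm α f * (2 * r) ^ (α + 1)) := by
    rw [Real.mul_rpow (by norm_num) hr.le]; ring
  rw [hpow]
  rcases le_or_gt r (1 / 2) with hr1 | hr1
  · calc _ ≤ ∫⁻ y in Metric.closedBall z r, ENNReal.ofReal |f y| :=
          lintegral_mono_set Set.inter_subset_left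
      _ ≤ _ := hball z r hr hr1
      _ ≤ _ := by
          apply ENNReal.ofReal_le_ofReal
          have : 0 ≤ distNorm α f * (2 * r) ^ (α + 1) := by positivity
          linarith
  · have hcov : Metric.closedBall z r ∩ Metric.closedBall x 4 ⊆
        ⋃ k ∈ Finset.range 8, Metric.closedBall (x - 4 + k + 1 / 2) (1 / 2) := by
      rintro y ⟨-, hy⟩
      rw [Metric.mem_closedBall, Real.dist_eq, abs_le] at hy
      simp only [Set.mem_iUnion, Metric.mem_closedBall, Real.dist_eq, Finset.mem_range, abs_le]
      by_contra hc
      push Not at hc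
      have c0 := hc 0 (by norm_num)
      have c1 := hc 1 (by norm_num)
      have c2 := hc 2 (by norm_num)
      have c3 := hc 3 (by norm_num)
      have c4 := hc 4 (by norm_num)
      have c5 := hc 5 (by norm_num)
      have c6 := hc 6 (by norm_num)
      have c7 := hc 7 (by norm_num)
      push_cast at *
      have d0 := c0 (by linarith)
      have d1 := c1 (by linarith)
      have d2 := c2 (by linarith)
      have d3 := c3 (by linarith)
      have d4 := c4 (by linarith)
      have d5 := c5 (by linarith)
      have d6 := c6 (by linarith)
      have d7 := c7 (by linarith)
      linarith
    have h2r : (1 : ℝ) ≤ (2 * r) ^ (α + 1) := Real.one_le_rpow (by linarith) (by linarith)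
    calc _ ≤ ∫⁻ y in ⋃ k ∈ Finset.range 8, Metric.closedBall (x - 4 + k + 1 / 2) (1 / 2),
            ENNReal.ofReal |f y| := lintegral_mono_set hcov
      _ ≤ ∑ k ∈ Finset.range 8, ∫⁻ y in Metric.closedBall (x - 4 + k + 1 / 2) (1 / 2),
            ENNReal.ofReal |f y| := by
          simp only [← withDensity_apply' (fun y => ENNReal.ofReal |f y|)]
          exact measure_biUnion_finset_le _ _
      _ ≤ ∑ k ∈ Finset.range 8, ENNReal.ofReal (distNorm α f * (2 * (1 / 2)) ^ (α + 1)) :=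
          Finset.sum_le_sum fun k _ => hball _ _ (by norm_num) le_rfl
      _ = ENNReal.ofReal (8 * distNorm α f) := by
          rw [Finset.sum_const, ← ENNReal.ofReal_nsmul]; simp
      _ ≤ _ := by
          apply ENNReal.ofReal_le_ofReal
          nlinarith

/-- `G` minus the logarithm is Lipschitz on bounded intervals. -/
lemma gfs_smooth (G : ℝ → ℝ) (hGsmooth : ContDiffOn ℝ (⊤ : ℕ∞) G {(0 : ℝ)}ᶜ)
    (hGlog : ∀ x : ℝ, 0 < |x| → |x| ≤ 1 / 2 → G x = (1 / Real.pi) * Real.log |x|) :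
    ∃ (S : ℝ → ℝ) (L : ℝ), 0 ≤ L ∧ Continuous S ∧
      (∀ z, z ≠ 0 → G z = (1 / Real.pi) * Real.log |z| + S z) ∧
      ∀ u ∈ Set.Icc (-7 : ℝ) 7, ∀ v ∈ Set.Icc (-7 : ℝ) 7, |S u - S v| ≤ L * |u - v| := by
  let S : ℝ → ℝ := fun z => if z = 0 then 0 else G z - (1 / Real.pi) * Real.log |z|
  have hS : ContDiff ℝ 1 S := by
    rw [contDiff_iff_contDiffAt]
    intro z
    by_cases hz : z = 0
    · subst hz
      refine (contDiffAt_const (c := (0 : ℝ))).congr_of_eventuallyEq ?_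
      filter_upwards [Metric.ball_mem_nhds (0 : ℝ) (by norm_num : (0 : ℝ) < 1 / 2)] with y hy
      rw [Metric.mem_ball, Real.dist_eq, sub_zero] at hy
      simp only [S]
      split_ifs with h
      · rfl
      · rw [hGlog y (abs_pos.mpr h) hy.le, sub_self]
    · have hnhds : {(0 : ℝ)}ᶜ ∈ nhds z := isOpen_compl_singleton.mem_nhds hz
      have h1 : ContDiffAt ℝ 1 G z :=
        (hGsmooth.contDiffAt hnhds).of_le (by exact_mod_cast le_top)
      have h2 : ContDiffAt ℝ 1 (fun z => G z - (1 / Real.pi) * Real.log z) z :=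
        h1.sub (contDiffAt_const.mul (Real.contDiffAt_log.mpr hz))
      refine h2.congr_of_eventuallyEq ?_
      filter_upwards [hnhds] with y hy
      have hy : y ≠ 0 := hy
      simp only [S, if_neg hy, Real.log_abs]
  obtain ⟨L, hL⟩ := (isCompact_Icc (a := (-7 : ℝ)) (b := 7)).exists_bound_of_continuousOn
    (hS.continuous_deriv le_rfl).continuousOn
  refine ⟨S, L, (norm_nonneg _).trans (hL 0 (by norm_num)), hS.continuous, ?_, ?_⟩
  · intro z hz
    simp only [S, if_neg hz]; ring
  · intro u hu v hv
    exact (convex_Icc (-7 : ℝ) 7).norm_image_sub_le_of_norm_deriv_le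
      (fun y _ => (hS.differentiable one_ne_zero).differentiableAt) hL hv hu

lemma gfs_core (α : ℝ) (hα : α ∈ Set.Ioo (-1 : ℝ) 0)
    (G : ℝ → ℝ)
    (hGsupp : ∀ x, x ∉ Set.Icc (-1 : ℝ) 1 → G x = 0) (S : ℝ → ℝ) (L : ℝ) (hL : 0 ≤ L)
    (hS : ∀ z, z ≠ 0 → G z = (1 / Real.pi) * Real.log |z| + S z)
    (hSL : ∀ u ∈ Set.Icc (-7 : ℝ) 7, ∀ v ∈ Set.Icc (-7 : ℝ) 7, |S u - S v| ≤ L * |u - v|) :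
    ∃ C : ℝ, 0 ≤ C ∧ ∀ f : ℝ → ℝ, Continuous f → (∃ M, ∀ x, |f x| ≤ M) →
      BddAbove (distSet α f) → ∀ a b : ℝ, a ≠ b → |a - b| ≤ 3 →
      ∫⁻ y, ENNReal.ofReal (|G (a - y) - G (b - y)| * |f y|)
        ≤ ENNReal.ofReal (C * distNorm α f * |a - b| ^ (α + 1)) := by
  obtain ⟨hα1, hα0⟩ := hα
  obtain ⟨C₀, hC₀, hlayer⟩ := gfs_layer (α + 1) (by linarith) (by linarith)
  set β := α + 1 with hβ
  refine ⟨(C₀ + L * 3 * 4 ^ β) * (8 * 2 ^ β), by positivity, ?_⟩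
  rintro f hf ⟨M, hM⟩ hb a b hab h3
  have hN := gfs_nonneg α f hb
  have hν := gfs_measure α hα1 f hf M hM hb a
  rw [← hβ] at hν
  set ν := (volume.restrict (Metric.closedBall a 4)).withDensity
      (fun y => ENNReal.ofReal |f y|) with hνdef
  set A := 8 * distNorm α f * 2 ^ β with hA
  have hA0 : 0 ≤ A := by positivity
  set h := |a - b| with hh
  have hpos : 0 < h := abs_pos.mpr (sub_ne_zero.mpr hab)
  let K : ℝ → ℝ := fun y => |Real.log |a - y| - (Real.log |b - y|)|
  have hKm : Measurable K := by fun_prop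
  have hne : ∀ c : ℝ, ∀ᵐ y : ℝ, c - y ≠ 0 := by
    intro c
    have : ∀ᵐ y : ℝ, y ≠ c := by simp [ae_iff]
    filter_upwards [this] with y hy
    exact sub_ne_zero.mpr (Ne.symm hy)
  have hmeas : Measurable fun y => ENNReal.ofReal (K y) + ENNReal.ofReal (L * h) := by fun_prop
  have hfm : Measurable fun y => ENNReal.ofReal |f y| := by
    have := hf.measurable
    fun_prop
  have hpt : ∀ᵐ y : ℝ, ENNReal.ofReal (|G (a - y) - G (b - y)| * |f y|) ≤
      (Metric.closedBall a 4).indicator (fun y => ENNReal.ofReal |f y| *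
        (ENNReal.ofReal (K y) + ENNReal.ofReal (L * h))) y := by
    filter_upwards [hne a, hne b] with y hya hyb
    by_cases hy : y ∈ Metric.closedBall a 4
    · rw [Set.indicator_of_mem hy, ← ENNReal.ofReal_add (abs_nonneg _) (by positivity),
        ← ENNReal.ofReal_mul (abs_nonneg _), mul_comm]
      apply ENNReal.ofReal_le_ofReal
      apply mul_le_mul_of_nonneg_left _ (abs_nonneg _)
      rw [Metric.mem_closedBall, Real.dist_eq, abs_le] at hy
      have h3' := abs_le.mp h3
      have hs := hSL (a - y) ⟨by linarith, by linarith⟩ (b - y) ⟨by linarith, by linarith⟩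
      rw [sub_sub_sub_cancel_right] at hs
      have e : G (a - y) - G (b - y) = (1 / Real.pi) *
          (Real.log |a - y| - Real.log |b - y|) + (S (a - y) - S (b - y)) := by
        rw [hS _ hya, hS _ hyb]; ring
      rw [e]
      refine (abs_add_le _ _).trans (add_le_add ?_ hs)
      rw [abs_mul, abs_of_pos (by positivity : 0 < 1 / Real.pi)]
      have : 1 / Real.pi ≤ 1 := by
        rw [div_le_one Real.pi_pos]; linarith [Real.pi_gt_three]
      exact mul_le_of_le_one_left (abs_nonneg _) this
    · rw [Set.indicator_of_notMem hy]
      rw [Metric.mem_closedBall, Real.dist_eq] at hy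
      have h3' := abs_le.mp h3
      have g1 : G (a - y) = 0 := by
        apply hGsupp
        intro hc
        exact hy (abs_le.mpr ⟨by linarith [hc.2], by linarith [hc.1]⟩)
      have g2 : G (b - y) = 0 := by
        apply hGsupp
        intro hc
        exact hy (abs_le.mpr ⟨by linarith [hc.2], by linarith [hc.1]⟩)
      simp [g1, g2]
  have hν4 : ν Set.univ ≤ ENNReal.ofReal (A * 4 ^ β) := by
    have e : ν Set.univ ≤ ν (Metric.closedBall a 4) := by
      rw [hνdef, withDensity_apply _ MeasurableSet.univ,
        withDensity_apply _ measurableSet_closedBall, Measure.restrict_restrict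
        measurableSet_closedBall]
      simp
    exact e.trans (hν a 4 (by norm_num))
  have hh3 : h ≤ 3 * h ^ β := by
    have e : h = h ^ (1 - β) * h ^ β := by
      rw [← Real.rpow_add hpos]; simp
    have : h ^ (1 - β) ≤ 3 := by
      calc h ^ (1 - β) ≤ 3 ^ (1 - β) := Real.rpow_le_rpow hpos.le h3 (by linarith)
        _ ≤ 3 ^ (1 : ℝ) := Real.rpow_le_rpow_of_exponent_le (by norm_num) (by linarith)
        _ = 3 := by simp
    calc h = h ^ (1 - β) * h ^ β := e
      _ ≤ _ := mul_le_mul_of_nonneg_right this (by positivity)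
  calc _ ≤ ∫⁻ y, (Metric.closedBall a 4).indicator (fun y => ENNReal.ofReal |f y| *
        (ENNReal.ofReal (K y) + ENNReal.ofReal (L * h))) y := lintegral_mono_ae hpt
    _ = ∫⁻ y, (ENNReal.ofReal (K y) + ENNReal.ofReal (L * h)) ∂ν := by
        rw [lintegral_indicator measurableSet_closedBall, hνdef,
          lintegral_withDensity_eq_lintegral_mul _ hfm hmeas]
        rfl
    _ = ∫⁻ y, ENNReal.ofReal (K y) ∂ν + ENNReal.ofReal (L * h) * ν Set.univ := by
        rw [lintegral_add_left (by fun_prop), lintegral_const]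
    _ ≤ ENNReal.ofReal (C₀ * A * h ^ β) + ENNReal.ofReal (L * h) * ENNReal.ofReal (A * 4 ^ β) :=
        add_le_add (hlayer ν A hA0 hν a b hab) (mul_le_mul_right hν4 _)
    _ = ENNReal.ofReal (C₀ * A * h ^ β + L * h * (A * 4 ^ β)) := by
        rw [← ENNReal.ofReal_mul (by positivity), ← ENNReal.ofReal_add (by positivity)
          (by positivity)]
    _ ≤ _ := by
        apply ENNReal.ofReal_le_ofReal
        have := mul_le_mul_of_nonneg_left hh3 (by positivity : 0 ≤ L * (A * 4 ^ β))
        calc _ ≤ C₀ * A * h ^ β + L * (A * 4 ^ β) * (3 * h ^ β) := by linarith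
          _ = _ := by rw [hA]; ring

/-- Schauder estimate for the approximate Green's function `G` of the half-Laplacian:
for `α ∈ (-1,0)` and `G` even, smooth away from `0`, supported in `[-1,1]` and equal
to `(1/π)log|·|` near `0`, there is `C < ∞` such that for every bounded continuous `f`
with `N_α(f) < ∞`, the convolution `G∗f` is well-defined and
`‖G∗f‖_{C^(α+1)} ≤ C N_α(f)` (the `C^(α+1)` norm being the sup norm plus the
Hölder seminorm, expressed here pointwise). -/
theorem greens_function_schauder (α : ℝ) (hα : α ∈ Set.Ioo (-1 : ℝ) 0)
    (G : ℝ → ℝ) (hGeven : ∀ x, G (-x) = G x) (hGsmooth : ContDiffOn ℝ (⊤ : ℕ∞) G {(0 : ℝ)}ᶜ)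
    (hGsupp : ∀ x, x ∉ Set.Icc (-1 : ℝ) 1 → G x = 0)
    (hGlog : ∀ x : ℝ, 0 < |x| → |x| ≤ 1 / 2 → G x = (1 / Real.pi) * Real.log |x|) :
    ∃ C : ℝ, ∀ f : ℝ → ℝ, Continuous f → (∃ M, ∀ x, |f x| ≤ M) →
      BddAbove (distSet α f) →
      (∀ x : ℝ, Integrable (fun y => G (x - y) * f y)) ∧
      ∀ x x' y' : ℝ, x' ≠ y' → |x' - y'| ≤ 1 →
        |∫ y : ℝ, G (x - y) * f y| +
            |(∫ y : ℝ, G (x' - y) * f y) - ∫ y : ℝ, G (y' - y) * f y| /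
              |x' - y'| ^ (α + 1)
          ≤ C * distNorm α f := by

  obtain ⟨S, L, hL, hSc, hS, hSL⟩ := gfs_smooth G hGsmooth hGlog
  obtain ⟨C, hC, hcore⟩ := gfs_core α hα G hGsupp S L hL hS hSL
  refine ⟨C * (3 ^ (α + 1) + 1), ?_⟩
  intro f hf hM hb
  have hN := gfs_nonneg α f hb
  have hmeas : ∀ x, AEStronglyMeasurable (fun y => G (x - y) * f y) := by
    intro x
    have hm : Measurable fun y => ((1 / Real.pi) * Real.log |x - y| + S (x - y)) * f y := by
      have h1 := hf.measurable
      have h2 := hSc.measurable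
      fun_prop
    refine hm.aestronglyMeasurable.congr ?_
    have : ∀ᵐ y : ℝ, y ≠ x := by simp [ae_iff]
    filter_upwards [this] with y hy
    rw [hS _ (sub_ne_zero.mpr (Ne.symm hy))]
  have hsup : ∀ x, ∫⁻ y, ENNReal.ofReal |G (x - y) * f y|
      ≤ ENNReal.ofReal (C * distNorm α f * 3 ^ (α + 1)) := by
    intro x
    have h := hcore f hf hM hb x (x + 3) (by simp) (by simp)
    have e : |x - (x + 3)| = 3 := by simp
    rw [e] at h
    refine le_trans (lintegral_mono fun y => ?_) h
    apply ENNReal.ofReal_le_ofReal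
    rw [abs_mul]
    apply mul_le_mul_of_nonneg_right _ (abs_nonneg _)
    by_cases hy : x - y ∈ Set.Icc (-1 : ℝ) 1
    · have : G (x + 3 - y) = 0 := by
        apply hGsupp
        intro hc
        linarith [hc.2, hy.1]
      rw [this, sub_zero]
    · rw [hGsupp _ hy, abs_zero]; exact abs_nonneg _
  have hint : ∀ x, Integrable (fun y => G (x - y) * f y) := by
    intro x
    refine ⟨hmeas x, ?_⟩
    rw [hasFiniteIntegral_iff_norm]
    exact (hsup x).trans_lt ENNReal.ofReal_lt_top
  have habs : ∀ (g : ℝ → ℝ) (B : ℝ), 0 ≤ B →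
      ∫⁻ y, ENNReal.ofReal |g y| ≤ ENNReal.ofReal B → |∫ y, g y| ≤ B := by
    intro g B hB hg
    have h1 := norm_integral_le_lintegral_norm (μ := volume) g
    refine h1.trans ?_
    exact ENNReal.toReal_le_of_le_ofReal hB hg
  refine ⟨hint, ?_⟩
  intro x x' y' hne hle
  have hpos : 0 < |x' - y'| := abs_pos.mpr (sub_ne_zero.mpr hne)
  have b1 := habs _ _ (by positivity) (hsup x)
  have b2 : |(∫ y : ℝ, G (x' - y) * f y) - ∫ y : ℝ, G (y' - y) * f y| ≤
      C * distNorm α f * |x' - y'| ^ (α + 1) := by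
    rw [← integral_sub (hint x') (hint y')]
    apply habs _ _ (by positivity)
    have h := hcore f hf hM hb x' y' hne (by linarith)
    refine le_trans (le_of_eq ?_) h
    congr 1; ext y
    rw [← sub_mul, abs_mul]
  have b3 := (div_le_iff₀ (by positivity : 0 < |x' - y'| ^ (α + 1))).mpr b2
  calc _ ≤ C * distNorm α f * 3 ^ (α + 1) + C * distNorm α f := add_le_add b1 b3
    _ = _ := by ring
end

section
/- Let −1 < α < 0 < β < 1 and T < ∞. There is a constant C < ∞ such that for every bounded continuous f: ℝ → ℝ with N_α(f) < ∞ and every t ∈ (0,T], the convolution P_t∗f(x) = ∫_ℝ P_t(x−y) f(y) dy satisfies ‖P_t∗f‖_{C^β} ≤ C t^{−(β−α)} N_α(f). (Schauder estimate for the Cauchy kernel, i.e. the semigroup generated by the negative half-Laplacian.) -/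
open MeasureTheory

/-- The Cauchy kernel `P_t(x) = t / (π (t² + x²))`, the kernel of the semigroup
generated by the negative half-Laplacian. -/
noncomputable def cauchyKer (t x : ℝ) : ℝ := t / (Real.pi * (t ^ 2 + x ^ 2))

lemma ck_scale (x l : ℝ) (hl : 0 < l) (f η : ℝ → ℝ) :
    ∫ y : ℝ, f y * (l⁻¹ * η (l⁻¹ * (y - x))) = ∫ u : ℝ, f (x + l * u) * η u := by
  have h1 := integral_sub_right_eq_self (μ := volume)
    (fun y => f (x + y) * (l⁻¹ * η (l⁻¹ * y))) x
  simp only [add_sub_cancel] at h1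
  rw [h1]
  have h2 := Measure.integral_comp_mul_left (fun u => f (x + l * u) * (l⁻¹ * η u)) l⁻¹
  have h3 : ∀ y, l * (l⁻¹ * y) = y := fun y => by field_simp
  simp only [h3, inv_inv, abs_of_pos hl, smul_eq_mul] at h2
  rw [h2, ← integral_const_mul]
  congr 1
  ext u
  field_simp

lemma ck_test (α : ℝ) (f : ℝ → ℝ) (hb : BddAbove (distSet α f)) (x l : ℝ) (hl : 0 < l)
    (hl1 : l ≤ 1) (η : ℝ → ℝ) (hη : IsTestFn η) :
    ∫ u : ℝ, f (x + l * u) * η u ≤ l ^ α * distNorm α f := by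
  have h := le_csSup hb ⟨x, l, η, hl, hl1, hη, rfl⟩
  rw [ck_scale x l hl] at h
  have hp : 0 < l ^ α := Real.rpow_pos_of_pos hl _
  have h2 : l ^ (-α) * |∫ u : ℝ, f (x + l * u) * η u| ≤ distNorm α f := h
  rw [Real.rpow_neg hl.le, inv_mul_le_iff₀ hp] at h2
  exact (le_abs_self _).trans h2

lemma ck_nonneg (α : ℝ) (f : ℝ → ℝ) : 0 ≤ distNorm α f := by
  apply Real.sSup_nonneg
  rintro r ⟨x, l, η, hl, -, -, rfl⟩
  positivity

/-- Testing against all `C¹` functions bounded by one controls the local `L¹` norm. -/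
lemma ck_abs (g : ℝ → ℝ) (hg : Continuous g) (M : ℝ) (hM : ∀ x, |g x| ≤ M) (K : ℝ)
    (hK : ∀ η, IsTestFn η → ∫ u : ℝ, g u * η u ≤ K) :
    ∫ u in Set.Icc (-(1/2) : ℝ) (1/2), |g u| ≤ K := by
  have hM0 : 0 ≤ M := (abs_nonneg _).trans (hM 0)
  let χ : ContDiffBump (0 : ℝ) := ⟨1/2, 1, by norm_num, by norm_num⟩
  have hχ0 : ∀ u, 0 ≤ χ u := fun u => χ.nonneg
  have hχ1 : ∀ u, χ u ≤ 1 := fun u => χ.le_one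
  have hχc : Continuous χ := χ.continuous
  have hχi : Integrable (χ : ℝ → ℝ) := hχc.integrable_of_hasCompactSupport χ.hasCompactSupport
  have hχz : ∀ u, u ∉ Set.Icc (-1 : ℝ) 1 → χ u = 0 := by
    intro u hu
    apply χ.zero_of_le_dist
    rw [Real.dist_eq, sub_zero]
    by_contra hc
    push Not at hc
    exact hu ⟨(abs_lt.1 hc).1.le, (abs_lt.1 hc).2.le⟩
  have hχo : ∀ u, u ∈ Set.Icc (-(1/2) : ℝ) (1/2) → χ u = 1 := by
    intro u hu
    apply χ.one_of_mem_closedBall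
    rw [Metric.mem_closedBall, Real.dist_eq, sub_zero]
    exact abs_le.2 hu
  have hbi : ∀ h : ℝ → ℝ, Continuous h → Integrable (fun u => χ u * h u) := by
    intro h hh
    exact (hχc.mul hh).integrable_of_hasCompactSupport χ.hasCompactSupport.mul_right
  set A := ∫ u, χ u * |g u| with hA
  set B := ∫ u, χ u with hB
  have step : ∀ ε : ℝ, 0 < ε → A ≤ (1 + ε) * K + ε * ((1 + M) * B) := by
    intro ε hε
    have hsc : Continuous (fun u => g u / (|g u| + ε)) :=
      hg.div (by fun_prop) (fun u => by positivity)
    obtain ⟨p, hp⟩ := exists_polynomial_near_of_continuousOn (-1) 1 _ hsc.continuousOn ε hε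
    have hpc : Continuous (fun u => p.eval u) := p.continuous
    have hs1 : ∀ u, |g u / (|g u| + ε)| ≤ 1 := by
      intro u
      have : 0 < |g u| + ε := by positivity
      rw [abs_div, abs_of_pos this, div_le_one this]
      linarith
    have ht := hK (fun u => (1 + ε)⁻¹ * (χ u * p.eval u)) ⟨?_, ?_, ?_⟩
    · have e1 : ∫ u, g u * ((1 + ε)⁻¹ * (χ u * p.eval u))
          = (1 + ε)⁻¹ * ∫ u, χ u * (g u * p.eval u) := by
        rw [← integral_const_mul]
        congr 1; ext u; ring
      rw [e1, inv_mul_le_iff₀ (by positivity)] at ht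
      have e2 : A - ε * ((1 + M) * B) ≤ ∫ u, χ u * (g u * p.eval u) := by
        have : A - ε * ((1 + M) * B) = ∫ u, (χ u * |g u| - ε * ((1 + M) * χ u)) := by
          rw [integral_sub (hbi _ hg.abs) ((hχi.const_mul _).const_mul _),
            integral_const_mul, integral_const_mul]
        rw [this]
        apply integral_mono ((hbi _ hg.abs).sub ((hχi.const_mul _).const_mul _))
          (hbi _ (hg.mul hpc))
        intro u
        show χ u * |g u| - ε * ((1 + M) * χ u) ≤ χ u * (g u * p.eval u)
        by_cases hu : u ∈ Set.Icc (-1 : ℝ) 1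
        · have h1 := hp u hu
          have h2 : |g u| - ε ≤ g u * (g u / (|g u| + ε)) := by
            have h0 : 0 < |g u| + ε := by positivity
            rw [← mul_div_assoc, le_div_iff₀ h0]
            nlinarith [abs_mul_abs_self (g u), sq_nonneg ε]
          have h3 : -(M * ε) ≤ g u * (p.eval u - g u / (|g u| + ε)) := by
            apply (abs_le.1 _).1
            rw [abs_mul]
            exact mul_le_mul (hM u) h1.le (abs_nonneg _) hM0
          have h4 : |g u| - ε * (1 + M) ≤ g u * p.eval u := by nlinarith
          nlinarith [mul_le_mul_of_nonneg_left h4 (hχ0 u)]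
        · simp [hχz u hu]
      linarith
    · exact contDiff_const.mul (χ.contDiff.mul (by simpa using p.contDiff_aeval (𝕜 := ℝ) 1))
    · intro u hu
      simp [hχz u hu]
    · intro u
      by_cases hu : u ∈ Set.Icc (-1 : ℝ) 1
      · have h1 := abs_lt.1 (hp u hu)
        have h2 := abs_le.1 (hs1 u)
        have h3 : |p.eval u| ≤ 1 + ε := abs_le.2 ⟨by linarith, by linarith⟩
        rw [abs_mul, abs_mul, abs_of_nonneg (hχ0 u), abs_of_pos (by positivity),
          inv_mul_le_iff₀ (by positivity), mul_one]
        nlinarith [hχ0 u, hχ1 u, abs_nonneg (p.eval u)]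
      · simp [hχz u hu]
  have hAK : A ≤ K := by
    have hlim : Filter.Tendsto (fun ε : ℝ => (1 + ε) * K + ε * ((1 + M) * B))
        (nhdsWithin 0 (Set.Ioi 0)) (nhds K) := by
      have hc : Continuous (fun ε : ℝ => (1 + ε) * K + ε * ((1 + M) * B)) := by fun_prop
      have := hc.tendsto 0
      simp only [add_zero, one_mul, zero_mul] at this
      exact this.mono_left nhdsWithin_le_nhds
    apply ge_of_tendsto hlim
    filter_upwards [self_mem_nhdsWithin] with ε hε using step ε hε
  refine le_trans ?_ hAK
  calc ∫ u in Set.Icc (-(1/2) : ℝ) (1/2), |g u|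
      = ∫ u in Set.Icc (-(1/2) : ℝ) (1/2), χ u * |g u| := by
        apply setIntegral_congr_fun measurableSet_Icc
        intro u hu
        simp only [hχo u hu, one_mul]
    _ ≤ A := setIntegral_le_integral (hbi _ hg.abs)
        (Filter.Eventually.of_forall fun u => mul_nonneg (hχ0 u) (abs_nonneg _))

lemma ck_local (α : ℝ) (f : ℝ → ℝ) (hf : Continuous f) (M : ℝ) (hM : ∀ x, |f x| ≤ M)
    (hb : BddAbove (distSet α f)) (x l : ℝ) (hl : 0 < l) (hl1 : l ≤ 1) :
    ∫ u in Set.Icc (-(1/2) : ℝ) (1/2), |f (x + l * u)| ≤ l ^ α * distNorm α f :=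
  ck_abs _ (by fun_prop) M (fun u => hM _) _ (fun η hη => ck_test α f hb x l hl hl1 η hη)

lemma ck_ker_eq (t : ℝ) (ht : 0 < t) :
    cauchyKer t = fun x => (Real.pi * t)⁻¹ * (1 + (t⁻¹ * x) ^ 2)⁻¹ := by
  ext x
  unfold cauchyKer
  have := Real.pi_pos
  field_simp

lemma ck_ker_int (t : ℝ) (ht : 0 < t) : Integrable (cauchyKer t) := by
  rw [ck_ker_eq t ht]
  exact (integrable_inv_one_add_sq.comp_mul_left' (inv_ne_zero ht.ne')).const_mul _

lemma ck_ker_one (t : ℝ) (ht : 0 < t) : ∫ x, cauchyKer t x = 1 := by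
  rw [ck_ker_eq t ht, integral_const_mul,
    Measure.integral_comp_mul_left (fun x => (1 + x ^ 2)⁻¹) t⁻¹, integral_univ_inv_one_add_sq]
  have := Real.pi_pos
  rw [inv_inv, abs_of_pos ht, smul_eq_mul]
  field_simp

lemma ck_ker_pos (t x : ℝ) (ht : 0 < t) : 0 < cauchyKer t x := by
  have := Real.pi_pos
  unfold cauchyKer
  positivity

lemma ck_ker_cont (t : ℝ) (ht : 0 < t) : Continuous (cauchyKer t) := by
  have := Real.pi_pos
  unfold cauchyKer
  exact continuous_const.div (by fun_prop) (fun x => by positivity)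

lemma ck_ker_harnack (t a b : ℝ) (ht : 0 < t) (h : |a - b| ≤ t) :
    cauchyKer t a ≤ 3 * cauchyKer t b := by
  have := Real.pi_pos
  have hs : (a - b) ^ 2 ≤ t ^ 2 := sq_le_sq' (by linarith [(abs_le.1 h).1]) (abs_le.1 h).2
  unfold cauchyKer
  rw [← mul_div_assoc, div_le_div_iff₀ (by positivity) (by positivity)]
  have h1 : t ^ 2 + b ^ 2 ≤ 3 * (t ^ 2 + a ^ 2) := by nlinarith [sq_nonneg (2 * a - b)]
  have h2 : 0 < t * Real.pi := by positivity
  nlinarith [mul_le_mul_of_nonneg_left h1 h2.le]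

lemma ck_ker_diff (t a b β : ℝ) (ht : 0 < t) (hβ : 0 < β) (hβ1 : β < 1) :
    |cauchyKer t a - cauchyKer t b| ≤
      (|a - b| / t) ^ β * (cauchyKer t a + cauchyKer t b) := by
  have hpi := Real.pi_pos
  have ha := ck_ker_pos t a ht
  have hb := ck_ker_pos t b ht
  rcases le_total 1 (|a - b| / t) with h | h
  · have h1 : 1 ≤ (|a - b| / t) ^ β := Real.one_le_rpow h hβ.le
    have h2 : |cauchyKer t a - cauchyKer t b| ≤ cauchyKer t a + cauchyKer t b :=
      abs_le.2 ⟨by linarith, by linarith⟩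
    nlinarith
  · have h0 : 0 ≤ |a - b| / t := by positivity
    have h1 : |a - b| / t ≤ (|a - b| / t) ^ β := by
      rcases h0.eq_or_lt with h0 | h0
      · rw [← h0, Real.zero_rpow hβ.ne']
      · conv_lhs => rw [← Real.rpow_one (|a - b| / t)]
        exact Real.rpow_le_rpow_of_exponent_ge h0 h hβ1.le
    refine le_trans ?_ (mul_le_mul_of_nonneg_right h1 (by positivity))
    have e : cauchyKer t a - cauchyKer t b =
        (b - a) * ((a + b) * (t / (Real.pi * (t ^ 2 + a ^ 2) * (t ^ 2 + b ^ 2)))) := by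
      unfold cauchyKer
      field_simp
      ring
    have e2 : |a - b| / t * (cauchyKer t a + cauchyKer t b) =
        |b - a| * (((2 * t ^ 2 + a ^ 2 + b ^ 2) / t) *
          (t / (Real.pi * (t ^ 2 + a ^ 2) * (t ^ 2 + b ^ 2)))) := by
      rw [abs_sub_comm]
      unfold cauchyKer
      field_simp
      ring
    rw [e, e2, abs_mul, abs_mul]
    have hq : 0 < t / (Real.pi * (t ^ 2 + a ^ 2) * (t ^ 2 + b ^ 2)) := by positivity
    rw [abs_of_pos hq]
    gcongr
    rw [le_div_iff₀ ht]
    have := abs_add_le a b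
    nlinarith [sq_nonneg (|a| - t), sq_nonneg (|b| - t), sq_abs a, sq_abs b]

lemma ck_integrable (t x : ℝ) (ht : 0 < t) (f : ℝ → ℝ) (hf : Continuous f) (M : ℝ)
    (hM : ∀ x, |f x| ≤ M) : Integrable (fun y => cauchyKer t (x - y) * f y) := by
  apply ((ck_ker_int t ht).comp_sub_left x).mul_bdd (c := M) hf.aestronglyMeasurable
  exact Filter.Eventually.of_forall hM

/-- The kernel against `|F|`, from uniform local `L¹` bounds. -/
lemma ck_main (F : ℝ → ℝ) (hF : Continuous F) (hF0 : ∀ x, 0 ≤ F x) (M : ℝ)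
    (hM : ∀ x, F x ≤ M) (t l K : ℝ) (ht : 0 < t) (hl : 0 < l) (hlt : l ≤ t)
    (hK : ∀ x, ∫ u in Set.Icc (-(1/2) : ℝ) (1/2), F (x + l * u) ≤ K) (x : ℝ) :
    ∫ y, cauchyKer t (x - y) * F y ≤ 3 * K := by
  have hM' : ∀ x, |F x| ≤ M := fun x => by rw [abs_of_nonneg (hF0 x)]; exact hM x
  set S := Set.Icc (-(1/2) : ℝ) (1/2) with hS
  set I := ∫ y, cauchyKer t (x - y) * F y with hI
  have hKi : Integrable (fun y => cauchyKer t (x - y)) := (ck_ker_int t ht).comp_sub_left x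
  have h1 : ∀ u ∈ S, I ≤ ∫ z, 3 * (cauchyKer t (x - z) * F (z + l * u)) := by
    intro u hu
    rw [hI, ← integral_add_right_eq_self (fun y => cauchyKer t (x - y) * F y) (l * u)]
    apply integral_mono
    · exact (ck_integrable t x ht F hF M hM').comp_add_right (l * u)
    · exact (ck_integrable t x ht (fun z => F (z + l * u)) (by fun_prop) M
        (fun z => hM' _)).const_mul 3
    · intro z
      show cauchyKer t (x - (z + l * u)) * F (z + l * u)
        ≤ 3 * (cauchyKer t (x - z) * F (z + l * u))
      rw [← mul_assoc]
      apply mul_le_mul_of_nonneg_right _ (hF0 _)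
      apply ck_ker_harnack t _ _ ht
      have : x - (z + l * u) - (x - z) = -(l * u) := by ring
      rw [this, abs_neg, abs_mul, abs_of_pos hl]
      have : |u| ≤ 1 / 2 := abs_le.2 hu
      nlinarith [abs_nonneg u]
  have hprod : Integrable (Function.uncurry fun (u z : ℝ) =>
      3 * (cauchyKer t (x - z) * F (z + l * u))) ((volume.restrict S).prod volume) := by
    apply Integrable.const_mul
    have := hKi.comp_snd (volume.restrict S)
    apply this.mul_bdd (c := M)
    · exact Continuous.aestronglyMeasurable (by fun_prop)
    · exact Filter.Eventually.of_forall fun p => hM' _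
  have hvol : volume.real S = 1 := by
    rw [hS, Real.volume_real_Icc_of_le (by norm_num)]; norm_num
  calc I = ∫ u in S, I := by rw [setIntegral_const, hvol, one_smul]
    _ ≤ ∫ u in S, ∫ z, 3 * (cauchyKer t (x - z) * F (z + l * u)) := by
        apply setIntegral_mono_on _ hprod.integral_prod_left measurableSet_Icc h1
        exact integrableOn_const (by rw [hS]; simp)
    _ = ∫ z, ∫ u in S, 3 * (cauchyKer t (x - z) * F (z + l * u)) := integral_integral_swap hprod
    _ = ∫ z, 3 * (cauchyKer t (x - z) * ∫ u in S, F (z + l * u)) := by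
        simp only [integral_const_mul]
    _ ≤ ∫ z, 3 * (cauchyKer t (x - z) * K) := by
        apply integral_mono
        · have := hprod.integral_prod_right
          simpa only [Function.uncurry, integral_const_mul] using this
        · exact (hKi.mul_const K).const_mul 3
        · intro z
          have := ck_ker_pos t (x - z) ht
          have := hK z
          show 3 * (cauchyKer t (x - z) * ∫ u in S, F (z + l * u))
            ≤ 3 * (cauchyKer t (x - z) * K)
          gcongr
    _ = 3 * K := by
        rw [integral_const_mul, integral_mul_const,
          integral_sub_left_eq_self (cauchyKer t) volume x, ck_ker_one t ht, one_mul]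

/-- Schauder estimate for the Cauchy kernel: for `-1 < α < 0 < β < 1` and `T < ∞`
there is `C < ∞` such that for every bounded continuous `f` with `N_α(f) < ∞` and
every `t ∈ (0,T]`, the convolution `P_t∗f` is well-defined and
`‖P_t∗f‖_{C^β} ≤ C t^(-(β-α)) N_α(f)` (the `C^β` norm being the sup norm plus the
Hölder seminorm, expressed here pointwise). -/
theorem cauchy_kernel_schauder (α β T : ℝ) (hα : α ∈ Set.Ioo (-1 : ℝ) 0)
    (hβ : β ∈ Set.Ioo (0 : ℝ) 1) (hT : 0 < T) :
    ∃ C : ℝ, ∀ f : ℝ → ℝ, Continuous f → (∃ M, ∀ x, |f x| ≤ M) →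
      BddAbove (distSet α f) →
      ∀ t : ℝ, t ∈ Set.Ioc 0 T →
        (∀ x : ℝ, Integrable (fun y => cauchyKer t (x - y) * f y)) ∧
        ∀ x x' y' : ℝ, x' ≠ y' → |x' - y'| ≤ 1 →
          |∫ y : ℝ, cauchyKer t (x - y) * f y| +
              |(∫ y : ℝ, cauchyKer t (x' - y) * f y) -
                  ∫ y : ℝ, cauchyKer t (y' - y) * f y| / |x' - y'| ^ β
            ≤ C * t ^ (-(β - α)) * distNorm α f := by
  obtain ⟨hα1, hα0⟩ := hα
  obtain ⟨hβ0, hβ1⟩ := hβ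
  set D : ℝ := 3 * (1 + T)⁻¹ ^ α with hD
  have hDpos : 0 < D := by positivity
  refine ⟨D * T ^ β + 2 * D, ?_⟩
  rintro f hf ⟨M, hM⟩ hb t ⟨ht, htT⟩
  have hint : ∀ x : ℝ, Integrable (fun y => cauchyKer t (x - y) * f y) :=
    fun x => ck_integrable t x ht f hf M hM
  refine ⟨hint, ?_⟩
  set N := distNorm α f with hN
  have hN0 : 0 ≤ N := ck_nonneg α f
  have hinta : ∀ x : ℝ, Integrable (fun y => cauchyKer t (x - y) * |f y|) :=
    fun x => ck_integrable t x ht _ hf.abs M (fun x => by rw [abs_abs]; exact hM x)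
  have key : ∀ x, ∫ y, cauchyKer t (x - y) * |f y| ≤ D * t ^ α * N := by
    intro x
    have hl : 0 < (1 + T)⁻¹ * t := by positivity
    have hi1 : (1 + T)⁻¹ ≤ 1 := inv_le_one_of_one_le₀ (by linarith)
    have hlt : (1 + T)⁻¹ * t ≤ t := by nlinarith
    have hl1 : (1 + T)⁻¹ * t ≤ 1 := by
      rw [inv_mul_le_iff₀ (by linarith)]; linarith
    have := ck_main (fun y => |f y|) hf.abs (fun _ => abs_nonneg _) M hM t _ _ ht hl hlt
      (fun z => ck_local α f hf M hM hb z _ hl hl1) x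
    rw [Real.mul_rpow (by positivity) ht.le] at this
    rw [hD]
    linarith
  have htb : t ^ α = t ^ β * t ^ (-(β - α)) := by
    rw [← Real.rpow_add ht]; congr 1; ring
  have hE : 0 < t ^ (-(β - α)) := Real.rpow_pos_of_pos ht _
  intro x x' y' hne hle
  have hd : 0 < |x' - y'| := abs_pos.2 (sub_ne_zero.2 hne)
  have p1 : |∫ y : ℝ, cauchyKer t (x - y) * f y| ≤ D * T ^ β * t ^ (-(β - α)) * N := by
    calc |∫ y : ℝ, cauchyKer t (x - y) * f y| ≤ ∫ y, |cauchyKer t (x - y) * f y| :=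
          abs_integral_le_integral_abs
      _ = ∫ y, cauchyKer t (x - y) * |f y| := by
          congr 1; ext y
          rw [abs_mul, abs_of_pos (ck_ker_pos t _ ht)]
      _ ≤ D * t ^ α * N := key x
      _ = D * t ^ β * t ^ (-(β - α)) * N := by rw [htb]; ring
      _ ≤ D * T ^ β * t ^ (-(β - α)) * N := by gcongr
  have p2 : |(∫ y : ℝ, cauchyKer t (x' - y) * f y) - ∫ y : ℝ, cauchyKer t (y' - y) * f y|
      ≤ (2 * D * t ^ (-(β - α)) * N) * |x' - y'| ^ β := by
    rw [← integral_sub (hint x') (hint y')]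
    calc |∫ y, (cauchyKer t (x' - y) * f y - cauchyKer t (y' - y) * f y)|
        ≤ ∫ y, |cauchyKer t (x' - y) * f y - cauchyKer t (y' - y) * f y| :=
          abs_integral_le_integral_abs
      _ ≤ ∫ y, (|x' - y'| / t) ^ β *
            (cauchyKer t (x' - y) * |f y| + cauchyKer t (y' - y) * |f y|) := by
          apply integral_mono ((hint x').sub (hint y')).abs
            (((hinta x').add (hinta y')).const_mul _)
          intro y
          have h := ck_ker_diff t (x' - y) (y' - y) β ht hβ0 hβ1
          rw [show x' - y - (y' - y) = x' - y' by ring] at h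
          show |cauchyKer t (x' - y) * f y - cauchyKer t (y' - y) * f y| ≤
            (|x' - y'| / t) ^ β * (cauchyKer t (x' - y) * |f y| + cauchyKer t (y' - y) * |f y|)
          rw [← sub_mul, abs_mul, ← add_mul, ← mul_assoc]
          gcongr
      _ = (|x' - y'| / t) ^ β * ((∫ y, cauchyKer t (x' - y) * |f y|) +
            ∫ y, cauchyKer t (y' - y) * |f y|) := by
          rw [integral_const_mul, integral_add (hinta x') (hinta y')]
      _ ≤ (|x' - y'| / t) ^ β * (D * t ^ α * N + D * t ^ α * N) := by
          gcongr
          · exact key x'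
          · exact key y'
      _ = (2 * D * t ^ (-(β - α)) * N) * |x' - y'| ^ β := by
          have : t ^ β ≠ 0 := (Real.rpow_pos_of_pos ht _).ne'
          rw [Real.div_rpow hd.le ht.le, htb]
          field_simp
          ring
  have p3 := (div_le_iff₀ (Real.rpow_pos_of_pos hd β)).2 p2
  calc _ ≤ D * T ^ β * t ^ (-(β - α)) * N + 2 * D * t ^ (-(β - α)) * N := add_le_add p1 p3
    _ = _ := by ring
end

section
/- For each κ ∈ (0,1/2) there is a constant C < ∞ such that for every bounded continuous S: ℝ → ℝ with ‖S‖_{C^{1/2−κ/2}} < ∞, every bounded continuous v: ℝ → ℝ with ‖v‖_{C^{1/2+κ}} < ∞, and every x ∈ ℝ, the integral ∫_ℝ |e^{S(y)−S(x)} − 1| · |v(y) − v(x)| / (y−x)² dy is finite and bounded above by C (1 + exp(2‖S‖_{C^{1/2−κ/2}})) ‖v‖_{C^{1/2+κ}}. In particular the operator Ξ_S v(x) := (1/π) ∫_ℝ (e^{S(y)−S(x)} − 1)(v(y) − v(x))/(y−x)² dy is well-defined and satisfies sup_x |Ξ_S v(x)| ≤ C (1 + exp(2‖S‖_{C^{1/2−κ/2}}))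 ‖v‖_{C^{1/2+κ}}. -/
open MeasureTheory

/-- The set whose supremum is the Hölder seminorm of `g` with exponent `γ`:
values `|g(x) - g(y)| / |x-y|^γ` over `x ≠ y` with `|x-y| ≤ 1`. -/
noncomputable def holderSet (γ : ℝ) (g : ℝ → ℝ) : Set ℝ :=
  {r | ∃ x y : ℝ, x ≠ y ∧ |x - y| ≤ 1 ∧ r = |g x - g y| / |x - y| ^ γ}

/-- The Hölder norm `‖g‖_{C^γ} = sup |g| + sup_{0<|x-y|≤1} |g(x)-g(y)|/|x-y|^γ`. -/
noncomputable def holderNorm (γ : ℝ) (g : ℝ → ℝ) : ℝ :=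
  sSup (Set.range fun x => |g x|) + sSup (holderSet γ g)

/-- Finiteness of the Hölder norm `‖g‖_{C^γ}`: `g` is bounded and its Hölder
seminorm quotient set is bounded above. -/
def HolderFinite (γ : ℝ) (g : ℝ → ℝ) : Prop :=
  BddAbove (Set.range fun x => |g x|) ∧ BddAbove (holderSet γ g)

/-- A dominating profile for the kernel. -/
noncomputable def xiDom (κ z : ℝ) : ℝ :=
  (Set.Icc (-1 : ℝ) 1).indicator (fun z => |z| ^ (κ / 2 - 1)) z + 4 * (1 + z ^ 2)⁻¹

lemma xiDom_nonneg (κ z : ℝ) : 0 ≤ xiDom κ z := by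
  unfold xiDom
  have : 0 ≤ (Set.Icc (-1 : ℝ) 1).indicator (fun z => |z| ^ (κ / 2 - 1)) z :=
    Set.indicator_nonneg (fun z _ => by positivity) z
  positivity

lemma xi_rpow_int {p : ℝ} (hp : -1 < p) :
    IntegrableOn (fun z : ℝ => |z| ^ p) (Set.Icc (-1 : ℝ) 1) := by
  have h1 : IntervalIntegrable (fun z : ℝ => |z| ^ p) volume 0 1 := by
    refine (intervalIntegral.intervalIntegrable_rpow' (a := 0) (b := 1) hp).congr ?_
    intro z hz
    rw [Set.uIoc_of_le zero_le_one] at hz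
    simp [abs_of_pos hz.1]
  have h2 : IntervalIntegrable (fun z : ℝ => |z| ^ p) volume (-1) 0 := by
    have := (IntervalIntegrable.iff_comp_neg).1 h1
    simpa using this.symm
  have := h2.trans h1
  rwa [intervalIntegrable_iff_integrableOn_Icc_of_le (by norm_num)] at this

lemma xiDom_int {κ : ℝ} (hκ : 0 < κ) : Integrable (xiDom κ) := by
  unfold xiDom
  refine Integrable.add ?_ (integrable_inv_one_add_sq.const_mul 4)
  exact (integrable_indicator_iff measurableSet_Icc).2 (xi_rpow_int (by linarith))

lemma holder_sup_le {γ : ℝ} {g : ℝ → ℝ} (h : HolderFinite γ g) (x : ℝ) :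
    |g x| ≤ sSup (Set.range fun x => |g x|) := le_csSup h.1 ⟨x, rfl⟩

lemma holder_semi_nonneg (γ : ℝ) (g : ℝ → ℝ) : 0 ≤ sSup (holderSet γ g) := by
  apply Real.sSup_nonneg
  rintro r ⟨x, y, -, -, rfl⟩
  positivity

lemma holder_semi_le {γ : ℝ} {g : ℝ → ℝ} (h : HolderFinite γ g) {x y : ℝ} (hxy : x ≠ y)
    (h1 : |x - y| ≤ 1) : |g x - g y| ≤ sSup (holderSet γ g) * |x - y| ^ γ := by
  have h0 : 0 < |x - y| := abs_pos.2 (sub_ne_zero.2 hxy)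
  have := le_csSup h.2 ⟨x, y, hxy, h1, rfl⟩
  rwa [div_le_iff₀ (by positivity)] at this

lemma xi_abs_exp_sub_one (d : ℝ) : |Real.exp d - 1| ≤ |d| * Real.exp |d| := by
  rcases le_total 0 d with h | h
  · rw [abs_of_nonneg h, abs_of_nonneg (by linarith [Real.add_one_le_exp d])]
    have := Real.add_one_le_exp (-d)
    have h2 : Real.exp (-d) * Real.exp d = 1 := by rw [← Real.exp_add]; simp
    nlinarith [Real.exp_pos d]
  · rw [abs_of_nonpos h, abs_of_nonpos (by linarith [Real.exp_le_one_iff.2 h])]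
    have := Real.add_one_le_exp d
    have := Real.one_le_exp (x := -d) (by linarith)
    nlinarith

lemma xi_key {κ : ℝ} (hκ : κ ∈ Set.Ioo (0 : ℝ) (1 / 2)) {S v : ℝ → ℝ}
    (hS : HolderFinite (1 / 2 - κ / 2) S) (hv : HolderFinite (1 / 2 + κ) v) (x y : ℝ) :
    |Real.exp (S y - S x) - 1| * |v y - v x| / (y - x) ^ 2 ≤
      ((1 + Real.exp (2 * holderNorm (1 / 2 - κ / 2) S)) * holderNorm (1 / 2 + κ) v) *
        xiDom κ (y - x) := by
  obtain ⟨hk0, hk1⟩ := hκ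
  have hs1 := holder_semi_nonneg (1 / 2 - κ / 2) S
  have hv1 := holder_semi_nonneg (1 / 2 + κ) v
  have hsx := holder_sup_le hS x
  have hsy := holder_sup_le hS y
  have hvx := holder_sup_le hv x
  have hvy := holder_sup_le hv y
  have hss := fun h h' => holder_semi_le hS (x := y) (y := x) h h'
  have hvs := fun h h' => holder_semi_le hv (x := y) (y := x) h h'
  unfold holderNorm
  set s0 := sSup (Set.range fun x => |S x|)
  set s1 := sSup (holderSet (1 / 2 - κ / 2) S)
  set v0 := sSup (Set.range fun x => |v x|)
  set v1 := sSup (holderSet (1 / 2 + κ) v)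
  have hs0 : 0 ≤ s0 := (abs_nonneg _).trans hsx
  have hv0 : 0 ≤ v0 := (abs_nonneg _).trans hvx
  have hE := Real.exp_pos (2 * (s0 + s1))
  by_cases hxy : y = x
  · subst hxy
    simp only [sub_self, abs_zero, mul_zero, zero_div]
    have := xiDom_nonneg κ 0
    positivity
  have hr : 0 < |y - x| := abs_pos.2 (sub_ne_zero.2 hxy)
  rw [← sq_abs (y - x), div_le_iff₀ (by positivity)]
  by_cases h1 : |y - x| ≤ 1
  · have a := hss hxy h1
    have b := hvs hxy h1
    have hdom : |y - x| ^ (κ / 2 - 1) ≤ xiDom κ (y - x) := by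
      unfold xiDom
      rw [Set.indicator_of_mem (show y - x ∈ Set.Icc (-1 : ℝ) 1 from abs_le.1 h1)]
      have : 0 ≤ 4 * (1 + (y - x) ^ 2)⁻¹ := by positivity
      linarith
    set r := |y - x|
    have ha1 : r ^ (1 / 2 - κ / 2) ≤ 1 := Real.rpow_le_one hr.le h1 (by linarith)
    have ha0 : 0 < r ^ (1 / 2 - κ / 2) := by positivity
    have hd1 : |S y - S x| ≤ s1 := a.trans (by nlinarith)
    have e1 : |Real.exp (S y - S x) - 1| ≤
        (1 + Real.exp (2 * (s0 + s1))) * r ^ (1 / 2 - κ / 2) := by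
      calc _ ≤ _ := xi_abs_exp_sub_one _
        _ ≤ (s1 * r ^ (1 / 2 - κ / 2)) * Real.exp s1 := by gcongr
        _ = (s1 * Real.exp s1) * r ^ (1 / 2 - κ / 2) := by ring
        _ ≤ _ := by
          gcongr
          have h2 : s1 ≤ Real.exp s1 := by linarith [Real.add_one_le_exp s1]
          have h3 : Real.exp s1 * Real.exp s1 ≤ Real.exp (2 * (s0 + s1)) := by
            rw [← Real.exp_add]; apply Real.exp_le_exp.2; linarith
          nlinarith [Real.exp_pos s1]
    have e2 : |v y - v x| ≤ (v0 + v1) * r ^ (1 / 2 + κ) := by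
      refine b.trans ?_
      gcongr
      linarith
    have e3 : r ^ (1 / 2 - κ / 2) * r ^ (1 / 2 + κ) = r ^ (κ / 2 - 1) * r ^ 2 := by
      rw [← Real.rpow_natCast r 2, ← Real.rpow_add hr, ← Real.rpow_add hr]
      congr 1; push_cast; ring
    calc _ ≤ ((1 + Real.exp (2 * (s0 + s1))) * r ^ (1 / 2 - κ / 2)) *
          ((v0 + v1) * r ^ (1 / 2 + κ)) := by gcongr
      _ = (1 + Real.exp (2 * (s0 + s1))) * (v0 + v1) *
          (r ^ (1 / 2 - κ / 2) * r ^ (1 / 2 + κ)) := by ring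
      _ = (1 + Real.exp (2 * (s0 + s1))) * (v0 + v1) * r ^ (κ / 2 - 1) * r ^ 2 := by
        rw [e3]; ring
      _ ≤ _ := by gcongr
  · push Not at h1
    have hdom : 2 ≤ xiDom κ (y - x) * |y - x| ^ 2 := by
      unfold xiDom
      have : 0 ≤ (Set.Icc (-1 : ℝ) 1).indicator (fun z => |z| ^ (κ / 2 - 1)) (y - x) :=
        Set.indicator_nonneg (fun z _ => by positivity) _
      have h4 : 2 ≤ 4 * (1 + (y - x) ^ 2)⁻¹ * |y - x| ^ 2 := by
        rw [← sq_abs (y - x)]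
        have : 4 * (1 + |y - x| ^ 2)⁻¹ * |y - x| ^ 2 = (4 * |y - x| ^ 2) / (1 + |y - x| ^ 2) := by
          ring
        rw [this, le_div_iff₀ (by positivity)]
        nlinarith
      nlinarith [mul_nonneg this (sq_nonneg |y - x|)]
    have hsx' := abs_le.1 hsx
    have hsy' := abs_le.1 hsy
    have e1 : |Real.exp (S y - S x) - 1| ≤ 1 + Real.exp (2 * (s0 + s1)) := by
      have : Real.exp (S y - S x) ≤ Real.exp (2 * (s0 + s1)) :=
        Real.exp_le_exp.2 (by linarith)
      rw [abs_le]
      constructor <;> linarith [Real.exp_pos (S y - S x)]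
    have e2 : |v y - v x| ≤ (v0 + v1) * 2 := by
      have := abs_sub (v y) (v x)
      linarith
    calc _ ≤ (1 + Real.exp (2 * (s0 + s1))) * ((v0 + v1) * 2) := by gcongr
      _ = (1 + Real.exp (2 * (s0 + s1))) * (v0 + v1) * 2 := by ring
      _ ≤ (1 + Real.exp (2 * (s0 + s1))) * (v0 + v1) * (xiDom κ (y - x) * |y - x| ^ 2) := by
        gcongr
      _ = _ := by ring

/-- For `κ ∈ (0,1/2)` there is `C < ∞` such that for every bounded continuous `S`
with `‖S‖_{C^(1/2-κ/2)} < ∞`, every bounded continuous `v` with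
`‖v‖_{C^(1/2+κ)} < ∞`, and every `x`, the integral
`∫ |e^(S(y)-S(x)) - 1| |v(y)-v(x)| / (y-x)² dy` is finite and at most
`C (1 + exp(2‖S‖_{C^(1/2-κ/2)})) ‖v‖_{C^(1/2+κ)}`; in particular the nonlocal
operator `Ξ_S v(x)` is well-defined and bounded by the same quantity. -/
theorem Xi_operator_bounded (κ : ℝ) (hκ : κ ∈ Set.Ioo (0 : ℝ) (1 / 2)) :
    ∃ C : ℝ, ∀ S v : ℝ → ℝ, Continuous S → HolderFinite (1 / 2 - κ / 2) S →
      Continuous v → HolderFinite (1 / 2 + κ) v →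
      ∀ x : ℝ,
        (∫⁻ y : ℝ, ENNReal.ofReal
              (|Real.exp (S y - S x) - 1| * |v y - v x| / (y - x) ^ 2)
          ≤ ENNReal.ofReal
              (C * (1 + Real.exp (2 * holderNorm (1 / 2 - κ / 2) S)) *
                holderNorm (1 / 2 + κ) v)) ∧
        |(1 / Real.pi) * ∫ y : ℝ,
              (Real.exp (S y - S x) - 1) * (v y - v x) / (y - x) ^ 2|
          ≤ C * (1 + Real.exp (2 * holderNorm (1 / 2 - κ / 2) S)) *
              holderNorm (1 / 2 + κ) v := by
  refine ⟨∫ z, xiDom κ z, fun S v _ hS _ hv x => ?_⟩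
  have key := xi_key hκ hS hv x
  set K := (1 + Real.exp (2 * holderNorm (1 / 2 - κ / 2) S)) * holderNorm (1 / 2 + κ) v with hK
  have hint : Integrable (fun y => K * xiDom κ (y - x)) :=
    ((xiDom_int hκ.1).comp_sub_right x).const_mul K
  have hI : ∫ y, K * xiDom κ (y - x) = (∫ z, xiDom κ z) *
      (1 + Real.exp (2 * holderNorm (1 / 2 - κ / 2) S)) * holderNorm (1 / 2 + κ) v := by
    rw [integral_const_mul, integral_sub_right_eq_self (xiDom κ) x, hK]
    ring
  have hnn : ∀ y, 0 ≤ K * xiDom κ (y - x) := fun y => le_trans (by positivity) (key y)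
  rw [← hI]
  constructor
  · rw [ofReal_integral_eq_lintegral_ofReal hint (Filter.Eventually.of_forall hnn)]
    exact lintegral_mono fun y => ENNReal.ofReal_le_ofReal (key y)
  · rw [abs_mul]
    have h1 : |1 / Real.pi| ≤ 1 := by
      rw [abs_of_pos (by positivity), div_le_one Real.pi_pos]
      linarith [Real.pi_gt_three]
    have h2 : |∫ y, (Real.exp (S y - S x) - 1) * (v y - v x) / (y - x) ^ 2| ≤
        ∫ y, K * xiDom κ (y - x) := by
      rw [← Real.norm_eq_abs]
      refine norm_integral_le_of_norm_le hint (Filter.Eventually.of_forall fun y => ?_)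
      rw [Real.norm_eq_abs, abs_div, abs_mul, abs_of_nonneg (sq_nonneg (y - x))]
      exact key y
    exact (mul_le_of_le_one_left (abs_nonneg _) h1).trans h2
end

section
/- Let S: ℝ → ℝ be infinitely differentiable with S and its first derivative S′ bounded, and let v: ℝ → ℝ be infinitely differentiable with compact support. Then for every x ∈ ℝ: (i) the principal values Λv(x) := (1/π) pv∫_ℝ (v(y)−v(x))/(y−x)² dy, ΛS(x) := (1/π) pv∫_ℝ (S(y)−S(x))/(y−x)² dy, and Λ(e^S v)(x) := (1/π) pv∫_ℝ (e^{S(y)}v(y) − e^{S(x)}v(x))/(y−x)² dy all exist; (ii) the integrals Z̃(x) := (1/π) ∫_ℝ (e^{S(y)−S(x)} − 1 − (S(y)−S(x)))/(y−x)² dy and Ξv(x) := (1/π) ∫_ℝ (e^{S(y)−S(x)} − 1)(v(y) − v(x))/(y−x)² dy converge absolutely; and (iii) e^{−S(x)} Λ(e^S v)(x) = Λv(x) + v(x) ΛS(x) + Ξv(x) + Z̃(x) v(x). -/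
open MeasureTheory Filter

/-- `pvAt g x L`: the principal value integral `pv ∫ g(y) dy` around the singular
point `x` exists and equals `L`, i.e. the truncated integrals over `{|y-x| > ε}`
exist and converge to `L` as `ε → 0⁺`. -/
def pvAt (g : ℝ → ℝ) (x L : ℝ) : Prop :=
  (∀ ε : ℝ, 0 < ε → IntegrableOn g {y : ℝ | ε < |y - x|}) ∧
  Tendsto (fun ε : ℝ => ∫ y in {y : ℝ | ε < |y - x|}, g y)
    (nhdsWithin 0 (Set.Ioi 0)) (nhds L)

lemma aux_int_weight (x : ℝ) : Integrable (fun y : ℝ => (1 + (y - x) ^ 2)⁻¹) :=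
  integrable_inv_one_add_sq.comp_sub_right x

lemma pvAt_add {g h : ℝ → ℝ} {x L M : ℝ} (hg : pvAt g x L) (hh : pvAt h x M) :
    pvAt (fun y => g y + h y) x (L + M) := by
  refine ⟨fun ε hε => (hg.1 ε hε).add (hh.1 ε hε), ?_⟩
  refine (hg.2.add hh.2).congr' ?_
  filter_upwards [self_mem_nhdsWithin] with ε hε
  exact (integral_add (hg.1 ε hε) (hh.1 ε hε)).symm

lemma pvAt_const_mul {g : ℝ → ℝ} {x L : ℝ} (c : ℝ) (hg : pvAt g x L) :
    pvAt (fun y => c * g y) x (c * L) := by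
  refine ⟨fun ε hε => (hg.1 ε hε).const_mul c, ?_⟩
  refine (hg.2.const_mul c).congr fun ε => ?_
  exact (integral_const_mul c _).symm

lemma pvAt_congr {g h : ℝ → ℝ} {x L : ℝ} (hg : pvAt g x L) (e : ∀ y, h y = g y) :
    pvAt h x L := by
  rwa [show h = g from funext e]

lemma aux_meas (ε x : ℝ) : MeasurableSet {y : ℝ | ε < |y - x|} :=
  measurableSet_lt measurable_const (by fun_prop)

lemma pvAt_of_integrable {g : ℝ → ℝ} (x : ℝ) (hg : Integrable g) :
    pvAt g x (∫ y, g y) := by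
  refine ⟨fun ε _ => hg.integrableOn, ?_⟩
  have hc : AECover (volume : Measure ℝ) (nhdsWithin (0:ℝ) (Set.Ioi 0))
      (fun ε : ℝ => {y : ℝ | ε < |y - x|}) := by
    refine ⟨?_, fun ε => aux_meas ε x⟩
    have : ∀ᵐ y : ℝ, y ≠ x := by
      simp [ae_iff]
    filter_upwards [this] with y hy
    have hpos : 0 < |y - x| := abs_pos.mpr (sub_ne_zero.mpr hy)
    exact mem_nhdsWithin_of_mem_nhds (Iio_mem_nhds hpos)
  exact hc.integral_tendsto_of_countably_generated hg

lemma pvAt_sin (x : ℝ) : pvAt (fun y => Real.sin (y - x) / (y - x) ^ 2) x 0 := by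
  constructor
  · intro ε hε
    refine Integrable.mono' (((aux_int_weight x).const_mul (1 + 1 / ε ^ 2)).integrableOn)
      (by
        apply Measurable.aestronglyMeasurable
        fun_prop) ?_
    refine (ae_restrict_iff' (aux_meas ε x)).2 (Eventually.of_forall fun y hy => ?_)
    have hy' : ε < |y - x| := hy
    have h2 : ε ^ 2 ≤ (y - x) ^ 2 := by
      rw [← sq_abs (y - x)]; gcongr
    have hε2 : 0 < ε ^ 2 := by positivity
    have hp : 0 < (y - x) ^ 2 := by linarith
    rw [norm_div, Real.norm_eq_abs, Real.norm_eq_abs, abs_of_pos hp, ← div_eq_mul_inv,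
      div_le_div_iff₀ hp (by positivity)]
    have h3 := Real.abs_sin_le_one (y - x)
    have h4 : 1 ≤ 1 / ε ^ 2 * (y - x) ^ 2 := by
      rw [one_div, inv_mul_eq_div, one_le_div hε2]; exact h2
    calc |Real.sin (y - x)| * (1 + (y - x) ^ 2) ≤ 1 * (1 + (y - x) ^ 2) := by gcongr
      _ ≤ _ := by linarith
  · refine tendsto_const_nhds.congr fun ε => ?_
    rw [← integral_indicator (aux_meas ε x)]
    set F : ℝ → ℝ := {y : ℝ | ε < |y - x|}.indicator
      (fun y => Real.sin (y - x) / (y - x) ^ 2) with hF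
    have h1 : ∫ y, F (2 * x - y) = ∫ y, F y := integral_sub_left_eq_self F volume (2 * x)
    have h2 : ∀ y, F (2 * x - y) = - F y := by
      intro y
      have e1 : 2 * x - y - x = -(y - x) := by ring
      simp only [hF, Set.indicator_apply, Set.mem_ofPred_eq, e1, abs_neg, Real.sin_neg]
      split_ifs
      · rw [neg_sq, neg_div]
      · simp
    simp only [h2, integral_neg] at h1
    linarith

lemma aux_int {h : ℝ → ℝ} (hh : ContDiff ℝ 2 h) {M : ℝ} (hM : ∀ y, |h y| ≤ M) {x : ℝ}
    (h0 : h x = 0) (h1 : deriv h x = 0) :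
    Integrable (fun y => h y / (y - x) ^ 2) := by
  have hd : ContDiff ℝ 1 (deriv h) := by
    have : ContDiff ℝ (1 + 1) h := by simpa [one_add_one_eq_two] using hh
    exact (contDiff_succ_iff_deriv.1 this).2.2
  have hdd : Continuous (deriv (deriv h)) := hd.continuous_deriv le_rfl
  obtain ⟨K, hK⟩ := (isCompact_Icc (a := x - 1) (b := x + 1)).exists_bound_of_continuousOn
    hdd.continuousOn
  have hK0 : 0 ≤ K := (norm_nonneg _).trans (hK x ⟨by linarith, by linarith⟩)
  have hM0 : 0 ≤ M := (abs_nonneg _).trans (hM x)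
  have hx1 : x ∈ Set.Icc (x - 1) (x + 1) := ⟨by linarith, by linarith⟩
  have b1 : ∀ y ∈ Set.Icc (x - 1) (x + 1), ‖deriv h y‖ ≤ K * |y - x| := by
    intro y hy
    have := (convex_Icc (x - 1) (x + 1)).norm_image_sub_le_of_norm_deriv_le
      (f := deriv h) (fun z _ => (hd.differentiable (by norm_num)) z) hK hx1 hy
    simpa [h1] using this
  have b2 : ∀ y ∈ Set.Icc (x - 1) (x + 1), |h y| ≤ K * (y - x) ^ 2 := by
    intro y hy
    have hsub : Set.uIcc x y ⊆ Set.Icc (x - 1) (x + 1) := Set.uIcc_subset_Icc hx1 hy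
    have := (convex_uIcc x y).norm_image_sub_le_of_norm_deriv_le
      (f := h) (C := K * |y - x|) (fun z _ => (hh.differentiable (by norm_num)) z)
      (fun z hz => (b1 z (hsub hz)).trans (by
        have := Set.abs_sub_left_of_mem_uIcc hz
        gcongr)) Set.left_mem_uIcc Set.right_mem_uIcc
    rw [h0, sub_zero, Real.norm_eq_abs, Real.norm_eq_abs, mul_assoc, ← sq, sq_abs] at this
    exact this
  have b3 : ∀ y, |h y| ≤ (K + M) * (y - x) ^ 2 := by
    intro y
    by_cases hy : y ∈ Set.Icc (x - 1) (x + 1)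
    · refine (b2 y hy).trans ?_
      gcongr
      linarith
    · have h5 : 1 ≤ (y - x) ^ 2 := by
        by_contra hc
        push Not at hc
        have := abs_lt_of_sq_lt_sq (a := y - x) (b := 1) (by linarith) (by norm_num)
        rw [abs_lt] at this
        exact hy ⟨by linarith, by linarith⟩
      have := hM y
      nlinarith
  refine Integrable.mono' ((aux_int_weight x).const_mul (K + M + M))
    (by
      have := hh.continuous.measurable
      apply Measurable.aestronglyMeasurable
      fun_prop) (Eventually.of_forall fun y => ?_)
  rcases eq_or_ne y x with rfl | hy
  · simp; linarith
  have hp : 0 < (y - x) ^ 2 := by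
    have := sub_ne_zero.mpr hy
    positivity
  rw [norm_div, Real.norm_eq_abs, Real.norm_eq_abs, abs_of_pos hp, ← div_eq_mul_inv,
    div_le_div_iff₀ hp (by positivity)]
  have e1 := b3 y
  have e2 := mul_le_mul_of_nonneg_right (hM y) hp.le
  linarith

lemma pvAt_of_contDiff {f : ℝ → ℝ} (hf : ContDiff ℝ 2 f) {M : ℝ} (hM : ∀ y, |f y| ≤ M)
    (x : ℝ) : ∃ L, pvAt (fun y => (f y - f x) / (y - x) ^ 2) x L := by
  have hfd : HasDerivAt f (deriv f x) x :=
    ((hf.differentiable (by norm_num)) x).hasDerivAt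
  have hs : HasDerivAt (fun y => Real.sin (y - x)) 1 x := by
    simpa using ((hasDerivAt_id x).sub_const x).sin
  have hi : Integrable (fun y => (f y - f x - deriv f x * Real.sin (y - x)) / (y - x) ^ 2) := by
    refine aux_int (h := fun y => f y - f x - deriv f x * Real.sin (y - x))
      (M := M + M + |deriv f x|) ?_ ?_ ?_ ?_
    · exact (hf.sub contDiff_const).sub
        (contDiff_const.mul (Real.contDiff_sin.comp (contDiff_id.sub contDiff_const)))
    · intro y
      have a1 := abs_sub (f y - f x) (deriv f x * Real.sin (y - x))
      have a2 := abs_sub (f y) (f x)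
      have a3 : |deriv f x * Real.sin (y - x)| ≤ |deriv f x| := by
        rw [abs_mul]
        exact mul_le_of_le_one_right (abs_nonneg _) (Real.abs_sin_le_one _)
      linarith [hM x, hM y]
    · simp
    · have := ((hfd.sub_const (f x)).sub (hs.const_mul (deriv f x))).deriv
      exact this.trans (by simp)
  refine ⟨_, pvAt_congr (pvAt_add (pvAt_of_integrable x hi)
    (pvAt_const_mul (deriv f x) (pvAt_sin x))) fun y => ?_⟩
  ring

/-- The change of variables underlying `u = e^S v` for the fractional parabolic
Anderson model: for `S` smooth with `S, S'` bounded and `v` smooth with compact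
support, the principal values defining `Λv(x)`, `ΛS(x)`, `Λ(e^S v)(x)` exist, the
integrals defining `Z̃(x)` and `Ξv(x)` converge absolutely, and
`e^(-S(x)) Λ(e^S v)(x) = Λv(x) + v(x) ΛS(x) + Ξv(x) + Z̃(x) v(x)`. -/
theorem half_laplacian_change_of_variables
    (S : ℝ → ℝ) (hS : ContDiff ℝ (⊤ : ℕ∞) S)
    (hSbdd : ∃ M, ∀ x, |S x| ≤ M) (hS'bdd : ∃ M, ∀ x, |deriv S x| ≤ M)
    (v : ℝ → ℝ) (hv : ContDiff ℝ (⊤ : ℕ∞) v) (hvsupp : HasCompactSupport v) :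
    ∀ x : ℝ, ∃ Lv LS LE : ℝ,
      pvAt (fun y => (v y - v x) / (y - x) ^ 2) x Lv ∧
      pvAt (fun y => (S y - S x) / (y - x) ^ 2) x LS ∧
      pvAt (fun y =>
        (Real.exp (S y) * v y - Real.exp (S x) * v x) / (y - x) ^ 2) x LE ∧
      Integrable (fun y =>
        (Real.exp (S y - S x) - 1 - (S y - S x)) / (y - x) ^ 2) ∧
      Integrable (fun y =>
        (Real.exp (S y - S x) - 1) * (v y - v x) / (y - x) ^ 2) ∧
      Real.exp (-S x) * ((1 / Real.pi) * LE)
        = (1 / Real.pi) * Lv + v x * ((1 / Real.pi) * LS) +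
          (1 / Real.pi) *
            (∫ y : ℝ, (Real.exp (S y - S x) - 1) * (v y - v x) / (y - x) ^ 2) +
          ((1 / Real.pi) *
            (∫ y : ℝ, (Real.exp (S y - S x) - 1 - (S y - S x)) / (y - x) ^ 2)) *
            v x := by
  intro x
  obtain ⟨M, hM⟩ := hSbdd
  have hS2 : ContDiff ℝ 2 S := by exact_mod_cast contDiff_infty.1 hS 2
  have hv2 : ContDiff ℝ 2 v := by exact_mod_cast contDiff_infty.1 hv 2
  obtain ⟨N, hN⟩ := hv.continuous.bounded_above_of_compact_support hvsupp
  simp only [Real.norm_eq_abs] at hN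
  obtain ⟨Lv, hLv⟩ := pvAt_of_contDiff hv2 hN x
  obtain ⟨LS, hLS⟩ := pvAt_of_contDiff hS2 hM x
  have hSd : HasDerivAt S (deriv S x) x :=
    ((hS2.differentiable (by norm_num)) x).hasDerivAt
  have hvd : HasDerivAt v (deriv v x) x :=
    ((hv2.differentiable (by norm_num)) x).hasDerivAt
  have hEd : HasDerivAt (fun y => Real.exp (S y - S x)) (deriv S x) x := by
    simpa using (hSd.sub_const (S x)).exp
  have hEc : ContDiff ℝ 2 (fun y => Real.exp (S y - S x)) :=
    Real.contDiff_exp.comp (hS2.sub contDiff_const)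
  have hD : ∀ y, |S y - S x| ≤ M + M := fun y => by
    have := abs_sub (S y) (S x)
    linarith [hM x, hM y]
  have hV : ∀ y, |v y - v x| ≤ N + N := fun y => by
    have := abs_sub (v y) (v x)
    linarith [hN x, hN y]
  have hE : ∀ y, |Real.exp (S y - S x) - 1| ≤ Real.exp (M + M) + 1 := fun y => by
    have a := abs_sub (Real.exp (S y - S x)) 1
    rw [Real.abs_exp, abs_one] at a
    have := Real.exp_le_exp.2 ((le_abs_self _).trans (hD y))
    linarith
  have hZ : Integrable (fun y =>
        (Real.exp (S y - S x) - 1 - (S y - S x)) / (y - x) ^ 2) := by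
    refine aux_int (h := fun y => Real.exp (S y - S x) - 1 - (S y - S x))
      (M := Real.exp (M + M) + 1 + (M + M)) ?_ ?_ ?_ ?_
    · exact (hEc.sub contDiff_const).sub (hS2.sub contDiff_const)
    · intro y
      have := abs_sub (Real.exp (S y - S x) - 1) (S y - S x)
      linarith [hE y, hD y]
    · simp
    · have := ((hEd.sub_const 1).sub (hSd.sub_const (S x))).deriv
      exact this.trans (by simp)
  have hX : Integrable (fun y =>
        (Real.exp (S y - S x) - 1) * (v y - v x) / (y - x) ^ 2) := by
    refine aux_int (h := fun y => (Real.exp (S y - S x) - 1) * (v y - v x))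
      (M := (Real.exp (M + M) + 1) * (N + N)) ?_ ?_ ?_ ?_
    · exact (hEc.sub contDiff_const).mul (hv2.sub contDiff_const)
    · intro y
      rw [abs_mul]
      exact mul_le_mul (hE y) (hV y) (abs_nonneg _) (by positivity)
    · simp
    · have := ((hEd.sub_const 1).mul (hvd.sub_const (v x))).deriv
      exact this.trans (by simp)
  have hLE := pvAt_const_mul (Real.exp (S x)) (pvAt_add (pvAt_add (pvAt_add hLv
    (pvAt_const_mul (v x) hLS)) (pvAt_of_integrable x hX))
    (pvAt_const_mul (v x) (pvAt_of_integrable x hZ)))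
  refine ⟨Lv, LS, _, hLv, hLS, pvAt_congr hLE fun y => ?_, hZ, hX, ?_⟩
  rotate_left
  · have : Real.exp (-S x) * Real.exp (S x) = 1 := by
      rw [← Real.exp_add]; simp
    rw [mul_left_comm, ← mul_assoc (Real.exp (-S x)), this]
    ring
  · have : Real.exp (S y) = Real.exp (S x) * Real.exp (S y - S x) := by
      rw [← Real.exp_add]; simp
    rw [this]
    ring
end
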